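/- arXiv:2605.01281 — 4 statements merged into one kernel-verified Lean document; each statement's English description precedes it below -/
import Mathlib

section
/- For every set S of 10 distinct points in the Euclidean plane ℝ², there exists a subset T ⊆ S with |T| = 4 such that for all pairwise distinct points A, B, C ∈ T, the angle ∠ABC satisfies |∠ABC − 90°| ≥ 4°. -/
namespace DirectionSearch

/-! ### Bit matrices -/

/-- `repunit b k = ∑ z < k, 2 ^ (b * z)`. -/
def repunit (b : ℕ) : ℕ → ℕ
  | 0 => 0
  | k + 1 => Nat.add (repunit b k) (Nat.pow 2 (Nat.mul b k))

/-- The number with bits `0, …, m - 1`. -/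
def ones (m : ℕ) : ℕ := Nat.sub (Nat.pow 2 m) 1

def rowRep : ℕ := repunit 56 10

def colRep : ℕ := repunit 560 10

/-- The bits in positions `< m` of each of the hundred blocks. -/
def lowBits (m : ℕ) : ℕ := Nat.mul (ones m) (repunit 56 100)

/-- The blocks `(x, 0)`. -/
def colMask : ℕ := Nat.mul (ones 56) colRep

/-- The blocks `(0, y)`. -/
def rowMask : ℕ := ones 560

/-- The lowest bits of the blocks `(x, y)` with `x < y`, `x < k`. -/
def upperRep : ℕ → ℕ
  | 0 => 0
  | k + 1 => Nat.add (upperRep k) (Nat.mul (Nat.pow 2 (Nat.mul 560 k))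
      (Nat.sub rowRep (repunit 56 (Nat.succ k))))

/-- The lowest bits of the blocks `(x, y)` with `y < x < k`. -/
def lowerRep : ℕ → ℕ
  | 0 => 0
  | k + 1 => Nat.add (lowerRep k) (Nat.mul (Nat.pow 2 (Nat.mul 560 k)) (repunit 56 k))

/-- The bits that may be copied `k` places downwards. -/
def downMask (k : ℕ) : ℕ :=
  Nat.add (Nat.mul (upperRep 10) (Nat.sub (Nat.pow 2 28) (Nat.pow 2 k)))
    (Nat.mul (lowerRep 10) (Nat.sub (Nat.pow 2 56) (Nat.pow 2 (Nat.add 28 k))))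

/-- The bits that may be copied `k` places upwards. -/
def upMask (k : ℕ) : ℕ :=
  Nat.add (Nat.mul (lowerRep 10) (ones (Nat.sub 28 k)))
    (Nat.mul (upperRep 10) (Nat.sub (Nat.pow 2 (Nat.sub 56 k)) (Nat.pow 2 28)))

def tieMask : ℕ := Nat.mul (Nat.add (Nat.pow 2 14) (Nat.pow 2 42)) (repunit 56 100)

def diagMask : ℕ := Nat.mul (ones 56) (repunit 616 10)

/-- Rotation of every block by `k` places upwards. -/
def rotl (k H : ℕ) : ℕ :=
  Nat.lor (Nat.shiftLeft (Nat.land H (lowBits (Nat.sub 56 k))) k)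
    (Nat.land (Nat.shiftRight H (Nat.sub 56 k)) (lowBits k))

def fill (k H : ℕ) : ℕ :=
  Nat.lor H (Nat.lor (Nat.shiftRight (Nat.land H (downMask k)) k)
    (Nat.shiftLeft (Nat.land H (upMask k)) k))

def tie (H : ℕ) : ℕ :=
  Nat.lor H (Nat.lor (Nat.shiftLeft (Nat.land H tieMask) 1)
    (Nat.land (Nat.shiftRight H 1) tieMask))

def spreadCol (c : ℕ) : ℕ := Nat.mul c rowRep

def spreadRow (r : ℕ) : ℕ := Nat.mul r colRep

/-- One step of the transitive closure, through the intermediate index `y`. -/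
def transit (y H : ℕ) : ℕ :=
  Nat.lor H (Nat.land
    (spreadCol (Nat.land (Nat.shiftRight H (Nat.mul 56 y)) colMask))
    (spreadRow (Nat.land (Nat.shiftRight H (Nat.mul 560 y)) rowMask)))

def fold2 (b A : ℕ) : ℕ := Nat.lor A (Nat.shiftRight A b)

def fold10 (b A : ℕ) : ℕ :=
  Nat.lor (fold2 (Nat.mul 2 b) (fold2 b (fold2 (Nat.mul 5 b) A)))
    (Nat.shiftRight (fold2 (Nat.mul 5 b) A) (Nat.mul 4 b))

def joinCols (A : ℕ) : ℕ := Nat.land (fold10 56 A) colMask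

def joinRows (A : ℕ) : ℕ := Nat.land (fold10 560 A) rowMask

lemma testBit_lor (a b j : ℕ) : (Nat.lor a b).testBit j = (a.testBit j || b.testBit j) :=
  Nat.testBit_or a b j

lemma testBit_land (a b j : ℕ) : (Nat.land a b).testBit j = (a.testBit j && b.testBit j) :=
  Nat.testBit_and a b j

lemma testBit_shl (a k j : ℕ) :
    (Nat.shiftLeft a k).testBit j = (decide (k ≤ j) && a.testBit (j - k)) :=
  Nat.testBit_shiftLeft a

lemma testBit_shr (a k j : ℕ) : (Nat.shiftRight a k).testBit j = a.testBit (k + j) :=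
  Nat.testBit_shiftRight a

lemma testBit_ones (m j : ℕ) : (ones m).testBit j = decide (j < m) :=
  Nat.testBit_two_pow_sub_one m j

lemma add_eq_or_of_and_eq_zero (a b : ℕ) (h : a &&& b = 0) : a + b = a ||| b := by
  induction a using Nat.binaryRec generalizing b with
  | zero => simp
  | bit p a ih =>
    induction b using Nat.binaryRec with
    | zero => simp
    | bit q b _ =>
      have h1 : (a &&& b) = 0 ∧ (p && q) = false := by
        rw [Nat.land_bit] at h
        simpa [Nat.bit_eq_zero_iff] using h
      rw [Nat.lor_bit, ← ih b h1.1]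
      have h2 := h1.2
      clear * - h2
      cases p <;> cases q <;> simp [Nat.bit_val] at h2 ⊢ <;> omega

/-- The product with a repunit consists of disjoint shifted copies. -/
lemma testBit_mul_repunit {a b p : ℕ} (ha : ∀ j, a.testBit j → j % p < b) :
    ∀ {k j : ℕ}, k * b ≤ p → (Nat.mul a (repunit b k)).testBit j →
      ∃ z < k, b * z ≤ j ∧ a.testBit (j - b * z) := by
  intro k
  induction k with
  | zero => intro j _ h; simp [repunit] at h
  | succ k ih =>
    intro j hk h
    have hkp : k * b ≤ p := by nlinarith
    have hsum : Nat.mul a (repunit b (k + 1)) = Nat.mul a (repunit b k) + a <<< (b * k) := by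
      rw [Nat.shiftLeft_eq]; exact Nat.mul_add a _ _
    have hdisj : Nat.mul a (repunit b k) &&& (a <<< (b * k)) = 0 := by
      refine Nat.eq_of_testBit_eq fun i => ?_
      rw [Nat.testBit_and, Nat.testBit_shiftLeft, Nat.zero_testBit, Bool.eq_false_iff]
      intro hc
      simp only [Bool.and_eq_true, decide_eq_true_eq] at hc
      obtain ⟨hc1, hc2, hc3⟩ := hc
      obtain ⟨z, hz, hzi, hza⟩ := ih hkp hc1
      have e1 := ha _ hza
      have e2 := ha _ hc3
      have f1 : b * z + b ≤ b * k := by nlinarith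
      have f2 : b * k + b ≤ p := by nlinarith
      have g1 : i % p = (i - b * z) % p + b * z := by
        conv_lhs => rw [← Nat.sub_add_cancel hzi, Nat.add_mod]
        rw [Nat.mod_eq_of_lt (a := b * z) (by omega), Nat.mod_eq_of_lt (by omega)]
      have g2 : i % p = (i - b * k) % p + b * k := by
        conv_lhs => rw [← Nat.sub_add_cancel hc2, Nat.add_mod]
        rw [Nat.mod_eq_of_lt (a := b * k) (by omega), Nat.mod_eq_of_lt (by omega)]
      omega
    rw [hsum, add_eq_or_of_and_eq_zero _ _ hdisj, Nat.testBit_or, Nat.testBit_shiftLeft] at h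
    simp only [Bool.or_eq_true, Bool.and_eq_true, decide_eq_true_eq] at h
    rcases h with h | ⟨h1, h2⟩
    · obtain ⟨z, hz, h'⟩ := ih hkp h
      exact ⟨z, by omega, h'⟩
    · exact ⟨k, by omega, h1, h2⟩

/-- `Rep H p`: every bit of `H`, read as a bit matrix, satisfies `p`. -/
def Rep (H : ℕ) (p : ℕ → ℕ → ℕ → Prop) : Prop :=
  ∀ j, H.testBit j → p (j / 560) (j / 56 % 10) (j % 56)

variable {H K : ℕ} {p q : ℕ → ℕ → ℕ → Prop}

lemma Rep.mono (h : Rep H p) (hpq : ∀ x y s, y < 10 → s < 56 → p x y s → q x y s) : Rep H q :=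
  fun j hj => hpq _ _ _ (Nat.mod_lt _ (by norm_num)) (Nat.mod_lt _ (by norm_num)) (h j hj)

lemma Rep.lor (h : Rep H p) (h' : Rep K p) : Rep (Nat.lor H K) p := by
  intro j hj
  rw [testBit_lor, Bool.or_eq_true] at hj
  exact hj.elim (h j) (h' j)

lemma Rep.land (h : Rep H p) (h' : Rep K q) :
    Rep (Nat.land H K) fun x y s => p x y s ∧ q x y s := by
  intro j hj
  rw [testBit_land, Bool.and_eq_true] at hj
  exact ⟨h j hj.1, h' j hj.2⟩

lemma testBit_ones_mul_repunit {m b k j : ℕ} (hm : m ≤ b)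
    (h : (Nat.mul (ones m) (repunit b k)).testBit j) : ∃ z < k, b * z ≤ j ∧ j - b * z < m := by
  obtain ⟨z, hk, hz, h⟩ := testBit_mul_repunit (p := k * b) (fun i hi => by
    rw [testBit_ones, decide_eq_true_eq] at hi
    exact (Nat.mod_le _ _).trans_lt (by omega)) le_rfl h
  rw [testBit_ones, decide_eq_true_eq] at h
  exact ⟨z, hk, hz, h⟩

lemma testBit_lowBits {m j : ℕ} (hm : m ≤ 56) (h : (lowBits m).testBit j) : j % 56 < m := by
  obtain ⟨z, -, hz, h⟩ := testBit_ones_mul_repunit hm h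
  omega

lemma testBit_colMask {j : ℕ} (h : colMask.testBit j) : j % 560 < 56 := by
  unfold colMask colRep at h
  obtain ⟨z, -, hz, h⟩ := testBit_ones_mul_repunit (by norm_num) h
  omega

lemma testBit_rowMask {j : ℕ} (h : rowMask.testBit j) : j < 560 := by
  rw [rowMask, testBit_ones, decide_eq_true_eq] at h
  exact h

lemma Rep.rotl {k : ℕ} (h : Rep H p) (hk : k ≤ 56) :
    Rep (rotl k H) fun x y s => p x y ((s + (56 - k)) % 56) := by
  intro j hj
  simp only [DirectionSearch.rotl, testBit_lor, testBit_land, testBit_shl, testBit_shr,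
    Bool.or_eq_true, Bool.and_eq_true, decide_eq_true_eq] at hj
  rcases hj with ⟨h1, h2, h3⟩ | ⟨h1, h2⟩
  · have := testBit_lowBits (Nat.sub_le _ _) h3
    change (j - k) % 56 < 56 - k at this
    convert h _ h2 using 1 <;> omega
  · have := testBit_lowBits hk h2
    have h1 := h _ h1
    change p ((56 - k + j) / 560) ((56 - k + j) / 56 % 10) ((56 - k + j) % 56) at h1
    convert h1 using 1 <;> omega

lemma Rep.spreadCol {q : ℕ → ℕ → Prop} (h : Rep H fun x y s => y = 0 ∧ q x s) :
    Rep (spreadCol H) fun x _ s => q x s := by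
  intro j hj
  obtain ⟨z, hz, hzj, hb⟩ := testBit_mul_repunit (b := 56) (p := 560) (fun i hi => by
    have := (h i hi).1; omega) (by norm_num) hj
  have := h _ hb
  convert this.2 using 1 <;> omega

lemma Rep.spreadRow {q : ℕ → ℕ → Prop} (h : Rep H fun x y s => x = 0 ∧ q y s) :
    Rep (spreadRow H) fun x y s => x < 10 ∧ q y s := by
  intro j hj
  obtain ⟨z, hz, hzj, hb⟩ := testBit_mul_repunit (b := 560) (p := 5600) (fun i hi => by
    have := (h i hi).1; omega) (by norm_num) hj
  have := h _ hb
  refine ⟨by omega, ?_⟩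
  convert this.2 using 1 <;> omega

lemma Rep.column {y : ℕ} (h : Rep H p) (hy : y < 10) :
    Rep (Nat.land (Nat.shiftRight H (Nat.mul 56 y)) colMask)
      fun x y' s => y' = 0 ∧ p x y s := by
  intro j hj
  rw [testBit_land, Bool.and_eq_true, testBit_shr] at hj
  have h1 := testBit_colMask hj.2
  have h2 := h _ hj.1
  change p ((56 * y + j) / 560) ((56 * y + j) / 56 % 10) ((56 * y + j) % 56) at h2
  refine ⟨by omega, ?_⟩
  convert h2 using 1 <;> omega

lemma Rep.row {y : ℕ} (h : Rep H p) :
    Rep (Nat.land (Nat.shiftRight H (Nat.mul 560 y)) rowMask)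
      fun x z s => x = 0 ∧ p y z s := by
  intro j hj
  rw [testBit_land, Bool.and_eq_true, testBit_shr] at hj
  have h1 := testBit_rowMask hj.2
  have h2 := h _ hj.1
  change p ((560 * y + j) / 560) ((560 * y + j) / 56 % 10) ((560 * y + j) % 56) at h2
  refine ⟨by omega, ?_⟩
  convert h2 using 1 <;> omega

lemma testBit_fold10 {b A j : ℕ} (h : (fold10 b A).testBit j) :
    ∃ z < 10, A.testBit (b * z + j) := by
  simp only [fold10, fold2, testBit_lor, testBit_shr, Bool.or_eq_true, ← Nat.add_assoc] at h
  have key : ∀ z < 10, ∀ c, A.testBit (c + j) → c = b * z → ∃ z < 10, A.testBit (b * z + j) :=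
    fun z hz c hc e => ⟨z, hz, e ▸ hc⟩
  have e2 : Nat.mul 2 b = 2 * b := rfl
  have e4 : Nat.mul 4 b = 4 * b := rfl
  have e5 : Nat.mul 5 b = 5 * b := rfl
  rw [e2, e4, e5] at h
  rcases h with (((h | h) | h | h) | (h | h) | h | h) | h | h
  · exact ⟨0, by norm_num, by simpa using h⟩
  · exact key 5 (by norm_num) _ h (by ring)
  · exact key 1 (by norm_num) _ h (by ring)
  · exact key 6 (by norm_num) _ h (by ring)
  · exact key 2 (by norm_num) _ h (by ring)
  · exact key 7 (by norm_num) _ h (by ring)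
  · exact key 3 (by norm_num) _ h (by ring)
  · exact key 8 (by norm_num) _ h (by ring)
  · exact key 4 (by norm_num) _ h (by ring)
  · exact key 9 (by norm_num) _ h (by ring)

lemma Rep.joinCols (h : Rep H p) :
    Rep (joinCols H) fun x y s => y = 0 ∧ ∃ z < 10, p x z s := by
  intro j hj
  rw [DirectionSearch.joinCols, testBit_land, Bool.and_eq_true] at hj
  have h1 := testBit_colMask hj.2
  obtain ⟨z, hz, h2⟩ := testBit_fold10 hj.1
  refine ⟨by omega, z, hz, ?_⟩
  convert h _ h2 using 1 <;> omega

lemma Rep.joinRows (h : Rep H p) :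
    Rep (joinRows H) fun x y s => x = 0 ∧ ∃ z < 10, p z y s := by
  intro j hj
  rw [DirectionSearch.joinRows, testBit_land, Bool.and_eq_true] at hj
  have h1 := testBit_rowMask hj.2
  obtain ⟨z, hz, h2⟩ := testBit_fold10 hj.1
  refine ⟨by omega, z, hz, ?_⟩
  convert h _ h2 using 1 <;> omega

/-! ### Models and sound rules -/

/-- `D x y s` abstracts: the vector from point `x` to point `y` lies to the left of the direction
`s`, where the directions `s = 0, 1, …` go round in counterclockwise order, `56` to the full turn.
The points are ordered along the normal of direction `0`, and only the pair `(i, i + 1)` has its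
direction between the directions `0` and `1`. -/
structure Model (i : ℕ) (D : ℕ → ℕ → ℕ → Prop) : Prop where
  irrefl : ∀ x s, ¬ D x x s
  trans : ∀ x y z s, D x y s → D y z s → D x z s
  opp : ∀ x y s, D x y (s + 28) ↔ D y x s
  total : ∀ x y s, x < 10 → y < 10 → x ≠ y → D x y s ∨ D y x s
  anti : ∀ x y s, x < y → y < 10 → s < 27 → D x y (s + 1) → D x y s
  tie : ∀ x y, x < 10 → y < 10 → (D x y 14 ↔ D x y 15)
  noChain : ∀ a b c d s, a < 10 → b < 10 → c < 10 → d < 10 →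
    D a b s → D a b (s + 15) → D b c s → D b c (s + 15) → D c d s → D c d (s + 15) → False
  zero : ∀ x y, x < y → y < 10 → D x y 0
  one : ∀ x y, x < y → y < 10 → ¬ (x = i ∧ y = i + 1) → D x y 1
  edge : D (i + 1) i 1

/-- The bits of `H` hold in the model `D`. -/
def Sat (D : ℕ → ℕ → ℕ → Prop) (H : ℕ) : Prop := Rep H fun x y s => x < 10 ∧ D x y s

namespace Model

variable {i : ℕ} {D : ℕ → ℕ → ℕ → Prop} {H : ℕ}

lemma period (hD : Model i D) (x y s : ℕ) : D x y (s + 56) ↔ D x y s := by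
  rw [show s + 56 = s + 28 + 28 by ring, hD.opp, hD.opp]

lemma mod_iff (hD : Model i D) (x y s : ℕ) : D x y (s % 56) ↔ D x y s := by
  have : ∀ k r, D x y (r + 56 * k) ↔ D x y r := by
    intro k r
    induction k with
    | zero => simp
    | succ k ih => rw [show r + 56 * (k + 1) = r + 56 * k + 56 by ring, hD.period, ih]
  conv_rhs => rw [← Nat.mod_add_div s 56, this]

lemma anti_le (hD : Model i D) {x y s k : ℕ} (hxy : x < y) (hy : y < 10) (hs : s + k < 28)
    (h : D x y (s + k)) : D x y s := by
  induction k with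
  | zero => exact h
  | succ k ih => exact ih (by omega) (hD.anti x y (s + k) hxy hy (by omega) h)

lemma mono_le (hD : Model i D) {x y s k : ℕ} (hxy : y < x) (hx : x < 10) (hs : s + k < 28)
    (h : D x y s) : D x y (s + k) := by
  rcases hD.total x y (s + k) hx (by omega) (by omega) with h' | h'
  · exact h'
  · exact (hD.irrefl x s (hD.trans _ _ _ _ h (hD.anti_le hxy hx hs h'))).elim

end Model

def downOK (k x y s : ℕ) : Bool :=
  (decide (x < y) && decide (k ≤ s) && decide (s < 28)) ||
    (decide (y < x) && decide (28 + k ≤ s))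

def upOK (k x y s : ℕ) : Bool :=
  (decide (y < x) && decide (s + k < 28)) ||
    (decide (x < y) && decide (28 ≤ s) && decide (s + k < 56))

/-- `M` lies in the ten by ten matrix, and its bits satisfy the test `f`. -/
def checkMask (M : ℕ) (f : ℕ → ℕ → ℕ → Bool) : Bool :=
  Nat.ble M (ones 5600) && (List.range 10).all fun x => (List.range 10).all fun y =>
    (List.range 56).all fun s => !M.testBit (560 * x + 56 * y + s) || f x y s

lemma lt_of_testBit_of_ble_ones {M m j : ℕ} (h : Nat.ble M (ones m) = true) (hj : M.testBit j) :
    j < m := by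
  have h1 : M ≤ 2 ^ m - 1 := Nat.le_of_ble_eq_true h
  have h2 := Nat.ge_two_pow_of_testBit hj
  have h3 : 0 < 2 ^ m := Nat.two_pow_pos _
  exact (Nat.pow_lt_pow_iff_right (by norm_num)).1 (show 2 ^ j < 2 ^ m by omega)

lemma rep_of_checkMask {M : ℕ} {f : ℕ → ℕ → ℕ → Bool} (h : checkMask M f = true) :
    Rep M fun x y s => x < 10 ∧ f x y s := by
  intro j hj
  simp only [checkMask, Bool.and_eq_true, List.all_eq_true, List.mem_range] at h
  obtain ⟨h1, h2⟩ := h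
  have hj' := lt_of_testBit_of_ble_ones h1 hj
  have h3 := h2 (j / 560) (by omega) (j / 56 % 10) (by omega) (j % 56) (by omega)
  rw [show 560 * (j / 560) + 56 * (j / 56 % 10) + j % 56 = j by omega, hj] at h3
  exact ⟨by omega, h3⟩

lemma checkMask_fill : ∀ k ∈ [1, 2, 4, 8, 16],
    checkMask (downMask k) (downOK k) = true ∧ checkMask (upMask k) (upOK k) = true := by
  decide +kernel

lemma checkMask_tie : checkMask tieMask (fun _ _ s => decide (s = 14) || decide (s = 42)) = true := by
  decide +kernel

lemma checkMask_diag : checkMask diagMask (fun x y _ => decide (x = y)) = true := by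
  decide +kernel

def fills (H : ℕ) : ℕ := fill 16 (fill 8 (fill 4 (fill 2 (fill 1 (tie H)))))

def transitAll (H : ℕ) : ℕ :=
  transit 9 (transit 8 (transit 7 (transit 6 (transit 5
    (transit 4 (transit 3 (transit 2 (transit 1 (transit 0 H)))))))))

/-! A pair `(x, y)` is linked at `s` if both bits `s` and `s - 15` are set. The state is extended
by the pairs that cannot be linked because they would complete a chain of three links. -/

def forbiddenFrom (E₁ B₁ b₂ e₂ : ℕ) : ℕ :=
  Nat.lor (Nat.lor (spreadCol (rotl 28 b₂)) (spreadRow (rotl 28 e₂))) (Nat.land E₁ B₁)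

def forbiddenOf (W E₁ B₁ : ℕ) : ℕ :=
  forbiddenFrom E₁ B₁ (joinCols (Nat.land B₁ W)) (joinRows (Nat.land E₁ W))

def forbidden (W : ℕ) : ℕ :=
  forbiddenOf W (spreadCol (rotl 28 (joinCols W))) (spreadRow (rotl 28 (joinRows W)))

def unlink (H G F : ℕ) : ℕ :=
  Nat.lor H (Nat.lor (rotl 13 (Nat.land F H)) (rotl 28 (Nat.land F G)))

def breakChainsOf (H G : ℕ) : ℕ := unlink H G (forbidden (Nat.land H G))

def breakChains (H : ℕ) : ℕ := breakChainsOf H (rotl 15 H)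

namespace Model

variable {i : ℕ} {D : ℕ → ℕ → ℕ → Prop} {H : ℕ}

lemma sat_fill (hD : Model i D) {k : ℕ} (hk : k ∈ [1, 2, 4, 8, 16]) (h : Sat D H) :
    Sat D (fill k H) := by
  obtain ⟨hd, hu⟩ := checkMask_fill k hk
  refine Rep.lor h (Rep.lor ?_ ?_)
  · intro j hj
    rw [testBit_shr] at hj
    obtain ⟨⟨h1, h2⟩, -, h3⟩ := (h.land (rep_of_checkMask hd)) _ hj
    simp only [downOK, Bool.or_eq_true, Bool.and_eq_true, decide_eq_true_eq] at h3
    have e1 : (k + j) / 560 = j / 560 := by omega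
    have e2 : (k + j) / 56 % 10 = j / 56 % 10 := by omega
    have e3 : (k + j) % 56 = j % 56 + k := by omega
    rw [e1, e2, e3] at h2 h3
    refine ⟨by omega, ?_⟩
    rcases h3 with ⟨⟨h3, h4⟩, h5⟩ | ⟨h3, h4⟩
    · exact hD.anti_le h3 (by omega) h5 h2
    · obtain ⟨r, hr⟩ : ∃ r, j % 56 = r + 28 := ⟨j % 56 - 28, by omega⟩
      rw [hr, show r + 28 + k = r + k + 28 by ring, hD.opp] at h2
      rw [hr, hD.opp]
      exact hD.anti_le h3 (by omega) (by omega) h2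
  · intro j hj
    rw [testBit_shl, Bool.and_eq_true, decide_eq_true_eq] at hj
    obtain ⟨hkj, hj⟩ := hj
    obtain ⟨⟨h1, h2⟩, -, h3⟩ := (h.land (rep_of_checkMask hu)) _ hj
    simp only [upOK, Bool.or_eq_true, Bool.and_eq_true, decide_eq_true_eq] at h3
    have e1 : j / 560 = (j - k) / 560 := by omega
    have e2 : j / 56 % 10 = (j - k) / 56 % 10 := by omega
    have e3 : j % 56 = (j - k) % 56 + k := by omega
    rw [e1, e2, e3]
    refine ⟨by omega, ?_⟩
    rcases h3 with ⟨h3, h4⟩ | ⟨⟨h3, h4⟩, h5⟩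
    · exact hD.mono_le h3 (by omega) h4 h2
    · obtain ⟨r, hr⟩ : ∃ r, (j - k) % 56 = r + 28 := ⟨(j - k) % 56 - 28, by omega⟩
      rw [hr, hD.opp] at h2
      rw [hr, show r + 28 + k = r + k + 28 by ring, hD.opp]
      exact hD.mono_le h3 (by omega) (by omega) h2

lemma tie_opp (hD : Model i D) {x y : ℕ} (hx : x < 10) (hy : y < 10) :
    D x y 42 ↔ D x y 43 := by
  rw [hD.opp x y 14, hD.opp x y 15, hD.tie y x hy hx]

lemma sat_tie (hD : Model i D) (h : Sat D H) : Sat D (DirectionSearch.tie H) := by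
  have ht := rep_of_checkMask checkMask_tie
  refine Rep.lor h (Rep.lor ?_ ?_)
  · intro j hj
    rw [testBit_shl, Bool.and_eq_true, decide_eq_true_eq] at hj
    obtain ⟨hkj, hj⟩ := hj
    obtain ⟨⟨h1, h2⟩, -, h3⟩ := (h.land ht) _ hj
    simp only [Bool.or_eq_true, decide_eq_true_eq] at h3
    have e1 : j / 560 = (j - 1) / 560 := by omega
    have e2 : j / 56 % 10 = (j - 1) / 56 % 10 := by omega
    rw [e1, e2]
    refine ⟨by omega, ?_⟩
    rcases h3 with h3 | h3
    · rw [h3] at h2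
      rw [show j % 56 = 15 by omega]
      exact (hD.tie _ _ h1 (by omega)).1 h2
    · rw [h3] at h2
      rw [show j % 56 = 43 by omega]
      exact (hD.tie_opp h1 (by omega)).1 h2
  · intro j hj
    rw [testBit_land, Bool.and_eq_true, testBit_shr] at hj
    obtain ⟨h1, h2⟩ := h _ hj.1
    obtain ⟨-, h3⟩ := ht _ hj.2
    simp only [Bool.or_eq_true, decide_eq_true_eq] at h3
    have e1 : (1 + j) / 560 = j / 560 := by omega
    have e2 : (1 + j) / 56 % 10 = j / 56 % 10 := by omega
    rw [e1, e2] at h2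
    refine ⟨by omega, ?_⟩
    rcases h3 with h3 | h3
    · rw [show (1 + j) % 56 = 15 by omega] at h2
      rw [h3]
      exact (hD.tie _ _ (by omega) (by omega)).2 h2
    · rw [show (1 + j) % 56 = 43 by omega] at h2
      rw [h3]
      exact (hD.tie_opp (by omega) (by omega)).2 h2

lemma sat_fills (hD : Model i D) (h : Sat D H) : Sat D (fills H) :=
  hD.sat_fill (by simp) <| hD.sat_fill (by simp) <| hD.sat_fill (by simp) <|
    hD.sat_fill (by simp) <| hD.sat_fill (by simp) <| hD.sat_tie h

lemma sat_transit (hD : Model i D) {y : ℕ} (hy : y < 10) (h : Sat D H) : Sat D (transit y H) :=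
  Rep.lor h <| ((h.column hy).spreadCol.land h.row.spreadRow).mono
    fun _ _ _ _ _ ⟨h1, _, h2⟩ => ⟨h1.1, hD.trans _ _ _ _ h1.2 h2.2⟩

lemma sat_transitAll (hD : Model i D) (h : Sat D H) : Sat D (transitAll H) := by
  unfold transitAll
  iterate 10 refine hD.sat_transit (by norm_num) ?_
  exact h

/-- `x` and `y` are linked at `s`. -/
def Link (D : ℕ → ℕ → ℕ → Prop) (x y s : ℕ) : Prop :=
  x < 10 ∧ y < 10 ∧ D x y s ∧ D x y (s + 41)

lemma link_opp (hD : Model i D) {x y s : ℕ} (h : Link D x y ((s + 28) % 56)) : Link D y x s := by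
  obtain ⟨h1, h2, h3, h4⟩ := h
  rw [hD.mod_iff, hD.opp] at h3
  rw [← hD.mod_iff, Nat.mod_add_mod, hD.mod_iff, show s + 28 + 41 = s + 41 + 28 by ring,
    hD.opp] at h4
  exact ⟨h2, h1, h3, h4⟩

lemma not_chain (hD : Model i D) {a b c d s : ℕ} (h₁ : Link D a b s) (h₂ : Link D b c s)
    (h₃ : Link D c d s) : False := by
  obtain ⟨ha, hb, h11, h12⟩ := h₁
  obtain ⟨_, hc, h21, h22⟩ := h₂
  obtain ⟨_, hd, h31, h32⟩ := h₃
  refine hD.noChain a b c d (s + 41) ha hb hc hd h12 ?_ h22 ?_ h32 ?_ <;>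
    rwa [show s + 41 + 15 = s + 56 by ring, hD.period]

lemma rep_forbidden (hD : Model i D) {W : ℕ} (hW : Rep W (Link D)) :
    Rep (forbidden W) fun x y s => ¬ Link D x y s := by
  have hB : Rep (spreadRow (DirectionSearch.rotl 28 (joinRows W)))
      fun _ y s => ∃ z, Link D y z s :=
    ((hW.joinRows.rotl (k := 28) (by norm_num)).spreadRow).mono
      fun _ _ _ _ _ ⟨_, z, _, h⟩ => ⟨z, hD.link_opp h⟩
  have hE : Rep (spreadCol (DirectionSearch.rotl 28 (joinCols W)))
      fun x _ s => ∃ z, Link D z x s :=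
    ((hW.joinCols.rotl (k := 28) (by norm_num)).spreadCol).mono
      fun _ _ _ _ _ ⟨z, _, h⟩ => ⟨z, hD.link_opp h⟩
  refine Rep.lor (Rep.lor ?_ ?_) ?_
  · exact (((hB.land hW).joinCols.rotl (k := 28) (by norm_num)).spreadCol).mono
      fun x y s _ _ ⟨z, _, ⟨w, h1⟩, h2⟩ h => hD.not_chain (hD.link_opp h1) (hD.link_opp h2) h
  · exact (((hE.land hW).joinRows.rotl (k := 28) (by norm_num)).spreadRow).mono
      fun x y s _ _ ⟨_, z, _, ⟨w, h1⟩, h2⟩ h => hD.not_chain h (hD.link_opp h2) (hD.link_opp h1)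
  · exact (hE.land hB).mono fun x y s _ _ ⟨⟨z, h1⟩, ⟨w, h2⟩⟩ h => hD.not_chain h1 h h2

end Model
/-! ### The search -/

/-- The bit index of `(y, x, s)`, where `l` is that of `(x, y, s)`. -/
def mirror (l : ℕ) : ℕ :=
  Nat.add (Nat.mul 56 (Nat.add (Nat.mul 10 (Nat.mod (Nat.div l 56) 10)) (Nat.div l 560)))
    (Nat.mod l 56)

/-- `l` is the index of a bit `(x, y, s)` with `x < y` and `s < 28`. -/
def branchable (l : ℕ) : Bool :=
  and (Nat.ble (Nat.succ (Nat.div l 560)) (Nat.mod (Nat.div l 56) 10))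
    (Nat.ble (Nat.succ (Nat.mod l 56)) 28)

/-- Set the bit `(x, y, s)` with index `l`, and `(y, x, s + 28)`. -/
def assume (l H : ℕ) : ℕ :=
  Nat.lor H (Nat.lor (Nat.shiftLeft 1 l) (Nat.shiftLeft 1 (Nat.add (mirror l) 28)))

/-- Set the bit `(x, y, s + 28)`, where `l` is the index of `(x, y, s)`, and `(y, x, s)`. -/
def refuse (l H : ℕ) : ℕ :=
  Nat.lor H (Nat.lor (Nat.shiftLeft 1 (Nat.add l 28)) (Nat.shiftLeft 1 (mirror l)))

/-! The search keeps a certificate `c`, which lists the bits to branch on with thirteen binary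
digits each, a current state `H` and a list of postponed states. Its continuation is `k`. -/

def nextState (k : ℕ → ℕ → List ℕ → Bool) (c : ℕ) (st : List ℕ) : Bool :=
  List.rec true (fun H st' _ => k c H st') st

def branchOn (k : ℕ → ℕ → List ℕ → Bool) (c H l : ℕ) (st : List ℕ) : Bool :=
  and (branchable l) (k (Nat.shiftRight c 13) (assume l H) (refuse l H :: st))

def continueOrBranch (k : ℕ → ℕ → List ℕ → Bool) (c H H' : ℕ) (st : List ℕ) : Bool :=
  Bool.rec (k c H' st) (branchOn k c H' (Nat.land c 8191) st) (Nat.beq H' H)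

def checkDiag (k : ℕ → ℕ → List ℕ → Bool) (c H H' : ℕ) (st : List ℕ) : Bool :=
  Bool.rec (nextState k c st) (continueOrBranch k c H (breakChains H') st)
    (Nat.beq (Nat.land H' diagMask) 0)

def search (n : ℕ) : ℕ → ℕ → List ℕ → Bool :=
  Nat.rec (fun _ _ _ => false) (fun _ k c H st => checkDiag k c H (transitAll (fills H)) st) n

/-- The initial state for the exceptional pair `(i, i + 1)`. -/
def root (i : ℕ) : ℕ :=
  Nat.sub
    (Nat.add (Nat.add (Nat.mul 3 (upperRep 10)) (Nat.mul (Nat.mul 3 (Nat.pow 2 28)) (lowerRep 10)))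
      (Nat.add (Nat.pow 2 (616 * i + 85)) (Nat.pow 2 (616 * i + 561))))
    (Nat.add (Nat.pow 2 (616 * i + 57)) (Nat.pow 2 (616 * i + 589)))

def rootOK (i x y s : ℕ) : Bool :=
  (decide (x < y) && decide (s = 0)) ||
  (decide (y < x) && decide (s = 28)) ||
  (decide (x < y) && decide (s = 1) && !(decide (x = i) && decide (y = i + 1))) ||
  (decide (y < x) && decide (s = 29) && !(decide (y = i) && decide (x = i + 1))) ||
  (decide (x = i) && decide (y = i + 1) && decide (s = 29)) ||
  (decide (x = i + 1) && decide (y = i) && decide (s = 1))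

lemma checkMask_root : ∀ i ∈ [0, 1, 2, 3, 4], checkMask (root i) (rootOK i) = true := by
  decide +kernel

namespace Model

variable {i : ℕ} {D : ℕ → ℕ → ℕ → Prop} {H : ℕ}

lemma sat_breakChains (hD : Model i D) (h : Sat D H) : Sat D (breakChains H) := by
  have hG : Rep (DirectionSearch.rotl 15 H) fun x y s => x < 10 ∧ D x y (s + 41) :=
    (Rep.rotl (k := 15) h (by norm_num)).mono fun x y s _ _ ⟨h1, h2⟩ =>
      ⟨h1, (hD.mod_iff _ _ _).1 h2⟩
  have hF := hD.rep_forbidden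
    ((h.land hG).mono fun x y s hy _ ⟨h1, h2⟩ => ⟨h1.1, hy, h1.2, h2.2⟩)
  refine Rep.lor h (Rep.lor ?_ ?_)
  · refine ((hF.land h).rotl (k := 13) (by norm_num)).mono
      fun x y s hy _ ⟨h1, hx, h2⟩ => ⟨hx, ?_⟩
    have hne : x ≠ y := by rintro rfl; exact hD.irrefl _ _ h2
    rcases hD.total x y s hx hy hne with h3 | h3
    · exact h3
    · refine (h1 ⟨hx, hy, h2, ?_⟩).elim
      rw [← hD.mod_iff, Nat.mod_add_mod, hD.mod_iff, show s + (56 - 13) + 41 = s + 28 + 56 by omega,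
        hD.period, hD.opp]
      exact h3
  · refine ((hF.land hG).rotl (k := 28) (by norm_num)).mono
      fun x y s hy _ ⟨h1, hx, h2⟩ => ⟨hx, ?_⟩
    have hne : x ≠ y := by rintro rfl; exact hD.irrefl _ _ h2
    rcases hD.total x y s hx hy hne with h3 | h3
    · exact h3
    · refine (h1 ⟨hx, hy, ?_, h2⟩).elim
      rw [hD.mod_iff, hD.opp]
      exact h3

lemma not_sat_of_diag (hD : Model i D) (h : Nat.beq (Nat.land H diagMask) 0 = false) :
    ¬ Sat D H := by
  intro hs
  obtain ⟨j, hj⟩ := Nat.exists_testBit_of_ne_zero (Nat.ne_of_beq_eq_false h)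
  obtain ⟨⟨_, h1⟩, _, h2⟩ := (hs.land (rep_of_checkMask checkMask_diag)) j hj
  rw [of_decide_eq_true h2] at h1
  exact hD.irrefl _ _ h1

lemma rep_bit {l : ℕ} {p : ℕ → ℕ → ℕ → Prop} (h : p (l / 560) (l / 56 % 10) (l % 56)) :
    Rep (Nat.shiftLeft 1 l) p := by
  intro j hj
  have : j = l := by
    rw [testBit_shl, Bool.and_eq_true, decide_eq_true_eq,
      Nat.testBit_one_eq_true_iff_self_eq_zero] at hj
    omega
  rwa [this]

lemma sat_branch (hD : Model i D) {l : ℕ} (hl : branchable l = true) (h : Sat D H) :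
    Sat D (assume l H) ∨ Sat D (refuse l H) := by
  rw [branchable, Bool.and_eq_true] at hl
  have h1 : l / 560 + 1 ≤ l / 56 % 10 := Nat.le_of_ble_eq_true hl.1
  have h2 : l % 56 + 1 ≤ 28 := Nat.le_of_ble_eq_true hl.2
  have hm : mirror l = 56 * (10 * (l / 56 % 10) + l / 560) + l % 56 := rfl
  have bit : ∀ j x y s, x < 10 → y < 10 → s < 56 → j = 560 * x + 56 * y + s → D x y s →
      Sat D (Nat.shiftLeft 1 j) := by
    intro j x y s hx hy hs hj hd
    refine rep_bit ?_
    rw [show j / 560 = x by omega, show j / 56 % 10 = y by omega, show j % 56 = s by omega]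
    exact ⟨hx, hd⟩
  rcases hD.total (l / 560) (l / 56 % 10) (l % 56) (by omega) (by omega) (by omega) with hd | hd
  · refine Or.inl (Rep.lor h (Rep.lor ?_ ?_))
    · exact bit _ _ _ _ (by omega) (by omega) (by omega) (by omega) hd
    · refine bit _ _ _ (l % 56 + 28) ?_ ?_ ?_ ?_ ((hD.opp _ _ _).2 hd)
      · omega
      · omega
      · omega
      · change mirror l + 28 = _
        omega
  · refine Or.inr (Rep.lor h (Rep.lor ?_ ?_))
    · refine bit _ _ _ (l % 56 + 28) ?_ ?_ ?_ ?_ ((hD.opp _ _ _).2 hd)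
      · omega
      · omega
      · omega
      · change l + 28 = _
        omega
    · refine bit _ _ _ _ ?_ ?_ ?_ ?_ hd
      all_goals omega

lemma not_sat_of_search (hD : Model i D) (n : ℕ) : ∀ (c H : ℕ) (st : List ℕ),
    search n c H st = true → ∀ K ∈ H :: st, ¬ Sat D K := by
  induction n with
  | zero => intro c H st h; exact absurd h (by decide : ¬ (false = true))
  | succ n ih =>
    intro c H st h
    change checkDiag (search n) c H (transitAll (fills H)) st = true at h
    set H₁ := transitAll (fills H) with hH₁
    have hsat : Sat D H → Sat D H₁ := fun hs => hD.sat_transitAll (hD.sat_fills hs)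
    unfold checkDiag at h
    cases hdiag : Nat.beq (Nat.land H₁ diagMask) 0 with
    | false =>
      rw [hdiag] at h
      have hH : ¬ Sat D H := fun hs => hD.not_sat_of_diag hdiag (hsat hs)
      cases st with
      | nil => simpa using hH
      | cons K st => exact List.forall_mem_cons.2 ⟨hH, ih _ _ _ h⟩
    | true =>
      rw [hdiag] at h
      change continueOrBranch (search n) c H (breakChains H₁) st = true at h
      have hsat' : Sat D H → Sat D (breakChains H₁) := fun hs => hD.sat_breakChains (hsat hs)
      generalize breakChains H₁ = H₂ at h hsat'
      unfold continueOrBranch at h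
      cases hfix : Nat.beq H₂ H with
      | false =>
        rw [hfix] at h
        obtain ⟨h1, h2⟩ := List.forall_mem_cons.1 (ih _ _ _ h)
        exact List.forall_mem_cons.2 ⟨fun hs => h1 (hsat' hs), h2⟩
      | true =>
        rw [hfix] at h
        obtain ⟨hb, h⟩ := (Bool.and_eq_true _ _).mp h
        obtain ⟨h1, h2⟩ := List.forall_mem_cons.1 (ih _ _ _ h)
        obtain ⟨h3, h4⟩ := List.forall_mem_cons.1 h2
        exact List.forall_mem_cons.2
          ⟨fun hs => (hD.sat_branch hb (hsat' hs)).elim h1 h3, h4⟩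

lemma sat_root (hD : Model i D) (hi : i ∈ [0, 1, 2, 3, 4]) : Sat D (root i) := by
  have hi' : i < 5 := by revert hi; simp; omega
  refine (rep_of_checkMask (checkMask_root i hi)).mono fun x y s hy _ ⟨hx, h⟩ => ⟨hx, ?_⟩
  simp only [rootOK, Bool.or_eq_true, Bool.and_eq_true, decide_eq_true_eq, Bool.not_eq_true',
    Bool.and_eq_false_iff, decide_eq_false_iff_not, ← not_and_or] at h
  rcases h with ((((⟨h, rfl⟩ | ⟨h, rfl⟩) | ⟨⟨h, rfl⟩, h'⟩) | ⟨⟨h, rfl⟩, h'⟩) | ⟨⟨rfl, rfl⟩, rfl⟩) |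
    ⟨⟨rfl, rfl⟩, rfl⟩
  · exact hD.zero _ _ h hy
  · exact (hD.opp _ _ 0).2 (hD.zero _ _ h hx)
  · exact hD.one _ _ h hy h'
  · exact (hD.opp _ _ 1).2 (hD.one _ _ h hx h')
  · exact (hD.opp _ _ 1).2 hD.edge
  · exact hD.edge

end Model

/-- No model satisfies the state `H`. -/
def Refuted (i H : ℕ) : Prop := ∀ D, Model i D → ¬ Sat D H

lemma Refuted.of_search {i H : ℕ} (n c : ℕ) (h : search n c H [] = true) : Refuted i H :=
  fun _ hD => hD.not_sat_of_search n c H [] h H (by simp)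

lemma Refuted.split {i H : ℕ} (l : ℕ) (hl : branchable l = true) (h₁ : Refuted i (assume l H))
    (h₂ : Refuted i (refuse l H)) : Refuted i H :=
  fun D hD hs => (hD.sat_branch hl hs).elim (h₁ D hD) (h₂ D hD)

lemma Refuted.not_model {i : ℕ} (hi : i ∈ [0, 1, 2, 3, 4]) (h : Refuted i (root i))
    (D : ℕ → ℕ → ℕ → Prop) : ¬ Model i D :=
  fun hD => h D hD (hD.sat_root hi)

/-! ### The certificates -/

set_option maxRecDepth 100000

theorem refuted_root_zero : Refuted 0 (root 0) :=
  .split 128 rfl (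
  .split 740 rfl (
  .split 796 rfl (
  .split 852 rfl (
  .split 907 rfl (
  .split 963 rfl (
  .split 1019 rfl (
  .split 1075 rfl (
  .split 184 rfl (
  .split 242 rfl (
  .of_search 85 30854222
    (by decide +kernel)) (
  .split 298 rfl (
  .of_search 79 16631062
    (by decide +kernel)) (
  .split 354 rfl (
  .of_search 95 222233380118
    (by decide +kernel)) (
  .split 410 rfl (
  .of_search 142 67164531680868883869288476031075606
    (by decide +kernel)) (
  .split 466 rfl (
  .of_search 156 4507326117599150835002708613925016912970526
    (by decide +kernel)) (
  .of_search 1001 2666474226122453541810824307139824499865719648794607751122002811401331199009950857025828325266695164534975407493416448619749210689353235326141457996924052048821430802557541994163745254850859875255402770719770489865577216304506751571131198225046936590737694764172523188055140817251544834562442573347343332340062298258920126526167055222758039167317936087105524144489594305745125268534426324723938070877250628230103562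
    (by decide +kernel))))))) (
  .split 240 rfl (
  .of_search 983 1599545619470972953642783600124524384296427991316100599788564107217722579871042318343664176556266980653240846279637967703600124241565084358510886171433490410201590754135308334653975182250981688349618517309079298434208266907148050877879352351741948730583766527455536927982349233021780923652419735850636713146801349318289302048221267458371238934501860818855942229292367474679346967092948821626085453571718316384500433194
    (by decide +kernel)) (
  .split 296 rfl (
  .of_search 534 766604615369460827091415944475013339085702807824258114136223249229188592108609766186495858578976503023249705325321164467949510136609879023398916533636640880235318348103725656741252886802357757460358048374638462
    (by decide +kernel)) (
  .split 352 rfl (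
  .of_search 403 37606226814285715055850389921640491440526410327101704401548340907345826137230792670327875060757924771572443127161935272087113201578132198
    (by decide +kernel)) (
  .split 408 rfl (
  .of_search 250 748875650646466840281195548628594386057490142539641755008218526197604755261310
    (by decide +kernel)) (
  .split 464 rfl (
  .of_search 72 1918
    (by decide +kernel)) (
  .split 520 rfl (
  .of_search 72 1918
    (by decide +kernel)) (
  .split 694 rfl (
  .split 1302 rfl (
  .of_search 393 13287903746878580526559839985083432292509464588175552834957777651014392246652385261674897832966518652808489526347059771786324433480843406305325425557881331172686
    (by decide +kernel)) (
  .split 1918 rfl (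
  .of_search 827 80197483038110227741796177925873568719823178498331744420437913347421274226116801579048948245187871394745340375531391938707646199600735206650207851547594276630127069868508602136662765540788256888970055165354144893380195762221097955698504634618678452715084780185617827625242512091188043948617296452423348285458822407754973309440381494057961048550
    (by decide +kernel)) (
  .of_search 457 93106201438125050966960911774926294557863580145622794330114479627480424597497109535889444223155680750181327753493583967119697139951064217931956624328848075893687070
    (by decide +kernel)))) (
  .of_search 717 3680816176843576289077633187594153637735233734569117854282862381008225495240114157670694291969994254292691329849477920525341390985762894457404201031777370329176729420086309151924466816264544786591926320908966156582908543435455430841396083463516034962892381603094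
    (by decide +kernel)))))))))) (
  .of_search 79 11126038
    (by decide +kernel))) (
  .of_search 79 11126038
    (by decide +kernel))) (
  .of_search 213 1130969636900984932005074248676691062483032787581199258416155158507
    (by decide +kernel))) (
  .of_search 443 348144317403424635257022122500871491099416130974439824401999067426762326790737872461485674367571919024834029423117838490730415486316340878532968512569561597348509259212671265522966
    (by decide +kernel))) (
  .split 3150 rfl (
  .split 3206 rfl (
  .split 3262 rfl (
  .split 3318 rfl (
  .split 846 rfl (
  .split 1302 rfl (
  .of_search 203 194405202377559273069417128273916831207372170319940289760053790
    (by decide +kernel)) (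
  .split 905 rfl (
  .split 2030 rfl (
  .of_search 1058 148571605278032488671614268877400820479568257659050884327968810256989641022811112897281027738103431380239057337239980394015850746461137788641534164226864628977428879506605397191247185384715836262840740056489674487507233753515607416512218192392198520747902100464354404596138240560894253264693786586238431649317090619212473647592092332072454262640909730810326501800580725191057403069727278079078574641378847517428703620809446
    (by decide +kernel)) (
  .of_search 120 12391805566711400492
    (by decide +kernel))) (
  .of_search 71 0
    (by decide +kernel)))) (
  .of_search 199 8325532078312838924895786343712588896256057490415096874262
    (by decide +kernel))) (
  .of_search 63 0
    (by decide +kernel))) (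
  .of_search 63 0
    (by decide +kernel))) (
  .of_search 63 0
    (by decide +kernel))) (
  .of_search 63 0
    (by decide +kernel)))) (
  .split 790 rfl (
  .split 1302 rfl (
  .of_search 471 256071778489327049622779715419597665625328136975109479355382989015132552221999892635965381761803206204860711874310284932378904220200961669213099467227434
    (by decide +kernel)) (
  .split 1974 rfl (
  .split 905 rfl (
  .split 2030 rfl (
  .of_search 1003 592072962175311781332948936171773049548809820207997585631711460247829069730140082859546966492868968342519843349544814145308856125006288159685061820964769168043186995633934991405260297238774969120597214389816225234081627054812306751235048890790949719635836032177439501905540596721629400805194084973150694324021007356042490658943489468289399022796794926158888676381416874724576754705922001930461430502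
    (by decide +kernel)) (
  .of_search 128 14912508275869386796
    (by decide +kernel))) (
  .of_search 71 0
    (by decide +kernel))) (
  .of_search 64 0
    (by decide +kernel)))) (
  .of_search 522 3616786815552911379011530333004887717472252590129317887988472285157804240390541411560749582312361934207744113689410253789059053745320626235152017845122268686516844504787836847157140549801473483760348239149917462
    (by decide +kernel)))) (
  .split 734 rfl (
  .split 240 rfl (
  .split 298 rfl (
  .of_search 86 35901110
    (by decide +kernel)) (
  .split 354 rfl (
  .of_search 88 21677390
    (by decide +kernel)) (
  .split 410 rfl (
  .of_search 93 11126710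
    (by decide +kernel)) (
  .split 466 rfl (
  .of_search 87 1974
    (by decide +kernel)) (
  .split 522 rfl (
  .of_search 72 1974
    (by decide +kernel)) (
  .split 806 rfl (
  .split 853 rfl (
  .split 909 rfl (
  .of_search 921 501467568540683142024486885784906786412295988818618493058352992734401266678603640734296412665930272171249020401410097982900195187902217943720931767639206862672718060177812252529716932822431779576495309603764811371587406184606764786255638792419135115749303062875242885379041640118095184875230429816192750029813890865432325625899858262926190557313539106987287493
    (by decide +kernel)) (
  .of_search 240 816097258568812812241161849403242771547020282582877815523872098700482
    (by decide +kernel))) (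
  .of_search 774 562874748789887150937882853585796482566219595664035515474250747086735927691903612157544574328222757291075549429011047035103476786653057895034203987404318057381574909362376975177811212023612643590904832111148488120380476608580785653648566729087482626860766335740463187625936867424191875024177110680469939249440
    (by decide +kernel))) (
  .split 853 rfl (
  .of_search 917 44118021427894961871401204935659295202535916689801553919320426899009331872338684201124848500152363832168739702366200084120362936178572281267805307440650744038055309365532891886131847233325325521007022731709580014199698111734761739250265114593578443219883217092394027502762699660620419742973496592062289824496939485346511254241330073132474122906631127697795448126874509
    (by decide +kernel)) (
  .of_search 445 2443622603001829480699590261057173972019534405693177372377502613487075730339166954972395680744984654212951557734092091014251479422873917610549536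
    (by decide +kernel))))))))) (
  .split 296 rfl (
  .of_search 667 21118042383461593669870725455323071425094390977292642631350510272636226342322971771361960693022154088565953691832869628963983343468369519114784972318078964548603061363082509540090604061605933637092689957731187558279395414471403006061725435386230354264418
    (by decide +kernel)) (
  .split 352 rfl (
  .of_search 284 138211374364619352283210565405180370384970976836058390497635769771380623230
    (by decide +kernel)) (
  .split 408 rfl (
  .of_search 129 596609311906809726
    (by decide +kernel)) (
  .split 464 rfl (
  .of_search 72 1918
    (by decide +kernel)) (
  .split 520 rfl (
  .of_search 72 1918
    (by decide +kernel)) (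
  .split 797 rfl (
  .split 853 rfl (
  .split 909 rfl (
  .split 965 rfl (
  .split 1021 rfl (
  .split 1077 rfl (
  .split 175 rfl (
  .of_search 858 243725677439619443305626267957960792502007297312512532398667521422180868663114629152582363609327569650796979833268561199536319786737779372799289925100600554192913549396057395660617388635438929104682857194353561795991274907412908385492703289940429855579968051524702752567131904124733972823210960284839921554737437600629430
    (by decide +kernel)) (
  .split 694 rfl (
  .of_search 928 2092272154905605896081063785146131189546651990110785818540535072953419503844899925103950768864792596170505032078264837177581049982593770400816643267948451728794900220447767632562517760926333142329978443816094760293137873472347252219107417433252558937601229191004101732767755174327236768573927327506172238029277036792352066022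
    (by decide +kernel)) (
  .of_search 430 15790921066848028083386428543497153111486108222375137715556381648665930072525530655586280864804180572897453221610422453802898029160572027965145138510
    (by decide +kernel)))) (
  .of_search 72 1358
    (by decide +kernel))) (
  .of_search 72 1358
    (by decide +kernel))) (
  .of_search 152 4963499940096445146446
    (by decide +kernel))) (
  .of_search 317 2695328113455941109897787612476386397271490006855458484226451476554627024817967317515920952514
    (by decide +kernel))) (
  .of_search 408 41394852135264738973932952978003515219371220924737445818778372323307357072829955923177399172079078729401205370898974
    (by decide +kernel))) (
  .split 232 rfl (
  .of_search 844 255403690319160893329008898032928056777726084977955562033194072834124774464079698045274707128322173014043666503414435889624044511496052524571166751353798071293710528138148238511047463749864773524059121426802169251360208302478841347584205369148478956468329172138724344692975869602693075129908651210051196567034306258625363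
    (by decide +kernel)) (
  .of_search 917 9422733021597061577048572021262261530649513668830959517553067688975838176906989879549101986972641391891153035507103277095709148323056441915668536862956375812761338201865794934084340902399104088138164195277902276741839363576795212424556450536799502467036959776417612228813961681015279013635167944664029526896904819517849588076604490779812691
    (by decide +kernel)))))))))) (
  .split 797 rfl (
  .split 853 rfl (
  .split 909 rfl (
  .split 965 rfl (
  .split 1021 rfl (
  .split 1077 rfl (
  .split 240 rfl (
  .of_search 291 180879907182155931529752205434805941074930832911021745922575721650199210428599173175352127542090982239
    (by decide +kernel)) (
  .of_search 960 6184556522895052400129917842334060734703735606806051575567754345658232572468834577783874138864703759684210508221999700404667617240840195464270562332690974096780520529610496909133246919653237397758864548435023158310446372569389511233731967760028768333331856628576766982710145764624297356369627473705613828198706019795354453401451996404497026134267191592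
    (by decide +kernel))) (
  .of_search 72 1358
    (by decide +kernel))) (
  .of_search 72 1358
    (by decide +kernel))) (
  .of_search 112 181085603150
    (by decide +kernel))) (
  .of_search 229 135493290779205931505251244008044728277439346674129151601994391
    (by decide +kernel))) (
  .of_search 370 986971309374745322370279530839209447942172044311209290049027899397057179794093200374415568470294264021941078996837259
    (by decide +kernel))) (
  .split 851 rfl (
  .split 907 rfl (
  .split 963 rfl (
  .split 1019 rfl (
  .split 1075 rfl (
  .split 1352 rfl (
  .of_search 138 28682967150795693278766658545690494
    (by decide +kernel)) (
  .split 296 rfl (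
  .of_search 239 48663621265136119403734952207611322837704736725993808742598212743483370821486542185367
    (by decide +kernel)) (
  .split 352 rfl (
  .of_search 177 72282495459080821657888412856617769609352281812099
    (by decide +kernel)) (
  .of_search 1030 918868893148467373142202216108704751661525804417480020338666272814591792017480365227266138620119514277004701733844579282708326340817743897255009037575146786861347767059812853491774540724527412687442905448862550087952916463902775114286625775730191102363865986532729014448401189205068800704205416004364656290114653211359451758979000805175851417047439621765513999410628528486083488072666200363078068084523614314637990192544202095335430406552
    (by decide +kernel))))) (
  .of_search 72 1414
    (by decide +kernel))) (
  .of_search 79 1414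
    (by decide +kernel))) (
  .of_search 90 15713670
    (by decide +kernel))) (
  .of_search 86 21677950
    (by decide +kernel))) (
  .of_search 86 35901110
    (by decide +kernel)))))) (
  .split 184 rfl (
  .split 240 rfl (
  .split 686 rfl (
  .of_search 64 0
    (by decide +kernel)) (
  .split 806 rfl (
  .split 298 rfl (
  .of_search 113 833992222035638
    (by decide +kernel)) (
  .split 354 rfl (
  .of_search 165 8198964622685031349130935374110
    (by decide +kernel)) (
  .split 410 rfl (
  .of_search 213 1093384676881292781661422009383213288528103061904769490
    (by decide +kernel)) (
  .split 466 rfl (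
  .of_search 270 7172032720406748938369341352122548034313388860410311888894334199488709570444576638
    (by decide +kernel)) (
  .split 522 rfl (
  .of_search 72 1414
    (by decide +kernel)) (
  .split 1414 rfl (
  .of_search 843 44961348558476329394466312945107380527898374933839893075596782109899846389480164676437257049358634725100640420581676567615753619492800120531690463596316097677867794856022498352409078686938331806887580646125462869039104836984736148461937611811207866566053955221167354068621290870338547781463957297414771975350331585821675635160359765
    (by decide +kernel)) (
  .of_search 493 3606064493612992066785800518596181914704788750951186665311818818726427485733491107548431457950478230818380930497853517265110956279401393599423129830175579403672850170717627
    (by decide +kernel)))))))) (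
  .split 1413 rfl (
  .split 853 rfl (
  .split 1469 rfl (
  .split 1525 rfl (
  .split 1581 rfl (
  .split 1637 rfl (
  .split 907 rfl (
  .of_search 945 3024563910883772551299302081630706199024493204275085370607551279077352551152566761539131032222318687099048889445666279339708981812695077344016321845243219784268598145495363913980509988417666292965935875415374322080949265145926985669041967148435317388945604006061250656420955981822823725075406283987217667329582219705247886088843205014424877849832312497091
    (by decide +kernel)) (
  .of_search 181 35071590591211101666351777918278694240764537430
    (by decide +kernel))) (
  .of_search 72 1918
    (by decide +kernel))) (
  .of_search 72 1918
    (by decide +kernel))) (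
  .of_search 116 14903192032162359166
    (by decide +kernel))) (
  .of_search 242 748390820732046737428465202526732185216466331051266553726643219648237611435298
    (by decide +kernel))) (
  .split 907 rfl (
  .split 963 rfl (
  .split 1018 rfl (
  .split 1074 rfl (
  .split 287 rfl (
  .of_search 532 101281204566634595898893118937491955835105440044546560743524752323423198758032466750735092903486209980915663891730362506839160960124974567157576264764763892035573116948198456026750134487603797051514536290
    (by decide +kernel)) (
  .of_search 589 16828226569598721611936245863868562954202006663329258620951957986329846662428177776873502458267965353573359993642087848539300068041632132220387764704066571427926365903254319728269949056335787096431881148089293669698651838420095462330352980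
    (by decide +kernel))) (
  .of_search 72 1916
    (by decide +kernel))) (
  .of_search 88 1542012
    (by decide +kernel))) (
  .of_search 101 128271336838
    (by decide +kernel))) (
  .of_search 91 26264966
    (by decide +kernel)))) (
  .of_search 295 3942866941883653053165232691176761303308481839851798643928360043228012448965530304153305499070
    (by decide +kernel))))) (
  .split 296 rfl (
  .split 686 rfl (
  .of_search 64 0
    (by decide +kernel)) (
  .split 1358 rfl (
  .split 1974 rfl (
  .split 2590 rfl (
  .of_search 400 846226886380160543649785991067479244098449284493112216339208031085270807510067704740061152650753420242742514585936667
    (by decide +kernel)) (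
  .of_search 838 877977130724969635950375474155489251585330593109642614970716776061196076260635391618586407484286804738349920940806479717930958592163695617893975147696253422240123672052900688133734337764744038592646136404818579538269505175497499065532392078715456320789104459770516391187317231933240242130599462334
    (by decide +kernel))) (
  .of_search 63 0
    (by decide +kernel))) (
  .of_search 707 7440115826328243362644584298534588102241785062242847536239244265931818422026554568597003335127774569857847161071949765667996427046065678687956378444553748835743974254827904077285420956671991816487520558587906975708616990747613631363214214212544879681558090425787
    (by decide +kernel)))) (
  .split 352 rfl (
  .split 3766 rfl (
  .of_search 63 0
    (by decide +kernel)) (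
  .split 3822 rfl (
  .of_search 63 0
    (by decide +kernel)) (
  .split 2030 rfl (
  .split 1358 rfl (
  .of_search 746 44701617195536840619474230898554136939442686127564169185222105038935919536186483395202158549398357842929018853693191018352862665819630816111833989717391953550075510105332928084495178709348698671306184233268291165526061124537794211142319026783925359337981318
    (by decide +kernel)) (
  .of_search 701 1628200665388024384429118772724634805710830852564272643212893589946815683397475036263395003043882406294456064865694089901778294044350296096571669095222189441593049138516836757591475127074033673162976402292193296948247477525114231842018226768340358
    (by decide +kernel))) (
  .of_search 118 14894125462168257861
    (by decide +kernel))))) (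
  .split 408 rfl (
  .of_search 893 17808377297853624390405918275456648138830338339455981355665834362349910326544904272107680638312189760815293972731543360297865447154639085630417938817937677132862368257435924670433691027534555566974326081624167687500452177160084279543761440705806091345487287741285945409912296681588515279353242283952939633616900799025011529247206
    (by decide +kernel)) (
  .split 464 rfl (
  .of_search 302 3938772239286630494337777605800450058394593553164492826518195990188733439591116009567735556582
    (by decide +kernel)) (
  .split 521 rfl (
  .of_search 72 2534
    (by decide +kernel)) (
  .split 685 rfl (
  .split 797 rfl (
  .split 853 rfl (
  .split 909 rfl (
  .split 965 rfl (
  .split 1021 rfl (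
  .split 1077 rfl (
  .split 1918 rfl (
  .of_search 371 24169702502207605466076282643002460632571484879342440208596802668480973761656146501510658443709432393211563534892524909113997479645839690970996721590
    (by decide +kernel)) (
  .split 2534 rfl (
  .of_search 757 99175012002757966997010286357194607530950497894965821153531482100116060108140322080259779071569836999505735697297893931340219747761498065504918383257418590831552037775367799768106629330263005192135572017409098265636809137332331763124404299913902398235031237855655629617983334346939360743113224
    (by decide +kernel)) (
  .of_search 369 31221891335706913047683641830862321050860376495585997854360713911512621195813230937952299927270934457398292082053525533144872003228975958
    (by decide +kernel)))) (
  .of_search 78 15712942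
    (by decide +kernel))) (
  .of_search 78 15712942
    (by decide +kernel))) (
  .of_search 247 621707300722533756574456811148448335656980936884886800744934496918288573915822
    (by decide +kernel))) (
  .of_search 506 1568031266760131434336756874300218967049737244441628569084750406895266799671823169206149866139872128504057670535831843676586251576769230399501822680177486950537379175479267486963113420656786394806
    (by decide +kernel))) (
  .of_search 983 109144783559786470279991145115088184876885486219841988343162021345474728030119511840699478693604804800465575380115850892308459730908787076058417492695752665060634824771550217077453409241475129534179247874887676137255721580311574052038066265077693154720631701266384880570853846905174142145833149885825896730524170467934882286722417289114570362784713911795141198206946979812367632747598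
    (by decide +kernel))) (
  .split 791 rfl (
  .split 1912 rfl (
  .of_search 250 26194708495608900475915633028969717957819001526990574703313668571757467110041986659080883855976939
    (by decide +kernel)) (
  .split 853 rfl (
  .of_search 1054 8821968733312230195617789969617291551102172824853999518286225013027026283894338164939710339032983507591801689904246680968064204740185928717880344199736504061002345580924395811758585055391744346811720934023273628723701834000355881622994713258056450359735531657588746562677348023198665520097994076684491893184959358122362833449746599246110621309605933657288865582838556404315645615554239701901
    (by decide +kernel)) (
  .of_search 144 26495101217295960003322676731469950
    (by decide +kernel)))) (
  .split 853 rfl (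
  .split 909 rfl (
  .split 965 rfl (
  .split 1021 rfl (
  .split 1077 rfl (
  .split 696 rfl (
  .of_search 196 1896457713836000257908200763522492628786690020058056070
    (by decide +kernel)) (
  .of_search 929 774025201057794393291153804892038049007494477128730966359350887020323763931874280565491251108618812212774067398353488846739266635146266343175800680667094494999413741061651325673625659103746370712975018675113211746781933202460743930566151501773162427926137265486295809785059755721376202735255723466603109078581433223364114074612403482086602172479622889576232357438959486354720
    (by decide +kernel))) (
  .of_search 72 1974
    (by decide +kernel))) (
  .of_search 87 11650998
    (by decide +kernel))) (
  .of_search 154 236337353653599895485215409859678160822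
    (by decide +kernel))) (
  .of_search 216 1360486800363001593129284144773350471815971081139300430355886278582
    (by decide +kernel))) (
  .of_search 326 145326262174711973619424304224785205374928216540256756267640322901510569259906836041899839831308665570295830560894
    (by decide +kernel))))) (
  .split 797 rfl (
  .split 852 rfl (
  .split 908 rfl (
  .split 964 rfl (
  .split 1020 rfl (
  .split 1076 rfl (
  .split 750 rfl (
  .split 119 rfl (
  .of_search 624 54628048104654211869805869277192344558441982248683652588950224728260662440063305596349631045911562759356048900250789172661240736151700922004892843929931946865512139786012538574822881539151672357876101104160466586310
    (by decide +kernel)) (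
  .split 2758 rfl (
  .of_search 697 4010518151407844225844463734177734244527472300943631277934232344025420694777042231199729916554123615811199057229095170232702907907114482908941782614476128273508593688458050500137264057916692994104476425581761251814
    (by decide +kernel)) (
  .of_search 671 489371329726651421811944874562381921391304398981623873366520636249959958586309662794740965891323813324220861134724152730097873138769476880852406966421298255438099970702665205166630399309923060620852559948990950
    (by decide +kernel)))) (
  .split 1308 rfl (
  .split 119 rfl (
  .of_search 556 96650249000329538640004975645557094031078215089618374919115308810011341119478995322100927681814101668904532218324545426265134335322425253157351308912773853909088092478743996918281623843792939677850061510
    (by decide +kernel)) (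
  .of_search 624 53218030965308898046572954372199128270361553089680239746676608613915630071392050728158395083408813241795033723305622513917099731922481951766001627737544634012678189918975192924835741476693802793865845212294688852678
    (by decide +kernel))) (
  .of_search 615 16071053633546538286556906267737126317171970608228128644749039951310361556465169576054570931740300552151065075148794117484628795081157889441564210755632804838203715980347602083812935657544304378466675225072077096316190903091576156947473063
    (by decide +kernel)))) (
  .of_search 72 1918
    (by decide +kernel))) (
  .of_search 72 1918
    (by decide +kernel))) (
  .of_search 174 1682636264436517440847742166910
    (by decide +kernel))) (
  .of_search 348 1590384733988085074302991672467517743079457130728985508074016206572811804472308971107239167772542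
    (by decide +kernel))) (
  .of_search 680 265701127203093811605735393742070492599784013428882440266874536116973473821552120328320370145990530552094701516518203020090900161019048672351340673174522422894555473246167579507277747749539124429541205362400321729889133064
    (by decide +kernel))) (
  .split 791 rfl (
  .split 233 rfl (
  .of_search 853 324575938798567480549935997169366862834082526873663821621416490887742189396772605682084562303800152760058824702387598010553477732212396909229161085941064891853661629794142939338107978745067062984638957292382255656694130740890852951812683713484580665226734863556827630626914288271322705022145432322007165926135349012535128269432994934549833460925726
    (by decide +kernel)) (
  .split 851 rfl (
  .split 907 rfl (
  .of_search 1040 61224991379527024017759443727138679619707575854546358407257923068518438144000706448846832037079674646133840085553770995759056988328770292118765861735426566470767986231941795817394962145497011322134278248723842790633814843006767140366810815652423196438853658727979244692887621467494253081377924361595839581719427431187513109999884369342957778688017670547543466802788340788797857052189635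
    (by decide +kernel)) (
  .of_search 102 12627595606
    (by decide +kernel))) (
  .of_search 96 177581182758
    (by decide +kernel)))) (
  .of_search 745 103150867730120971605134540169015692011304377445691193827629477709693400358851831025596740000008334397885563182848396568488108342760058402993992881086048542420901565033641666255895915767026647971472123209686715208244264434444082808637191298249482687500685016358643637129453618564107274686653267
    (by decide +kernel))))))))))) (
  .split 240 rfl (
  .split 296 rfl (
  .of_search 873 13784104861457553096181774965707742375675080389792797216234918036716779293507259861055387578657098312130726509966705238370163904155852971765033514776400454688528049714913766819114904437383673868336378028350619171757904318227380557356534822626151401572423948406291398505492963334569873916488434357612195779910063959317885585288262500711842478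
    (by decide +kernel)) (
  .split 352 rfl (
  .of_search 939 1437508153335617756225012014011163117496906496117040539924881066518320329900312025640359412297909081888971887430380406251403241280820739741024470438104848917461121971664314876155923872385385683299213787869531419794868414476820797630862973771642513964098488768977986588988108760263969106356953469563177640061044487169887723194054191468214
    (by decide +kernel)) (
  .split 409 rfl (
  .of_search 751 1921060531352619966181107476037962055398648321049956508401251989550807960589901597253866337136372989660117943205911561610628214682194940197438293316900546072819052249095568092298291477416225599030415129661967494168845625083916612787275712868901105958025458127367825291626664961021497630
    (by decide +kernel)) (
  .split 465 rfl (
  .of_search 772 9360999274783555038960645322635106586483892022926094302305267633250354661192698955962715709078874331555805930625546799840482062868304012444044167269749189977388869210002186345444828825581252590366076764965738998691615186880139274252819019486828067152373595510700848734536569893704918749526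
    (by decide +kernel)) (
  .split 521 rfl (
  .of_search 77 3150
    (by decide +kernel)) (
  .split 685 rfl (
  .split 741 rfl (
  .split 853 rfl (
  .split 909 rfl (
  .of_search 993 189365130693619761267838054843893150661916652950508608525352704856193762982829947226392579633246819182143553650316731321644447855010182321838987496540446220913725417318284834940550743266687019965071913173815038462220519165914878886046288918242612273624259090903429686724010911264125287749986024963740078606018114207879237507559897552490404747482283969399879730017322875096053299950694054329720864793359575655365
    (by decide +kernel)) (
  .of_search 226 6484452249958640283016607544663745083172336558057208113462509942000102
    (by decide +kernel))) (
  .of_search 223 53120821545120021301932708722054534479854981322645930734389798827153082910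
    (by decide +kernel))) (
  .split 852 rfl (
  .split 907 rfl (
  .split 963 rfl (
  .split 1019 rfl (
  .split 1075 rfl (
  .split 1926 rfl (
  .of_search 980 29189582674690779813464470566091209644347355656194384202876816736723496100085766420407179811301539990121484626553308967596882323322822780181148017625042477934682750326839013626714598194599428042247731424920890596940653542521095470947103611600332284408909929676365273676939679895958798466465965777063382324298654892244381342112096600999519689574113258356957583212855422
    (by decide +kernel)) (
  .of_search 198 163676251564772217411878308188517280162985239128098540173355491
    (by decide +kernel))) (
  .of_search 72 2534
    (by decide +kernel))) (
  .of_search 208 9049749218827603043713311398154629163112298947632608002734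
    (by decide +kernel))) (
  .of_search 304 1503647502062290356511898554429781178984938379897035764607037904533677659882474869372374901422
    (by decide +kernel))) (
  .of_search 293 50192034407755683068404987790976592646057637270798736308822442256277428468073050835430
    (by decide +kernel))) (
  .of_search 342 2100631419170454236737855570177838075470337599180963427786794254982282539194822133577097475291306204498842052232211505131924831617150
    (by decide +kernel)))) (
  .of_search 936 3917735023379583502765292490641123911137720506725836653504129591390474832081119797894289581615685627717293758034090487144196969217749531250570523502533113522410980230800994899456264462497129380800039214055462748990280902978736871571568111636688007424268903657638949952346407699609504214358936951135106285963065734330315081922000849482389558839419600291094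
    (by decide +kernel)))))))) (
  .split 296 rfl (
  .split 3150 rfl (
  .of_search 63 0
    (by decide +kernel)) (
  .split 3206 rfl (
  .of_search 63 0
    (by decide +kernel)) (
  .split 3262 rfl (
  .of_search 63 0
    (by decide +kernel)) (
  .split 3318 rfl (
  .of_search 63 0
    (by decide +kernel)) (
  .split 353 rfl (
  .of_search 223 16840545854479018802112957683985126161045527906852011888310
    (by decide +kernel)) (
  .split 409 rfl (
  .of_search 552 12619484244336499455191941574834679718970778683127152427131752790890017254250623007884423608838350074470438500889876830438935655379472751178344491321404735724747892859434914231749584117953613167139074248091295095659182755277644551123767582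
    (by decide +kernel)) (
  .split 465 rfl (
  .split 4998 rfl (
  .of_search 63 0
    (by decide +kernel)) (
  .split 674 rfl (
  .split 730 rfl (
  .split 786 rfl (
  .split 898 rfl (
  .split 954 rfl (
  .split 1066 rfl (
  .split 3766 rfl (
  .of_search 583 329416564855032579119345281986049720280581429299333067878032496070775763721664526796909290286924068554946710222388702941145042144755380114436718826014585070491329181208544744677491801057088698813971889590598364786510422
    (by decide +kernel)) (
  .of_search 607 191711413116464109818475905447728747184613902234122063292379703883869576030467929683237503459436406156082495726148672961526732695586950337474323723766461779681982652360236126800163126710175575518500467223687114216310362333531709678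
    (by decide +kernel))) (
  .of_search 62 0
    (by decide +kernel))) (
  .of_search 62 0
    (by decide +kernel))) (
  .of_search 62 0
    (by decide +kernel))) (
  .of_search 62 0
    (by decide +kernel))) (
  .of_search 62 0
    (by decide +kernel))) (
  .of_search 62 0
    (by decide +kernel)))) (
  .split 522 rfl (
  .of_search 89 128715834814
    (by decide +kernel)) (
  .split 685 rfl (
  .split 741 rfl (
  .of_search 1036 876634746311091593113108128882185281260409019624884856164231495210018197977996795327048102132081790590910999803526066122891645627361865184331583169921767633843226756528192830366933048947861616178924445269030754959489651204513810227569560732451360520781827941089941343379030306070482269636147864439277622886390825209203733492795531457896788636105206001112630980805740347168911586680479807039402108742819978115864101467567792925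
    (by decide +kernel)) (
  .split 796 rfl (
  .of_search 872 1194070218050007843540631785079683184360939400854612011848410800681686646673950126328679900296810087038950020857809084496608043218505669174480075575201906089697824747710504529203309493931020518693000251049680732856628599310458372147145262191532781109761705936625617242118370754466102620924525524289145054072892358726797378385956453245835
    (by decide +kernel)) (
  .of_search 344 654443826650507126443346984163328796083813484249987852703029415077728005706366637533197551060010956234590000357498888882507759742
    (by decide +kernel)))) (
  .of_search 724 10116848553772351144681657162957252514466329795717480549708902272142461982507744819436174090863046432669646374375034491571456512739227124192576968372562976566354965545383467059932611327947013321524251690230489007419938843802203169853812181833608635329156405342206607315437814185030845300566824073413910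
    (by decide +kernel))))))))))) (
  .split 352 rfl (
  .split 3766 rfl (
  .of_search 63 0
    (by decide +kernel)) (
  .split 3822 rfl (
  .of_search 63 0
    (by decide +kernel)) (
  .split 3878 rfl (
  .of_search 63 0
    (by decide +kernel)) (
  .split 410 rfl (
  .of_search 541 570051119630028440172049459860396135906416362133289919857157645346281681097347102215008405561338287572792169188585744986114322164780933998478165307233763402186221079752003037504690798360967714993557496387590569533772062
    (by decide +kernel)) (
  .split 466 rfl (
  .of_search 531 4669955294745527000294168100639453315174096185566809560712616040739509832223686259410562332139428422473407723970186069691488307200231887006267524315531234739683597931721056687203336875372862180070243848566654639939610436259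
    (by decide +kernel)) (
  .split 522 rfl (
  .of_search 116 225662864730738782680713789402089480867
    (by decide +kernel)) (
  .split 685 rfl (
  .split 741 rfl (
  .split 797 rfl (
  .of_search 848 12044658014950761094475059128708252826870055835296164556227031281966769555746370039266161008219295521081721929198408368283695188990650871275142887210414385791471599848081737472488462713351193648462258050973553578646036364698320596672648990948625562573077373067807255417645134494930384090773366356161314783750408659819284621578913027193647762254948679865781296444253013
    (by decide +kernel)) (
  .of_search 285 16396817817475599576235466767489871544531788630902798849204014008533467399956026603159778505705958
    (by decide +kernel))) (
  .of_search 500 1440119337224065984015918969745341954259944655183029583935133471498432481295088422789970424022649073827425878535903956834323692844426756539982777813669287027242882314848884473458818188818369306750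
    (by decide +kernel))) (
  .of_search 561 313394503246569482648685718343880656835306063392539632886603862849664174953258252672572291980695860837034809853665639715311957962355871568250988306926700154366687748320861113445933100094242410465886119591687057945186966434735375638
    (by decide +kernel))))))))) (
  .split 408 rfl (
  .split 4382 rfl (
  .of_search 63 0
    (by decide +kernel)) (
  .split 4438 rfl (
  .of_search 63 0
    (by decide +kernel)) (
  .split 466 rfl (
  .of_search 538 38256352837293809357512363615557133821496419938927418053296199570970608405631649998498376291371482427686335565859034700646716220883653214047261413905641872906904569424516525015714367194109091018364724907405824339098318537450147
    (by decide +kernel)) (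
  .split 522 rfl (
  .of_search 116 225662864730738782680461587822956733091
    (by decide +kernel)) (
  .split 686 rfl (
  .of_search 322 413970582899666177736513738515437670312489457449606181579127736339338093771423992882651321025288514791294
    (by decide +kernel)) (
  .of_search 878 134087298390241702291114571617018973810456623275030851689904353866912616077426113324658973184884527218528416487015218200240901275549119792281885448588785394771793951760474452971228878084422099596891951612174203502096668072309909060364157838468418704153467016989190078488728406742227637177520419032646592662756426987654730565551572246
    (by decide +kernel))))))) (
  .split 464 rfl (
  .of_search 153 68202415925298398279309368215918684682230473802838797531050886
    (by decide +kernel)) (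
  .split 520 rfl (
  .of_search 91 746655786713774
    (by decide +kernel)) (
  .split 685 rfl (
  .split 741 rfl (
  .split 797 rfl (
  .split 853 rfl (
  .split 909 rfl (
  .split 965 rfl (
  .split 1021 rfl (
  .split 1077 rfl (
  .split 1302 rfl (
  .of_search 904 603880404897391510759227211149211500919650540452331040776391346972059667010283478285407050212731946906066272122334596332556234807282934538672094207061336800302656243830439758942421516200589586226868609115458500693374309029659514475842642218799774273790285450817058691345678071502313143446208291579908620230643754512682843564086691267872867082946430
    (by decide +kernel)) (
  .of_search 900 456259406297550160973484536379233186086668636729811820470765030180268385554444988702122837936861297152349053590002553618615414056828038553012399851420133263615737496861498665664419332217538151486464423129749057996214014963837033896826507955359049150802785697398226112822694286157429541105596948404219883020948213267152867394591871675233371996735358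
    (by decide +kernel))) (
  .of_search 91 746697115682070
    (by decide +kernel))) (
  .of_search 129 225675355644956562693115863768832037766
    (by decide +kernel))) (
  .of_search 523 6041591944469002125358272617450268129298030316203510033314857947972569055480439911652876693247448540717925437634540319865181160156837351611392129853318072561123664912022254240007039210997731786674462
    (by decide +kernel))) (
  .of_search 1024 328809264473589592873836358935569759927675851526333919212368014120945214654672350310611426086090672393019834394757113278132102328398334878990041827339286490123705659227450698160185651431745842519611625499767813220475020352580085409287042509288709284353741438257623684423422387926465150400177472968005852977482419598827102009089520802583760365422407972856287915576967203433010163650619798531571076334894704515340658316521866841306924175030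
    (by decide +kernel))) (
  .of_search 961 3599686854395421172996322358246005984010481107013848353695337831710559809497603712742324007624967728165472677515337155551136148560773495254828026998836636577805985946176025307224771966909139315631219926256334065116307444273432715566727253979168302670990613608231329762343663400956820533045861851265115013809473876731802196110150023899337758192349331036937870782591468930795116449645743623246
    (by decide +kernel))) (
  .split 852 rfl (
  .split 908 rfl (
  .split 964 rfl (
  .of_search 1038 8900288081253444688831052141950825825112388787660033754513159002511226258388874180601796328130929974800636554361804624761666539791121657636257570294952746836061397628773818805182027978854319118685538068543692528837134825298229125420851460394732199935108969229488410747678202614764004194245200080474821273188788408357104645021979568007612021130984311523877661822660984660481803141832118526802862809644822077872957457404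
    (by decide +kernel)) (
  .of_search 283 226050399789685091788269514307518169782844118718493104811817162523624817481502392767770955291199983902
    (by decide +kernel))) (
  .of_search 294 226056477041141231219528686079473814107986125754884686152272917874250130779062844041591514580409110198
    (by decide +kernel))) (
  .of_search 316 256436302259866212002882897646647062230264045323870924929857791691656560499759980641396779622580900049254314218262221867945476222
    (by decide +kernel)))) (
  .split 797 rfl (
  .split 853 rfl (
  .split 909 rfl (
  .split 964 rfl (
  .split 1020 rfl (
  .split 1076 rfl (
  .split 1918 rfl (
  .of_search 1060 11994473705407246007680635411663652380715893344699036495863093452947564257590944690132897912843899465009110469208550692398978101717003162315025283423359569389599935803949158938947799346807706286592632902933479052811485687969421232604420298424578102418806651447495379287003182014718035867864573773953817530504025082869533449340910077533774771872612773374809076215158623154145986541377413554919069062072395571951425333650828298602982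
    (by decide +kernel)) (
  .of_search 375 20648314345057705807085560649681920629278684606055363714256719911129310758186573285943619018230886978312116782617550371641577855955089549086541531062
    (by decide +kernel))) (
  .of_search 72 2534
    (by decide +kernel))) (
  .of_search 122 5823936157741271526
    (by decide +kernel))) (
  .of_search 279 1317120607304060648368297074611157223457990872779306765238942569717194406189525146686830135782
    (by decide +kernel))) (
  .of_search 433 77245358095919939052971040708869094690975423789346477731809590046013631816131084367533126061933661782573033263972789302758137401876711321826272959073391761174679222
    (by decide +kernel))) (
  .of_search 536 31776897088497014602711062027941464279941783749129368691110461564151667368819905936068589831480859659424127576400094572984865470061853321628833583306628325251494047851047926976049948062643617625470362849110977936911103298723966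
    (by decide +kernel))) (
  .of_search 934 1220251378550507407509661807689994091235624341801674093280793430088842684139575016849193158317006196929128060747987463393094207283462737089364121398949452494110834621636025281893726589075129025181438470903493311399103206556859053183114139407250049791885709627025000722524621330032675145945413759971593125395199769509463117294409851716295023637629392364668387574804739762510577138716671172193200249916552968317001854
    (by decide +kernel)))) (
  .split 741 rfl (
  .split 797 rfl (
  .split 853 rfl (
  .split 909 rfl (
  .split 965 rfl (
  .split 1021 rfl (
  .split 1076 rfl (
  .split 119 rfl (
  .of_search 580 2010750231079929277285305367925064492867660619261459660939948952732457237978222332988761101725853952924262867903459950621889996001643036146460081469889184105572360736774892046104054607073417057935826176202272644730390761380856967709974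
    (by decide +kernel)) (
  .split 2198 rfl (
  .of_search 989 16745384268848697291903000970223030789771265933788069194883173840237822694806551132725500402009552830218895090859636757132037447336300184366839712623708663391204522513889996189374375370622146488920902553650273835505600691231767538530954681462473351095109350639704775284336198563753636309092896814715390557615921971360796375038115409065688134623140517673799481256866442148382782649172273589905503538924051223781702813566
    (by decide +kernel)) (
  .split 1918 rfl (
  .of_search 448 890798521489233468197559560889450515784283925780418880316945354319166257288901573532677614767514483058507404176993679417791862754649060316808747366442055259102423466222
    (by decide +kernel)) (
  .of_search 849 80134697733855294607068198367795854422703083303779941860410518312335238273683385330570404092117270536346067606640446088200532830232808186856927156296519475664387270829895974717903241013073464888278222865089795318059120275278780964279677281047567855623363850368457603374014686447870642895750060409202694168791697420569946351559387890139596112949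
    (by decide +kernel))))) (
  .of_search 72 1918
    (by decide +kernel))) (
  .of_search 72 1918
    (by decide +kernel))) (
  .of_search 251 30649746174230567477076835605853562650443355069960807144810457145031739521373475071870
    (by decide +kernel))) (
  .of_search 423 1151074174631607116538965862393181666844001219004909887452292041382132465847535270555710000046783542550478282275299641329359778665051876752861513244516270262
    (by decide +kernel))) (
  .of_search 545 31777687812405452903785783756271240689224921349019914029967322207868823170512961978581693496337556215807405828598587104321546010154985681197321172475458326796822732885603093729972338793500288215405123733870150021480894175233918
    (by decide +kernel))) (
  .of_search 933 204004545678426738183068144408763940473977728948555800386177712374231608503474331257111269675141832422418807822754797612140700491464500817809810447829407121197040583629956891027082247494697119981281570639926779943219411812589014717697496966533473913354592682675090432115277259387529427683098352851984766349621264706880733981890579639099153911725251574009413580552378108600791598500951611470243159047682667930451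
    (by decide +kernel))) (
  .split 795 rfl (
  .split 851 rfl (
  .split 907 rfl (
  .split 963 rfl (
  .split 1019 rfl (
  .split 1075 rfl (
  .split 175 rfl (
  .of_search 326 343578353091313958926721823260249400765029617982567816160788357182345522846419455841171413840818343667395551177861351721843410814
    (by decide +kernel)) (
  .of_search 808 1956677672867583352257701909403827943588248524929839472409291899742674507297881792527991231185367209158940054544068404362519935121300088266843048562920129904483010142631472113747821268607635743686671994130026108158716877147301293306108443137686351189228519647971982456862646220997770876948922122904738159720258994719270565481515714697014984747923668002535459687848962058070501
    (by decide +kernel))) (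
  .of_search 72 2534
    (by decide +kernel))) (
  .of_search 157 4515490402102761258083763620286696733720814
    (by decide +kernel))) (
  .of_search 143 67286189000289615280880430792271126
    (by decide +kernel))) (
  .of_search 96 222635910422
    (by decide +kernel))) (
  .of_search 79 16631062
    (by decide +kernel))) (
  .of_search 85 30854222
    (by decide +kernel))))))))))))

theorem refuted_root_one : Refuted 1 (root 1) :=
  .split 69 rfl (
  .split 744 rfl (
  .split 1357 rfl (
  .split 1412 rfl (
  .split 1468 rfl (
  .split 1524 rfl (
  .split 1580 rfl (
  .split 1635 rfl (
  .split 800 rfl (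
  .of_search 466 32864559841399398727977141955399951765056945172719091238054102004952765300389488323217624583751561077933692065862613020196800530834868183583755434379385970977381581781579914724036089700422
    (by decide +kernel)) (
  .split 856 rfl (
  .of_search 265 3939084541482092101003933579267788947254267882166600917210310899849517955271972936372270293062
    (by decide +kernel)) (
  .of_search 861 45194922300945820529752123429070095037779529534151029066722118094419011437482465625642417980277275363197815942811614910648374033896455269077532650466975501493360306954431810466613837413515052958568741425687954824046500417958520938202883740331737818971119182697344989737262402716030033078380386817906327255486143011242489279506360940827695768902373887213525897477744202988616322261579731657584070524733539216
    (by decide +kernel)))) (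
  .of_search 71 70
    (by decide +kernel))) (
  .of_search 78 15712326
    (by decide +kernel))) (
  .of_search 176 20272491725045366200617676919668062446157670248976431857734
    (by decide +kernel))) (
  .of_search 210 1130098216703554326481247265443145597856602865058082086511098241261
    (by decide +kernel))) (
  .of_search 612 17892965041810308442791431592096171320711887872071347949992213232556089762764421238932858912212837267285446131593983692762696388055343707401678213641503373018997758808884704232331114749154097483768788052005301660334147928101520125677097764168953337240491579587702113841819030825986245116198
    (by decide +kernel))) (
  .of_search 771 22343456748477343040453045382817534175300291350314139458083719116973307276456864999915280909642663442301659367639831972343681519039650939152550121267516884851475739998558794866287503774876227872245153531618301340676669776145607042149171686750918812542982917802676325327649524793760799429126190174980086705985130282744256332953634841311695724616832745013029816871273799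
    (by decide +kernel))) (
  .split 800 rfl (
  .split 856 rfl (
  .of_search 216 13033337427563860610505022767418249390478553846709922703834739883819078
    (by decide +kernel)) (
  .split 912 rfl (
  .of_search 143 8188159572586395439539491882262
    (by decide +kernel)) (
  .split 968 rfl (
  .of_search 235 7164618162021071072075382341209045012354605871189888438736193400345521388591055032
    (by decide +kernel)) (
  .split 1024 rfl (
  .of_search 174 353242948053427746878918974675498178641303706781062
    (by decide +kernel)) (
  .split 1080 rfl (
  .of_search 77 3150
    (by decide +kernel)) (
  .split 72 rfl (
  .of_search 348 5361203801417994064875217677373618765304121179140248971451233055076478915929320862480103194614340396971346338063443308759254753854294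
    (by decide +kernel)) (
  .of_search 794 51419861630459637534291544052825001339949997078690941734368407051228897934574138612562681564599806179554335089523535626494595343353374047562468367912864742215935188845685986449281103362100282899643409912843677570337182316232193044880073693171543854971896811334771080902639573785474684790244360507529874619485685460759548320040358576933028145384142884857107
    (by decide +kernel)))))))) (
  .split 856 rfl (
  .of_search 950 668603123496720398584179595170560137320336229976050983525238977235281299571458438482816613141796620571658364778681320704905870929794320486016512574881175884715519597181931196535122050821137072976600448086076459919566667230752231702529338693394403086174486614771583246918122825053553705006197068583087792409642174183394081789641527745751791895278657492758398504066495172484320018147845033303831644698818723946574613362351266438416805448782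
    (by decide +kernel)) (
  .split 912 rfl (
  .split 184 rfl (
  .of_search 66 0
    (by decide +kernel)) (
  .split 240 rfl (
  .of_search 66 0
    (by decide +kernel)) (
  .split 296 rfl (
  .of_search 64 0
    (by decide +kernel)) (
  .of_search 1057 450722760926193132350251722316552021606630697299689374800511984377980173303900949316915491594574000859968459789977784626577568384853674705601510197300777853333652008312013938744333122807092077896226941155401382021578994678564867524380152014180750379419116331326050905160300815600626624610651942271440174329489930872161372090659728543049276258129072979892641858216926176140339263511581453719139868989137361336095244427888151433663375668894934331148676285888168737194050861487207507429002217366956152902263421176346221958297790027406765838006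
    (by decide +kernel))))) (
  .split 968 rfl (
  .of_search 536 775895129365315738933230087590504366331270906748915314933921837445861134025861582481366199112085477555417325338281766519149990505946570841209167832088256256520722296249388931873168979735916464466906983213754311116638646035602104139341549859878172670446928056
    (by decide +kernel)) (
  .split 1024 rfl (
  .of_search 196 29109912925953186423382796449190285876115105835546712238481697256152877180308628046008
    (by decide +kernel)) (
  .split 1080 rfl (
  .of_search 129 318684970935682309812954711062606643384
    (by decide +kernel)) (
  .split 1301 rfl (
  .split 1357 rfl (
  .split 1413 rfl (
  .split 1469 rfl (
  .split 1525 rfl (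
  .split 1581 rfl (
  .split 1637 rfl (
  .split 125 rfl (
  .split 76 rfl (
  .split 1918 rfl (
  .of_search 588 1173308208445039824906834372287580835868512173278058974371422475095490074894714040996606457490692734484767849090678280131683290448156292766164534485952825846932655361955775105197169100840844992849156510753765194337426172484709395366539427628894694
    (by decide +kernel)) (
  .of_search 610 6363956455541632398751017196287962749999373530083092243383474029611217117785325743126840541664864923192526744656595135909816691113728535379639836015366262216106630307975537531382327093551534041392172026314567648400801242766287488902124002555915499889917629285094
    (by decide +kernel))) (
  .of_search 458 297826433723866726404978818861061432200460734909104497762070535818962442586918041219241738838301744200937472478640656644488516829698491080355109473182749187657723197151966331853019464576547094573996958999411609721828658865839982462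
    (by decide +kernel))) (
  .of_search 919 10021918975901914238027161721848610372353422354203669443430960351513351286370635269476019699983983922608537992256969785930084644329075727193919934953836794483273256062767244388846083309806480133900858286355435918640584647103620373718832971583735565946823558725583947129734942069372971650515099404340713520556435994894761601796892860370711720279311457732026902346173127636551048406786192041904869027136632954668426713986018020834237040974592724465891910990176362951532620
    (by decide +kernel))) (
  .of_search 131 11646930638522314761049851341565698229
    (by decide +kernel))) (
  .of_search 212 1063875512379987762648612146152453705719558643438339811155288764016244166732025798837
    (by decide +kernel))) (
  .of_search 698 12306019521695508425366324717433601740787719309025134781066295906145820437437981105692988411826363966593584989982963653693922764389416305663040232242550805295422217026596974093003370325734396494171681207431247302536144436368336284430870930254258111844199830440057915505022150044532080503003152132611069812917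
    (by decide +kernel))) (
  .split 181 rfl (
  .split 237 rfl (
  .split 293 rfl (
  .split 3766 rfl (
  .split 3822 rfl (
  .split 350 rfl (
  .of_search 65 0
    (by decide +kernel)) (
  .split 3878 rfl (
  .split 1523 rfl (
  .of_search 918 30481681585638586817266691095200986841230608704135627232855500443432509061014784355339728137271082091938683989578743200020187551661298906604660607636889789463365757620059333203261910312874680826901824022414315432321390961617453573548681729962081385179957868458249876080037659414953327443947656736879453263559764779569350013845630273654187551037292019703948352340078960686888471903771891296862498225247766058
    (by decide +kernel)) (
  .of_search 314 21577958909385705335414252069732716045003651414174139332688440598821861058700538072778137180850915883754428284121374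
    (by decide +kernel))) (
  .of_search 63 0
    (by decide +kernel)))) (
  .of_search 63 0
    (by decide +kernel))) (
  .of_search 63 0
    (by decide +kernel))) (
  .of_search 64 0
    (by decide +kernel))) (
  .of_search 66 0
    (by decide +kernel))) (
  .of_search 66 0
    (by decide +kernel)))) (
  .split 3150 rfl (
  .split 3206 rfl (
  .split 294 rfl (
  .of_search 65 0
    (by decide +kernel)) (
  .split 3262 rfl (
  .split 3318 rfl (
  .split 181 rfl (
  .split 237 rfl (
  .split 1467 rfl (
  .of_search 1060 910770132012298757234298017938894701010317805966671026580021927904823418828239907093146535142375063505884213394107586258991150003690734582016797526313052500454971809081950606679123563096717704221604719224015936795837038492058057181935076546820332065853758751264354521431671642629918084519078393401827525402096786317430821148564758745430718730780845031826542033508297300371208073884068771830859328061056060680185794149814854940999079756169746914194771631958598985498844876596723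
    (by decide +kernel)) (
  .of_search 126 830929511326386629799431862
    (by decide +kernel))) (
  .of_search 73 2590
    (by decide +kernel))) (
  .of_search 73 2030
    (by decide +kernel))) (
  .of_search 63 0
    (by decide +kernel))) (
  .of_search 63 0
    (by decide +kernel)))) (
  .of_search 63 0
    (by decide +kernel))) (
  .of_search 63 0
    (by decide +kernel)))) (
  .split 238 rfl (
  .of_search 85 173832717030
    (by decide +kernel)) (
  .split 1412 rfl (
  .split 1468 rfl (
  .of_search 965 1589811928237452383382465738029156479831135146404737991055476423578674051790002973732634312040770602405166988398865261058234613229667003987251260617433221212221269990894287750243125353871698457159530373663560622215831580673513298371818632045249552037580369372049205347938745316029731108827541158155070284407116036360992159013271703805533491182363374205222238041389478204911107894313904838515904048984129396543488126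
    (by decide +kernel)) (
  .of_search 216 1362165942962745218425133717738390049257421935059729612207384477822
    (by decide +kernel))) (
  .of_search 303 481286663547698050204253457686145179366935306067796709804815471559925725921658974162960510
    (by decide +kernel))))) (
  .split 181 rfl (
  .split 1355 rfl (
  .split 1411 rfl (
  .split 1467 rfl (
  .split 1523 rfl (
  .split 1579 rfl (
  .split 1635 rfl (
  .split 76 rfl (
  .of_search 1019 17128401945654410683302192619014184781928070831450618706050944412214334073714319464064720482823297814713928290664804230776086363775094741729841171051096024765924189863771012655138867258619331300052159619948590823087107225971348645271965750282686171713103631803518628122642170055364740011849246947452297115932321652686042624436602276888751823116459766452054917457149732355830704701505109576240488019748907392870971900639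
    (by decide +kernel)) (
  .of_search 402 31945649766693790192638280886317750074128485219684342985536403838279555429991482721155868144403360265037555294964185280386490557447544555664620201495764307291643963674886546302761713452303
    (by decide +kernel))) (
  .of_search 72 2534
    (by decide +kernel))) (
  .of_search 79 2534
    (by decide +kernel))) (
  .of_search 126 93713055501137289989310
    (by decide +kernel))) (
  .of_search 219 328498225485933727390376010333904611256236395209365753017415419886
    (by decide +kernel))) (
  .of_search 213 71256698035942707077129976724416100268376119580346608742031972088911546294
    (by decide +kernel))) (
  .of_search 222 5819453177149688302023457223866304648442866066269292797421355577964483950529070974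
    (by decide +kernel))) (
  .split 1357 rfl (
  .split 1413 rfl (
  .of_search 969 4026721024571547119805994420349282377540850796831796539064245005081184509241443606210116182231206638193697877141194535622863030465294741316198717686389159027484621196331499700109648261463573073727502480383979399787086411620496251169900872138912183074727419024681040415158007877146890434503244336118539234418669298109117152909945374458973009935489029634651672536139334968922270099705772517659336401470908
    (by decide +kernel)) (
  .of_search 643 78728808679253082949051068597506719505384817460248030232762644544082981766711252684748009977090341578138581728318161633475186906206362710611237907266888674580125704252554935732339907753086866620112219473110882297623659907110888812592987807126307445620862
    (by decide +kernel))) (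
  .of_search 794 6925994349081392324469327743159800654718917379137497956306732500434228376374617321108601226387473454600646570328457472816175567647880548624868427845853529021512081164525341290498220337313244745469773724356146595909630986752576766709388374018557793889552705406637313216168740699749099966929711608915337397542836737563804325987246206
    (by decide +kernel)))))))))))) (
  .split 744 rfl (
  .split 800 rfl (
  .split 244 rfl (
  .of_search 477 890795679445627328626738308548501249372148586564798198793652366725110117979721601887490937021511577467051688708697171291077865375045714462543632326180526086713896846170
    (by decide +kernel)) (
  .of_search 794 87738216766099971026907828879801522138624243778268104830075349169726063659538415313473276507369680945407618673305435079180037803147422103159537511618977342658721844095852223722675955769881038272026422843202756843559469785647838278585950689220417482433934621308289764979434139721794296426183414049156851333161818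
    (by decide +kernel))) (
  .split 856 rfl (
  .of_search 722 2902457806443222978217300925031288442803548084125991186678086760321505324881955203521243856840420567248358870009733781555556426654758302878479738272011285330097372199635564072809568815645423118403018225060996032128540070627771635484688925389348411308757046985158624174817580
    (by decide +kernel)) (
  .of_search 920 3720567644614725120184477039307495304287628923472566680414493476765500191095722459798958744940806438889717348098813225958853927708763202868846797950727745485638082960594948853332491426296690375319203874896073324327610043027693518457020524600824094890098521250861088595275698071332911601107034586682737055489011972631699764904740647068556071696462719715762913181928409550897704151007813205398232038294416
    (by decide +kernel)))) (
  .split 800 rfl (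
  .split 856 rfl (
  .of_search 383 692853379934870725707928888029843350197563154094374142452771056800113197197772296742447546885613144636574602287237647022794106586875158
    (by decide +kernel)) (
  .of_search 1056 1193711660634198940036585682212589319724769226396293377175906633831675238934914158035304718963422417214324165968797085294520403083110642974371129166371828099930531072966569416000341361799128540314497191805295822040648222347151843920616488115688456673920638908415777008784622712118393372554978077819545134559423916214590733724813117185753199602599447237835498027460613288497896600010658281280964635976549692659848412637590179030179747323870764976176697830924927943569
    (by decide +kernel))) (
  .split 856 rfl (
  .of_search 753 884295447015400178255809154390582831558566708296439170421461481254108734903083620856201294616729963770794465992191534519678007089398197072535639858910135292647946701029965602080566453667883680259305407070755505445514043844151648049107432433425049853849610413220371578914892323417697539091960110095502795642049726427318692011585404193870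
    (by decide +kernel)) (
  .split 912 rfl (
  .of_search 548 4670058197660678330456852643769737279648598403569637156969786851094480789404060573380533373559636936372061140294446345094192269791340945902427746422304760435672387391519366191109975096736956314820967487203368514943846892262
    (by decide +kernel)) (
  .split 968 rfl (
  .of_search 199 20274201688510179781053790952368907080485492468070588269286
    (by decide +kernel)) (
  .split 1024 rfl (
  .of_search 78 6537958
    (by decide +kernel)) (
  .split 1080 rfl (
  .of_search 78 6537958
    (by decide +kernel)) (
  .split 742 rfl (
  .of_search 960 98260360059952995096737860630422140382870224304506728780050323607061355631860150716958925812369305522127191650908891985525016897822323413959867528671528317968111142525647892919236219203754612848276024258274334894908595073739507838299564277322417594081413554424989812718565794771365746620929844231537752437920303005308231087595512791995205618388273084834199499140209025954428220217385304608109187589013805622603130250824278763939480350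
    (by decide +kernel)) (
  .of_search 342 4585140959249044867622497494550233228550039026871988817363141188630457275162925658996278579794400205114082007314816400961548893995806
    (by decide +kernel))))))))))

theorem refuted_root_two : Refuted 2 (root 2) :=
  .split 685 rfl (
  .split 1360 rfl (
  .split 125 rfl (
  .split 1973 rfl (
  .split 2029 rfl (
  .split 2085 rfl (
  .split 2140 rfl (
  .split 2196 rfl (
  .split 1416 rfl (
  .of_search 417 4879461529118066000296998951264831876314612962700793640559937237718957291097636934338176214648407409768108502741105771829285571583512401791486100893936071126835326
    (by decide +kernel)) (
  .of_search 874 824280974004937360658732508965562917873412884131269141988392934569317832365792844634874646640920900839121398372301524799252394544136330795327923262035398531717145424145147187966796604582677377587207385321797789763309547094460704982680573303669014427345197430173835288620786883607759026898885579325210882321981184900255768664684566581009245401254867585253455918175838225933819396326671808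
    (by decide +kernel))) (
  .of_search 80 6537286
    (by decide +kernel))) (
  .of_search 80 6537286
    (by decide +kernel))) (
  .of_search 177 4501804647976745870712261931206195866813883
    (by decide +kernel))) (
  .of_search 310 1851935016103880753454853669782310396805206252659062847000606901422855268490638419755049555232565752406309
    (by decide +kernel))) (
  .of_search 777 5561493409648830715629989692751232752154495970230615976126230543495719605944825773966789807660425533271117013994719473572110883005450322381691542374840685964558929086855792181242255061542077858350206577067712294217252344738754013092053686798956116783294150467416327075380295550306890771771692359281408882935054406
    (by decide +kernel))) (
  .of_search 477 461030896676935457737217403858252512119127405297271329833325977717793179440744424297475021342488824230587408910910516501387951393308096277366878225908237110862906323329804517391144204128026108716446523695957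
    (by decide +kernel))) (
  .split 125 rfl (
  .split 1416 rfl (
  .split 800 rfl (
  .of_search 73 2590
    (by decide +kernel)) (
  .split 240 rfl (
  .of_search 66 0
    (by decide +kernel)) (
  .split 1472 rfl (
  .of_search 275 2633740890620253690213603393227156691652666184899674087203616816432041153156299057022
    (by decide +kernel)) (
  .split 1528 rfl (
  .of_search 477 828084574910966855610177887738190563321148819177264917681179707727787787032535240365541595819294266123809563319896094153575460586169786822756950793461861422638246149917109747495076192
    (by decide +kernel)) (
  .of_search 981 46403429136637809439835380787174999033002064557470770584947819028906185177201531753877931045836418206751760255791336948825067818709268968366397055440273680097646472762218231702438982609361390037298462631778777739306628822807069095298581597429191913410612093943988618370530520208542780655687650610889272077205213165457345603698750675272910188180885281991469171614945290896475091686509199840441501436001125936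
    (by decide +kernel)))))) (
  .split 1472 rfl (
  .split 240 rfl (
  .of_search 68 0
    (by decide +kernel)) (
  .split 296 rfl (
  .of_search 68 0
    (by decide +kernel)) (
  .split 800 rfl (
  .of_search 66 0
    (by decide +kernel)) (
  .split 856 rfl (
  .of_search 64 0
    (by decide +kernel)) (
  .split 3766 rfl (
  .of_search 63 0
    (by decide +kernel)) (
  .split 3822 rfl (
  .of_search 63 0
    (by decide +kernel)) (
  .split 350 rfl (
  .split 910 rfl (
  .split 3878 rfl (
  .of_search 63 0
    (by decide +kernel)) (
  .split 1528 rfl (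
  .of_search 449 183870137469045917864444346814317616738321703615045823342368475042785087841614011636452915180320839361209073056379550921807411926644786779446846901864881664459231858974
    (by decide +kernel)) (
  .split 1584 rfl (
  .of_search 376 1106838503524369913554241680079548155912944777550189138626074945856537142371218680155932007279682021098167995075160669813252248109464
    (by decide +kernel)) (
  .split 1641 rfl (
  .of_search 129 8898092624946108395231806914256545179726643608
    (by decide +kernel)) (
  .split 688 rfl (
  .of_search 364 6928205966918033296089081247996529258354646292858624770615139979595947943417667850264699443035382240669615445649613308646
    (by decide +kernel)) (
  .of_search 841 33280913430131283025777188128021959805267238698776345392398155895407062335234296405672875420074356527823005376577232356868171349095513693837787572866117355607797208623618274709869492090810379173815028846829093096225667709833578321392253072615207230378407569503242278091057273083905396871028277584153350678693013584995073779300533598716280148303017178800256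
    (by decide +kernel))))))) (
  .of_search 65 0
    (by decide +kernel))) (
  .of_search 65 0
    (by decide +kernel))))))))) (
  .split 1528 rfl (
  .of_search 757 1437510003156680167897147934854762455510908954053877299395116475882568807134999385592549527413539523572116924169399756063863373128609149948265643747414941079647084197058848452290870209542091790358061880791404917529528244459399272910397896173086910714972847518100723476873390575683036271065454978627337004911350041035654424694460996976880
    (by decide +kernel)) (
  .split 1584 rfl (
  .of_search 222 6658343393526150888107994277162803071144038593766393735327908654540889284781305440785723107377392
    (by decide +kernel)) (
  .split 1640 rfl (
  .of_search 156 597140887826911211836664216405410181777311668709425392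
    (by decide +kernel)) (
  .split 1917 rfl (
  .split 1973 rfl (
  .split 2029 rfl (
  .split 2085 rfl (
  .split 2141 rfl (
  .split 2197 rfl (
  .split 181 rfl (
  .split 741 rfl (
  .split 132 rfl (
  .split 692 rfl (
  .of_search 948 1170207899348373976555992664768211676514614230053738899371889805919941332494371002759731354707927327415897621317267547187594880644008649406761405996480356861770202715087089604446563937200986968407136040522387952294829638232811710563453192652920627232326825373367602157714552231474265092198325224232828554527495155640906359904825008151716594948497511539820445491260567746521274161860998010216762725410269497159137226104282267720
    (by decide +kernel)) (
  .of_search 294 6388697335192996170188601759785753563064980374080704456508168024086240119897140805191247431718718745599057745357342180128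
    (by decide +kernel))) (
  .of_search 936 102038644465286630160984666196050605129465561404782106938046690445319406016650351461097076894874605348462576252824354578425634651757730932849909691514198456534520594500943836714806764132688482682651010423503382705392901858064242990061359647086785094609564492183140673532560484246104247938760403339587025183878856709988614541365563219119745188015051681597896232370318948711557453371984342439401256879287347324036997151092471746702232704870623379938910012190978403908656366260
    (by decide +kernel))) (
  .of_search 889 2839113357122681752823475657292636210032408253162888089365584064016150312280017823397106651256896603678542490331904663362126769920715365018268258975717126983652005497596135380459593324613805432069378904454363900270346533818725573561157312264383433967280543843049981946085874515347496545405692315100512603678027069934519079517669158471445650004493359943386822058938915746606639311084812593330343923855968005063012325859531821229252977382925169986404515972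
    (by decide +kernel))) (
  .split 741 rfl (
  .of_search 746 2715477814137877710784022172810013001405226375413189819822280410785001896008308279510561088034597393799874261344825111827289778624050394262589678929930228664636979320592285464760022747038442500135058398974966198544823799188724358683752280889444729622208456572791411727450427115550672033929455190237663767014119642785619929636569996553941894537271602684717222453940
    (by decide +kernel)) (
  .split 132 rfl (
  .of_search 500 2010591860954890254024238275265616564944574300898019914683242676471166244851125841757370370864565472461266038797797046017524243129165179698649792991919065120647149697321720791499643798400983453853476149827942353478934541502375512294068
    (by decide +kernel)) (
  .of_search 1020 839544999328050989493563580514326320332785213916563920744187967133389540496836999631619622969119409175486412982552732971354494417894690420376194384910202791563558302049958480056862757565791121491089499338685490169285859771685197895623188393817233178734737170727668629063165864987620106972110380613902996057194247225342025187395939428922896180104901767493306461362856970182632932180191159328812670755025354509835319046932523285376608009009279080885973440521228963300345865880244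
    (by decide +kernel))))) (
  .of_search 156 52386614784419968088382281821346244342689116335677677
    (by decide +kernel))) (
  .of_search 307 126351078133340705558522644948251440624127991286854320016226714300458440714903090885221953195260842646184168089867315101742827185216487203053
    (by decide +kernel))) (
  .of_search 661 21382434396960750542517010795948447171452985427981021770336162155446122464353066287230267505618373616252657535653956380204375266494795281485994085293172248591395691257672430389906283031593450547380426808366519477449064393936505809790239538766398737859378337166958829
    (by decide +kernel))) (
  .of_search 941 111229426401278866691219049995066068859233978448245581606874359146803272199513662736094646375243419152210518068696776432784312424867822495410286181047711817366292496640404192504520049039856177254862473724311463865166708227632821362258051576116613933939102663706841168238749001482233513440540818806785400872322906075602223455678783670633581946703124812079235267534600769151213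
    (by decide +kernel))) (
  .of_search 681 3181664139971582730119471933498685331009477885462864591108127140732213845247706960862681557011964168057702166637578875723234884248888930425789057336148643356346577349011314365367486487472156493089268355861773839449057112894931310176670786577544094438
    (by decide +kernel))) (
  .split 800 rfl (
  .of_search 284 2379470574176939374363503501739575729472386593999911682970172102773372435465671969218006999890641832735005262006
    (by decide +kernel)) (
  .split 240 rfl (
  .of_search 88 173832717030
    (by decide +kernel)) (
  .split 1351 rfl (
  .of_search 377 693034971524423998406926273570073318659605058095784481483277147359329783441110773018383442647574228889314386292517562921088196691610086
    (by decide +kernel)) (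
  .split 1972 rfl (
  .split 742 rfl (
  .of_search 1038 115282956061228434834488685939555044574013600156993872105527377964508336816373464239086566190143112993697679718128017949998098443739817452720901668923141743469014360230642704311563889754668446420799866143635067980945583398760617724483851830353289227014737943491609773955211404157149917531083097279063869985408508723786733237654218018527574918648011970889059013433116021852075167357346604161766151813030155256381619952967752
    (by decide +kernel)) (
  .of_search 166 78063380388664870083927649239788594019867774617582
    (by decide +kernel))) (
  .of_search 604 26035602784007763705031772214773736479924507072765791218718490316483742687437470549670395037417987090601140934675205963454267103663854544777312934871700999013699300290308779467421601009197460820963561650315171350013221763869713545240675205562550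
    (by decide +kernel)))))))))))) (
  .of_search 300 30370825067002197277465847979349807108837874158566768157407926479715332996898042987152811216639857634592629939305456255804189
    (by decide +kernel)))) (
  .split 184 rfl (
  .of_search 101 6621068905617081678
    (by decide +kernel)) (
  .split 1360 rfl (
  .split 803 rfl (
  .of_search 514 33028009189719960755051878837179538013728616956621233736303686489063396868502198959278630675742130531853581271419810632847595067603947819077695819198869595341937101696360649202572808014310
    (by decide +kernel)) (
  .split 243 rfl (
  .of_search 592 5460881335831125053605235083940267646641747334260837524143661851861711017095105069649983572945744079487845814518063453490539371290053346892257909393485029720549076636681872844168975713060754566468076180414919334531573121140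
    (by decide +kernel)) (
  .of_search 584 107325711469010504045621698846538259477679085237794742818555812140520330468776292002960889547429681699547309517074725976260164552251256914596157878138386576173529970906544745061949610396157579913569459751085901775794849158
    (by decide +kernel)))) (
  .split 1416 rfl (
  .of_search 554 5291566138648941363011682637644892223342313727107526190617369237047949849327066152164949829858586388323916597163882890550069249763260289099043077957925114996120197938221191724615880351006960
    (by decide +kernel)) (
  .split 1472 rfl (
  .of_search 624 8540052370821413125190862552952882295513557647566758991248339344925675519082268764597885049434419468754007978789286148204961831469491865296750254914648370942702580626159383469766585003513328379366404343236837502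
    (by decide +kernel)) (
  .of_search 866 74090277142306833746761473921300556797899329937914403956490056986924547500173847630692748186215569967494116965333389706619401270099966905204754180170704908834308850435985552011521691106391074683408224130749869691648254537035063759586930936993001344409829190436278416641187000759686929272968824146400822426144794916337268493545275153167338685944
    (by decide +kernel))))))

theorem refuted_root_three : Refuted 3 (root 3) :=
  .split 1301 rfl (
  .split 1976 rfl (
  .split 741 rfl (
  .split 181 rfl (
  .split 2589 rfl (
  .split 2645 rfl (
  .split 2701 rfl (
  .split 2757 rfl (
  .split 2032 rfl (
  .of_search 259 1643739890674723378387769383758902831756674791734254131633887180956984038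
    (by decide +kernel)) (
  .of_search 950 380136891487336934931101454129320141827977899797308733286530523658376169764541643330051488180554657337047165746938562024106648513096701314060954745609882403078227023750272262303989908635852708889672346158435774383718790482509488483302700117291609802022391769344905058574494116228324434971014902508042741614732553099933441390906669890384378908913908788085882126430300097399013981840156052139073924741770167191592
    (by decide +kernel))) (
  .of_search 80 573566
    (by decide +kernel))) (
  .of_search 93 259510550654
    (by decide +kernel))) (
  .of_search 192 43121188929281574371097864455451850394256132073
    (by decide +kernel))) (
  .of_search 401 455439757007664010139208147812661195104749692961843781153991314964211146795516907808936180463336966491837358138007138911500845182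
    (by decide +kernel))) (
  .of_search 98 161726864934894
    (by decide +kernel))) (
  .of_search 581 4527437350224154092296177029769264175704897435032632761668399299792894406115883960297597187912414730471119724995478101639384312974375281753474158339569919657336406277306738859758199868817768118695981685728935210792167318973
    (by decide +kernel))) (
  .split 741 rfl (
  .split 2032 rfl (
  .split 856 rfl (
  .of_search 68 0
    (by decide +kernel)) (
  .split 296 rfl (
  .of_search 66 0
    (by decide +kernel)) (
  .split 1416 rfl (
  .of_search 68 0
    (by decide +kernel)) (
  .split 181 rfl (
  .split 3766 rfl (
  .of_search 75 2131
    (by decide +kernel)) (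
  .split 3878 rfl (
  .of_search 76 2077
    (by decide +kernel)) (
  .split 3822 rfl (
  .of_search 75 2077
    (by decide +kernel)) (
  .split 350 rfl (
  .split 910 rfl (
  .split 1470 rfl (
  .split 2088 rfl (
  .of_search 304 253387257389711954857612742527222228866188303952729146437315090240072244106520749177180446
    (by decide +kernel)) (
  .of_search 974 44445230061762626156006516664421308347514041192703727370047346297735972224380999362656002065744229150260504855942569831259502926856256727960235051536977297073129187231646948224870710707882967939684821009798335063077426245222730057992799353337498420138704919791796166814964762754403807739843224898418212911550741769520865721594179868974750147133298487907691980728496920540117867247208710209210464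
    (by decide +kernel))) (
  .of_search 77 3307
    (by decide +kernel))) (
  .of_search 76 3307
    (by decide +kernel))) (
  .of_search 76 3307
    (by decide +kernel)))))) (
  .of_search 74 686
    (by decide +kernel)))))) (
  .split 181 rfl (
  .split 2088 rfl (
  .of_search 785 81567188630092279431645286176253156396857259040989414484187307916007153423810286641119453433765866447023579194237660144652972246023134329366071425233345316782591095207741326798501398749089489732768420940965612651186623172503978132464381850607473625522684250997379397546944672451681769552085288
    (by decide +kernel)) (
  .split 2144 rfl (
  .of_search 258 17737957706935287088591271158224127609781069052519622770227615235650713912078310517937463827488620573673390376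
    (by decide +kernel)) (
  .split 2200 rfl (
  .of_search 169 3515949402180839303754744691536505940841440322127844986323240
    (by decide +kernel)) (
  .split 2533 rfl (
  .split 2589 rfl (
  .split 2645 rfl (
  .split 1360 rfl (
  .of_search 903 131457315764717538265443267185533070190509662314746297038261491402519661670436512745847094446033827148716916449882128978811105964133627884650450348834233601846035832566468053573575152032338635549595432625717224079813601314188991767344243363140804662529053127094452683600569155852232162480640152188484150154121705492429489011425706286416717608708301551257336930088864375419408792201869
    (by decide +kernel)) (
  .split 2701 rfl (
  .split 800 rfl (
  .of_search 360 121174806157543991379614240928453152184057594801402035101504851016949917698382550783907859885543067468041108322005785319784172775123061310856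
    (by decide +kernel)) (
  .split 2757 rfl (
  .split 240 rfl (
  .of_search 178 73822923514267333800954459895713017043664482327149294583415640
    (by decide +kernel)) (
  .split 188 rfl (
  .split 748 rfl (
  .split 1308 rfl (
  .of_search 869 139983468503646813906751821044223148541188027814527084925370843201411645706290651763457039169807343452090342168818753398795836965220842384633718876053404499982921689370362694679901655581687182629718529115907201407544290245849627617122587105859150488140592320737434205587275759597151664161173501871116105754507207141979975033635908923415177690578728228336381527384537210373945545668310814621998594475312273079357517364641867
    (by decide +kernel)) (
  .of_search 615 167950062150690228883742944157628513801030433735356019815748913129537171908134081393520514341459571682395613250352315773590751944290741636563514527081597131082897320054387847889774528867108427826530636476058982297179955422916341404242981597640285964468774309058094735430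
    (by decide +kernel))) (
  .of_search 664 15903129030668566913972026445919609526978817339752168977947354917587008821562339090304802577521114507385283384044784869439347340516326658839229515480516663533321663425682054797249221053936652756321756390414805517746688146607695438265085182053620479885229654867312571219656613051795899252926356708528358232
    (by decide +kernel))) (
  .split 748 rfl (
  .of_search 809 6311005963841095503063672240568291194362470843059851508179480837199149651869373204613358662353164057169199918616518438479868732365800354336232436647616583669778576227657294494467859152055383534821575485445366201893176897458888192995629391297840500442584765187741054374767684771935031054287215434033293401160659858784497729009517662976642919573820167246514579545909490115669312796
    (by decide +kernel)) (
  .split 1308 rfl (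
  .split 233 rfl (
  .split 793 rfl (
  .of_search 700 346900429540052279059737794520680023408763609592037328644937854853390653390636729089057413124153467861934150824978947304275354647836596460346693581253210160263797361682290895661114658654537206855486262877607682028500464353770408867585159203495382849212441100933859461554497309244201776402218914310954528318307927332259903652206742545737
    (by decide +kernel)) (
  .of_search 428 2693794864141584858552422549065456001326130309311190499852267549893682509134002312961178956205886863906550531753819861726934689466373022536240413821447785129029247268232349110720083565006012428468658252
    (by decide +kernel))) (
  .of_search 280 1481768183751643148793429392209583628953063246946195345853384016719557696582356049540931536115920792101657
    (by decide +kernel))) (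
  .split 233 rfl (
  .split 793 rfl (
  .split 1353 rfl (
  .of_search 980 1189638520917625058872863852686449755245002604295387050823531404854418635156575372801810240676392257976742905500671541957807797685180139542804824433448337347787267299346055447426498115344912642039517835762011405447713951380081275093873706216332258287782980185723989163809723037911641404373030056464066526124388912191106712227279328178628992116390634685554584803508263719180129843701514433410929406080361126644142264214954868448439338471221226045231810910913389330502
    (by decide +kernel)) (
  .of_search 502 9231800609157459499703257570083500583418593223844187479676005630310801302868513246632877052007143922141780929592194343428306332902437397210131788758098000341256559190620713309492930910302265066903743898580129378991227410645124
    (by decide +kernel))) (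
  .of_search 462 2693794864141581917290550821453880552605576645024200821445144239409711143725553565007112207902505547439176750444921242541642872229628913233697288617772661237174498856269671164653281783580362055690536265
    (by decide +kernel))) (
  .of_search 784 8316726558559136904115953903420245306677816897001075261213548042620535739317050299644795106938716673557611089912554294017254718943221884058168871038647483676837851589268588737065831286778453849917871499638381433005314247915191220365332850826360040243757104273476055195637363691218723242408771274807126923696144497669196094624636783446053593999927844184543962883701777177
    (by decide +kernel))))))) (
  .of_search 185 235923816500700247331691780148226018761067649615957444372063750693157
    (by decide +kernel)))) (
  .of_search 264 39199567720644180187657853106770185334941356958420055170102837038008028297427344312978538361325599039781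
    (by decide +kernel)))) (
  .of_search 478 28103706425346487849847506022435562592006164600218693569114314064644167292652300265033164415849782692280451646883135192267712631571039015171735172317397036248637453285296391171988077125925
    (by decide +kernel))) (
  .of_search 719 12816048841068073406382694506065218373311909920229165323092416742619328400984163022850824809613348989952681781284432294256755625225960844999006315388046201834179775118738322886564971340227518611232606606292398340050942423349146954446300945345282063141689025703762527424812120092223381742421
    (by decide +kernel))) (
  .split 1416 rfl (
  .of_search 280 398653234491395043287409757542122455941687737508155307996002495638882805238184950169321710
    (by decide +kernel)) (
  .split 856 rfl (
  .of_search 94 215176824142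
    (by decide +kernel)) (
  .split 296 rfl (
  .of_search 80 11584174
    (by decide +kernel)) (
  .split 1967 rfl (
  .of_search 338 1589972614181501431478796832486435861167772188149086975225812549314594864795233588585638159414810708144020955065911296375292206242443873561398350
    (by decide +kernel)) (
  .split 1358 rfl (
  .of_search 1028 21015823178666517027390747239307122786396139688712569298231172984622935669841636023541628776770797040054283705235341293720307142891868625886150429934965115654979952543657740489916055015986093579902548248137611549990889307558089449345486282386131107038942139287926246858708338268517041100345408421669831826607915511172434567258065609783445260684867305928869911277281207501459667260910003203962946224
    (by decide +kernel)) (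
  .of_search 230 51796143368865579800968280753148989958291098274776142999687770977174281979328
    (by decide +kernel))))))))))) (
  .of_search 216 10414214679410488277062755288277090558371712645423651188157880820721011747383344735061
    (by decide +kernel)))) (
  .of_search 723 60289546485543818859687621313825293846145067130632454185442782157503856624960445481853505303021257941706456993704326003007536022608178044362328718374567735167224959630506017161764146762329187411920359315044294157143093702150994772936251975874832473276236706978276085555764410463393483116802640952171609546785483173739865477
    (by decide +kernel)))) (
  .split 800 rfl (
  .of_search 228 424443598742510888552846571448482758271805326079522612177640760113883663939192758
    (by decide +kernel)) (
  .split 240 rfl (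
  .of_search 92 1116136780710630
    (by decide +kernel)) (
  .split 1976 rfl (
  .of_search 938 496349346374029931522322167500004523100486358230257950728896604489206399022330614886678187912187206677851366210117314300669660305719877482865583351427045746394542528044757268201557698461331496531246208762231766139601983841274119761900019510628872803992408871821856203894599389372181632678624555748887014927442258691750498643519216932096426505717131
    (by decide +kernel)) (
  .split 2032 rfl (
  .of_search 430 8856458418749436262551326234565314457848077615870097378932511066034190963127383381571072202140615524419866865056329104299143376729092019115924122173736
    (by decide +kernel)) (
  .split 2088 rfl (
  .of_search 241 1590981172865551877110088338621375393242497586435471126240446693558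
    (by decide +kernel)) (
  .of_search 892 82839430203760278964053194057351196574706303278954093682358862701571156188003155519869988536763836090629376621394459183289473593911500365196963515190710233239456384330993089327078528377321286727452213932864101522973533558456625909650890218006758398344708599859102699940991486081750646058353118620142414447808999432879158646789455010631923218082797169956544069221898800230467573827680
    (by decide +kernel)))))))

theorem refuted_root_four : Refuted 4 (root 4) :=
  .split 1917 rfl (
  .split 2592 rfl (
  .split 1357 rfl (
  .split 797 rfl (
  .split 237 rfl (
  .split 2644 rfl (
  .of_search 856 60002623707600497936891214920291798957018639382372069034339006930368397420245901919329913721665228528468733719561017779520486782383951618081291750540554881887093602464030542079793652611255055416848491966932439858069176474292691723778494965880636082861771012681943912428989327585787314782614205918567805770929586029929515798210875047144952641116848093392337238501424807315061725758379288163814028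
    (by decide +kernel)) (
  .of_search 355 37560721870110115934931999827759661198092830767032184980921789537530215924092502345395973008615544590649738815075000278822272983880093982
    (by decide +kernel))) (
  .of_search 83 5620454
    (by decide +kernel))) (
  .of_search 157 346599790182456868352357096800708119126
    (by decide +kernel))) (
  .of_search 524 654027186671260951249560372561412847115720772373829871602946108415627156139289684402549659704622938895625295047609504743422145583518857205959468681376265804465427997743312182521170914479640211915546838149157
    (by decide +kernel))) (
  .split 1357 rfl (
  .split 2648 rfl (
  .of_search 751 30047974783156802531858591734954495334188895782682102439501849099231298782194717926649565500685138170681839248410252873695397713037329274078474007305611133355627407966536815206648824581946728137036000285908098923984754436663806869167776403825326138463664196152987838917282183671449139433365607820089717687184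
    (by decide +kernel)) (
  .split 797 rfl (
  .split 2704 rfl (
  .of_search 441 5833201230525344603710843090822789025133766684219787439669256730173324141922635571341625835471980379928874254974730749215418511802378634783870022177582077967339356458921214222127743566176
    (by decide +kernel)) (
  .split 237 rfl (
  .split 2760 rfl (
  .of_search 175 2978668725461324029058916468088762419050647309534576336109920
    (by decide +kernel)) (
  .split 1976 rfl (
  .split 3149 rfl (
  .split 3205 rfl (
  .split 3261 rfl (
  .split 3317 rfl (
  .split 292 rfl (
  .of_search 955 9596975068846344675193831151273617197912108184745370243456317348534311769803148779934184707925091511775798659793596635702018812117426343564751820996393338151531793548625837739427502260019866663137822686550731718867832402253944755187204007412550525298845185981354352579965702990375494730483384169219290325212810994503162529414627841721449236836476417103401640031357521574851894881324788147802088687887459997080464071195608671617876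
    (by decide +kernel)) (
  .of_search 212 1088603205562258248472916667196192950720139621550387289081541477094
    (by decide +kernel))) (
  .of_search 85 576030
    (by decide +kernel))) (
  .of_search 164 91838931877454277997894674906921558066006
    (by decide +kernel))) (
  .of_search 542 20695256292686160983037561265066566058572442797207530935146563725280296527043948424963642872951413332159504920651112191696823091989494051104346985686011759304138895439043182881817560990952610994396880544093
    (by decide +kernel))) (
  .of_search 616 41660456169580188162745480638916236720270567172082537050085290860859236428196456606300606078727697094999458020613081608374411355539246099037813818344311037187888224704965887081257061755733114793239754817550956799979
    (by decide +kernel))) (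
  .split 3149 rfl (
  .split 1416 rfl (
  .of_search 454 323436036826851407016660467154661764682846574936713202908329478088309532861638810015593426274825778217584623404039406612451491002560763903766810428004291441793607580059632
    (by decide +kernel)) (
  .split 3205 rfl (
  .split 856 rfl (
  .of_search 292 729125924749764495789264270591413267237897040417352497757582189963341629650808299445504382871403977704896
    (by decide +kernel)) (
  .split 3261 rfl (
  .split 296 rfl (
  .of_search 190 2312093142867298742344635987125787425822549933732243256059364896211856
    (by decide +kernel)) (
  .split 3317 rfl (
  .split 244 rfl (
  .of_search 808 241461231222913768605502732433428780626808287820116518087660882291863895634263789339414667788396718767910697016134431366082215222643751307154720090238701273782060905291129682443664921552617660606692141092290389585628539479064113168672634941383227295939774399509608250234435746609645546197637065209810321519180787890152298994153448457445919973922150598285837875486621800351727234799272740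
    (by decide +kernel)) (
  .split 804 rfl (
  .of_search 636 50759791635002491431281003918901820870630411736914957280953307452536527761400032718462390410984216231138838510896076598953628499414684813042863654142615745508530262958538144772572128963714663757089377133074323408113760246294280940091938485688262828111464564979362548249638243411145060349150548
    (by decide +kernel)) (
  .split 1364 rfl (
  .of_search 541 316689327755715771871489459996140206152831940102436343346405994473734728382355560463528479135813297093941152339781209740725062286530749163944951198062802747467499453376535896733500206013137059009165109822046906463136492140216217692263252670793604
    (by decide +kernel)) (
  .split 1924 rfl (
  .of_search 301 323198626397785066826701556086316135965854261607565718565914093849050600613907588689290132714979940099802390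
    (by decide +kernel)) (
  .split 289 rfl (
  .split 849 rfl (
  .split 1409 rfl (
  .of_search 863 1667228251524157256391602179987469231473611979750490550812758678706080874666366121901249614719459329136173557391222313785908445505001521295571058143165070966238714084655857381296224344956790591922641850460641461809425704776074303984385067670058373051598913707749080498465486067376720690224699849040409332975836333839112874118995630963354585147037131532978963598364477447835010775979568165267244815333156259567916367576377640881
    (by decide +kernel)) (
  .of_search 417 32005659912808878407074529230903901209727635514735178615253782422717537901888375390170244314439856001500891332495031037499114326909764641119430348816534140015464388504304558966454508046257
    (by decide +kernel))) (
  .of_search 471 98871939255246531334286322976848452734474978386041913059179436511723701931168949976104229502518383010026557181138353628362704933648284275003785072516327193462229293018656097100970003532210203230805341199771648999075399041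
    (by decide +kernel))) (
  .of_search 572 67050883393423940730296584806554340868745125186323917077312848033048457491000396901697316653514453368512319525815806926907359136328591866483358674722828905291006214835432147110090920316386680767126030614143394334260367778846181696987306668445117924065820021819707883627345
    (by decide +kernel))))))) (
  .of_search 178 3515540579012613449574083690643859743697622719782899877585245
    (by decide +kernel)))) (
  .of_search 291 584119369725689701675963255557390002918873760371778824016396326320475656036469325879158389252445
    (by decide +kernel)))) (
  .of_search 426 29338905421350249755171090619354177807037201235334301996686477490829014890987496229627792320743324354500462061976234208765559592974426733490664302636147597
    (by decide +kernel)))) (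
  .split 1416 rfl (
  .of_search 525 654027789660154368970643249997674754784072944188194645562255768815225020975832057838974609402081868562956309760873370729181723734268732296055209939219034809973912571759584351169318976340573166121092056352808
    (by decide +kernel)) (
  .of_search 1040 36163955206278718056533359565983923381551691939060934539108268789290521227066937732607964234001645595550331222647712955631127894849435785048993513864191637047990621534190102661487296423407966271798283448154703165174151816723648705095345480986665943060773728807680669076117734008362890955836500388451997628638748863586574527683025298340585250128905860055949058284955622131548706398064216003151138472704237150067987984292733485093229034784671214514766682002690196312
    (by decide +kernel)))))) (
  .of_search 188 2312093142878968384549294433193728141834754819453425403865911961101197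
    (by decide +kernel)))) (
  .of_search 435 630218060224487893300510137150263840544580791017164953566024135969709099646069378222053877628221506293770785895671079658791433014337842221412247698389587428960508697387960332650092078525
    (by decide +kernel)))) (
  .of_search 897 62012410950384029540798017747899259285813127514038605075100547832874004638671097368459473716109221206577989605979368238171492722850267851040638453023753341919213056582598127096876235738665221764033856704513382947537066969462623663172435035924797950126409264215195048302983847813746399276895018152484697606340140309749256156669794025443279065204957596919789
    (by decide +kernel)))) (
  .split 1416 rfl (
  .of_search 295 1894783972045864478050443313559088471062597255141120466838099216269859021114070220533633713094782
    (by decide +kernel)) (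
  .split 856 rfl (
  .of_search 165 2532308313366632535953126951267352019358172494
    (by decide +kernel)) (
  .split 296 rfl (
  .of_search 81 5622302
    (by decide +kernel)) (
  .split 2592 rfl (
  .of_search 617 334725085955431555458450796825490349530787287113049947928479059425042380926168622243088269906579132899647753938964179539377655092581885469656139147688778029172982510747355954946878300074430859085157482421463019
    (by decide +kernel)) (
  .split 2648 rfl (
  .of_search 542 40760985381707073000673284543300262041636300838444989724738505900786471563872042451189501527743572612633464684878673988341745575645524926173081040319899522593681061517766032185893746176157504302052992483680
    (by decide +kernel)) (
  .split 2704 rfl (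
  .of_search 162 80952388823785176579132145081774187463454
    (by decide +kernel)) (
  .split 2760 rfl (
  .of_search 83 576030
    (by decide +kernel)) (
  .split 241 rfl (
  .of_search 212 51966283465137887194032535325670844755373248532133796263477035750
    (by decide +kernel)) (
  .of_search 955 458127556745830676902223249173037312814232602651055272561540333723288322250426852966302049807719277856957352949094068137133685209195065629394471904807766942913672220608790927373989751465635465308678441124639797291243919425226416853381380583260684709779243886375474936146755191174935147895205566194465351863086313663120371898977061792480205899473323985456199074688063589178539367800703229729460160364376030894554052535652962583329
    (by decide +kernel))))))))))

end DirectionSearch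

/-! ### Heights swept by a rotating direction -/

/-- Heights `f s x` of ten points above lines in a sequence of directions, the direction `s + 14`
being orthogonal to the direction `s`. The cells `[14 * k, 14 * k + 1]` together contain at most
one swap of two points, and no four points form a chain in two directions `s` and `s + 15`. -/
structure Sweep (f : ℕ → Fin 10 → ℝ) : Prop where
  inj : ∀ s, Function.Injective (f s)
  opp : ∀ s x, f (s + 28) x = -f s x
  anti : ∀ s j x y, j < 27 → f s x < f s y → f (s + j + 1) x < f (s + j + 1) y →
    f (s + j) x < f (s + j) y
  swap : ∀ k l x y z u, f (14 * k) x < f (14 * k) y → f (14 * k + 1) y < f (14 * k + 1) x →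
    f (14 * l) z < f (14 * l) u → f (14 * l + 1) u < f (14 * l + 1) z →
    s(x, y) = s(z, u) ∧ k % 2 = l % 2
  noChain : ∀ s a b c d, f s a < f s b → f (s + 15) a < f (s + 15) b → f s b < f s c →
    f (s + 15) b < f (s + 15) c → f s c < f s d → f (s + 15) c < f (s + 15) d → False

/-- If any two of ten points are comparable in one of two relations, then one of the relations
has a chain of four points. -/
lemma exists_chain_of_forall_ne (R : Fin 2 → Fin 10 → Fin 10 → Prop)
    (hR : ∀ x y, x ≠ y → ∃ b, R b x y ∨ R b y x) :
    ∃ b x y z u, R b x y ∧ R b y z ∧ R b z u := by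
  classical
  by_contra! hc
  let rank : Fin 10 → Fin 2 → Fin 3 := fun x b =>
    if ∃ y z, R b z y ∧ R b y x then 2 else if ∃ y, R b y x then 1 else 0
  have hlt : ∀ b x y, R b x y → rank x b < rank y b := by
    intro b x y h
    have h1 : ¬ ∃ u z, R b z u ∧ R b u x := fun ⟨u, z, h1, h2⟩ => hc b z u x y h1 h2 h
    have h2 : ∃ u, R b u y := ⟨x, h⟩
    simp only [rank, if_neg h1, if_pos h2]
    by_cases h3 : ∃ u, R b u x
    · obtain ⟨u, hu⟩ := h3
      rw [if_pos ⟨u, hu⟩, if_pos ⟨x, u, hu, h⟩]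
      decide
    · rw [if_neg h3]
      split_ifs <;> decide
  obtain ⟨x, y, hxy, he⟩ := Fintype.exists_ne_map_eq_of_card_lt rank (by simp)
  obtain ⟨b, h | h⟩ := hR x y hxy
  · exact (hlt b x y h).ne (congrFun he b)
  · exact (hlt b y x h).ne (congrFun he b).symm

namespace Sweep

variable {f : ℕ → Fin 10 → ℝ}

lemma shift (h : Sweep f) (m : ℕ) : Sweep fun s => f (14 * m + s) where
  inj s := h.inj _
  opp s x := h.opp (14 * m + s) x
  anti s j x y := by simpa only [add_assoc] using h.anti (14 * m + s) j x y
  swap k l x y z u := by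
    have := h.swap (m + k) (m + l) x y z u
    simp only [mul_add, add_assoc] at this ⊢
    intro h1 h2 h3 h4
    obtain ⟨h5, h6⟩ := this h1 h2 h3 h4
    exact ⟨h5, by omega⟩
  noChain s a b c d := h.noChain (14 * m + s) a b c d

lemma exists_swap (h : Sweep f) :
    ∃ k x y, f (14 * k) x < f (14 * k) y ∧ f (14 * k + 1) y < f (14 * k + 1) x := by
  by_contra! hc
  have key : ∀ x y, f 0 x < f 0 y → (f 0 x < f 0 y ∧ f 15 x < f 15 y) ∨
      (f 42 x < f 42 y ∧ f 57 x < f 57 y) := by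
    intro x y hxy
    have hne : x ≠ y := by rintro rfl; exact hxy.false
    have step : ∀ k x y, x ≠ y → f (14 * k) x < f (14 * k) y →
        f (14 * k + 1) x < f (14 * k + 1) y := fun k x y hne hk =>
      lt_of_le_of_ne (hc k x y hk) fun he => hne (h.inj _ he)
    rcases lt_trichotomy (f 14 x) (f 14 y) with h1 | h1 | h1
    · exact .inl ⟨hxy, step 1 x y hne h1⟩
    · exact absurd (h.inj _ h1) hne
    · refine .inr ⟨?_, ?_⟩
      · rw [h.opp 14, h.opp 14]
        exact neg_lt_neg h1
      · rw [h.opp 29, h.opp 29, h.opp 1, h.opp 1, neg_neg, neg_neg]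
        exact step 0 x y hne hxy
  obtain ⟨b, x, y, z, u, h1, h2, h3⟩ := exists_chain_of_forall_ne
    (fun b x y => f (![0, 42] b) x < f (![0, 42] b) y ∧
      f (![0, 42] b + 15) x < f (![0, 42] b + 15) y) (by
    intro x y hne
    rcases lt_or_gt_of_ne fun he => hne (h.inj 0 he) with hxy | hxy
    · rcases key x y hxy with hk | hk
      · exact ⟨0, .inl hk⟩
      · exact ⟨1, .inl hk⟩
    · rcases key y x hxy with hk | hk
      · exact ⟨0, .inr hk⟩
      · exact ⟨1, .inr hk⟩)
  exact h.noChain _ x y z u h1.1 h1.2 h2.1 h2.2 h3.1 h3.2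

open DirectionSearch in
lemma five_le_card (h : Sweep f) {x y : Fin 10} (h0 : f 0 x < f 0 y) (h1 : f 1 y < f 1 x) :
    5 ≤ (Finset.univ.filter fun z => f 0 z < f 0 x).card := by
  set σ := Tuple.sort (f 0)
  have hσ : StrictMono fun n => f 0 (σ n) :=
    (Tuple.monotone_sort (f 0)).strictMono_of_injective ((h.inj 0).comp σ.injective)
  obtain ⟨p, rfl⟩ := σ.surjective x
  obtain ⟨q, rfl⟩ := σ.surjective y
  have hpq : p < q := hσ.lt_iff_lt.1 h0
  have hone : ∀ a b : Fin 10, a < b → ¬ (a = p ∧ b = q) → f 1 (σ a) < f 1 (σ b) := by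
    intro a b hab hne
    by_contra hcon
    have hlt : f 1 (σ b) < f 1 (σ a) := lt_of_le_of_ne (not_lt.1 hcon) fun he =>
      hab.ne' (σ.injective (h.inj 1 he))
    have := (h.swap 0 0 _ _ _ _ (hσ hab) hlt h0 h1).1
    rcases Sym2.eq_iff.1 this with ⟨h2, h3⟩ | ⟨h2, h3⟩
    · exact hne ⟨σ.injective h2, σ.injective h3⟩
    · rw [σ.injective h2, σ.injective h3] at hab
      exact lt_asymm hab hpq
  have hq : (q : ℕ) = p + 1 := by
    by_contra hne
    have hr : (p : ℕ) + 1 < 10 := by omega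
    set r : Fin 10 := ⟨p + 1, hr⟩
    have hpr : p < r := Fin.lt_def.2 (by simp [r])
    have hrq : r < q := Fin.lt_def.2 (by simp only [r]; omega)
    exact lt_asymm h1 ((hone p r hpr fun hh => hrq.ne hh.2).trans
      (hone r q hrq fun hh => hpr.ne' hh.1))
  by_contra hcard
  have hp : (p : ℕ) < 5 := by
    have : (Finset.Iio p).card ≤ (Finset.univ.filter fun z => f 0 z < f 0 (σ p)).card := by
      refine Finset.card_le_card_of_injOn σ (fun n hn => ?_) σ.injective.injOn
      simpa using hσ (Finset.mem_Iio.1 hn)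
    rw [Fin.card_Iio] at this
    omega
  have hval : ∀ n : ℕ, n < 10 → ((Fin.ofNat 10 n : Fin 10) : ℕ) = n := fun n hn =>
    Nat.mod_eq_of_lt hn
  have hinj : ∀ a b : ℕ, a < 10 → b < 10 → a ≠ b →
      σ (Fin.ofNat 10 a) ≠ σ (Fin.ofNat 10 b) := by
    intro a b ha hb hab he
    have := congrArg Fin.val (σ.injective he)
    rw [hval a ha, hval b hb] at this
    exact hab this
  have hlt : ∀ a b : ℕ, a < b → b < 10 → (Fin.ofNat 10 a : Fin 10) < Fin.ofNat 10 b := by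
    intro a b hab hb
    rw [Fin.lt_def, hval a (hab.trans hb), hval b hb]
    exact hab
  have hpv : Fin.ofNat 10 (p : ℕ) = p := Fin.ext (hval p p.2)
  have hqv : Fin.ofNat 10 ((p : ℕ) + 1) = q := Fin.ext (by rw [hval _ (by omega), hq])
  have htie : ∀ a b : Fin 10, f 14 a < f 14 b → f 15 a < f 15 b := by
    intro a b hab
    by_contra hcon
    have hne : a ≠ b := by rintro rfl; exact hab.false
    have hba : f 15 b < f 15 a := lt_of_le_of_ne (not_lt.1 hcon) fun he => hne (h.inj 15 he).symm
    simpa using (h.swap 1 0 _ _ _ _ hab hba h0 h1).2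
  have hmodel : Model p fun a b s => f s (σ (Fin.ofNat 10 a)) < f s (σ (Fin.ofNat 10 b)) :=
    { irrefl := fun a s => lt_irrefl _
      trans := fun a b c s => lt_trans
      opp := fun a b s => by rw [h.opp, h.opp, neg_lt_neg_iff]
      total := fun a b s ha hb hab => lt_or_gt_of_ne fun he => hinj a b ha hb hab (h.inj s he)
      anti := fun a b s hab hb hs hD => by
        have := h.anti 0 s _ _ hs (hσ (hlt a b hab hb))
        simp only [zero_add] at this
        exact this hD
      tie := fun a b ha hb => by
        refine ⟨htie _ _, fun h15 => ?_⟩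
        by_contra hcon
        rcases eq_or_lt_of_le (not_lt.1 hcon) with he | hl
        · rw [h.inj 14 he] at h15
          exact h15.false
        · exact lt_asymm h15 (htie _ _ hl)
      noChain := fun a b c d s _ _ _ _ => h.noChain s _ _ _ _
      zero := fun a b hab hb => hσ (hlt a b hab hb)
      one := fun a b hab hb hne => hone _ _ (hlt a b hab hb) fun ⟨ha', hb'⟩ => hne
        ⟨by rw [← hval a (hab.trans hb), ha'], by rw [← hval b hb, hb', hq]⟩
      edge := by rw [hpv, hqv]; exact h1 }
  have hp5 : (p : ℕ) = 0 ∨ (p : ℕ) = 1 ∨ (p : ℕ) = 2 ∨ (p : ℕ) = 3 ∨ (p : ℕ) = 4 := by omega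
  rcases hp5 with hi | hi | hi | hi | hi <;> rw [hi] at hmodel
  · exact refuted_root_zero.not_model (by decide) _ hmodel
  · exact refuted_root_one.not_model (by decide) _ hmodel
  · exact refuted_root_two.not_model (by decide) _ hmodel
  · exact refuted_root_three.not_model (by decide) _ hmodel
  · exact refuted_root_four.not_model (by decide) _ hmodel

theorem false (h : Sweep f) : False := by
  obtain ⟨k, x, y, h0, h1⟩ := h.exists_swap
  have hx := (h.shift k).five_le_card (x := x) (y := y) h0 h1
  have hneg : ∀ s z, f (14 * (k + 2) + s) z = -f (14 * k + s) z := fun s z => by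
    rw [← h.opp]; congr 1; ring
  have hy := (h.shift (k + 2)).five_le_card (x := y) (y := x)
    (by rw [hneg, hneg]; exact neg_lt_neg h0) (by rw [hneg, hneg]; exact neg_lt_neg h1)
  simp only [hneg, neg_lt_neg_iff] at hy
  simp only [add_zero] at hx hy
  have hdisj : Disjoint (Finset.univ.filter fun z => f (14 * k) z < f (14 * k) x)
      (Finset.univ.filter fun z => f (14 * k) y < f (14 * k) z) := by
    rw [Finset.disjoint_filter]
    exact fun z _ h2 h3 => lt_asymm (h2.trans h0) h3
  have hsub : (Finset.univ.filter fun z => f (14 * k) z < f (14 * k) x) ∪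
      (Finset.univ.filter fun z => f (14 * k) y < f (14 * k) z) ⊆ Finset.univ.erase x := by
    intro z hz
    rw [Finset.mem_erase]
    refine ⟨?_, Finset.mem_univ z⟩
    rintro rfl
    simp only [Finset.mem_union, Finset.mem_filter, Finset.mem_univ, true_and, lt_irrefl,
      false_or] at hz
    exact lt_asymm h0 hz
  have := Finset.card_le_card hsub
  rw [Finset.card_union_of_disjoint hdisj, Finset.card_erase_of_mem (Finset.mem_univ x),
    Finset.card_univ, Fintype.card_fin] at this
  omega

end Sweep

open EuclideanGeometry Real

/-! ### Heights of points of the plane in a rotating direction -/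

/-- The height of `v` above the line through the origin with angle `t`. -/
noncomputable def height (t : ℝ) (v : EuclideanSpace ℝ (Fin 2)) : ℝ :=
  cos t * v 1 - sin t * v 0

lemma height_sub (t : ℝ) (v v' : EuclideanSpace ℝ (Fin 2)) :
    height t (v - v') = height t v - height t v' := by
  simp only [height, PiLp.sub_apply]
  ring

lemma height_add_pi (t : ℝ) (v : EuclideanSpace ℝ (Fin 2)) : height (t + π) v = -height t v := by
  simp only [height, cos_add_pi, sin_add_pi]
  ring

lemma exists_polar (t : ℝ) (v : EuclideanSpace ℝ (Fin 2)) :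
    ∃ β, -π < β ∧ β ≤ π ∧ (∀ a, height (t + a) v = ‖v‖ * sin (β - a)) ∧
      cos t * v 0 + sin t * v 1 = ‖v‖ * cos β := by
  set z : ℂ := ⟨cos t * v 0 + sin t * v 1, height t v⟩ with hz
  have hn : ‖z‖ = ‖v‖ := by
    rw [Complex.norm_def, EuclideanSpace.norm_eq, Fin.sum_univ_two, Complex.normSq_apply]
    congr 1
    simp only [hz, height, Real.norm_eq_abs, sq_abs]
    linear_combination (v 0 ^ 2 + v 1 ^ 2) * sin_sq_add_cos_sq t
  have hre : ‖v‖ * cos z.arg = cos t * v 0 + sin t * v 1 := by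
    rw [← hn, Complex.norm_mul_cos_arg]
  have him : ‖v‖ * sin z.arg = height t v := by
    rw [← hn, Complex.norm_mul_sin_arg]
  refine ⟨z.arg, Complex.neg_pi_lt_arg z, Complex.arg_le_pi z, fun a => ?_, hre.symm⟩
  rw [sin_sub, mul_sub, ← mul_assoc, ← mul_assoc, hre, him]
  simp only [height, cos_add, sin_add]
  ring

lemma exists_polar_of_pos {t : ℝ} {v : EuclideanSpace ℝ (Fin 2)} (h : 0 < height t v) :
    ∃ β, 0 < β ∧ β < π ∧ 0 < ‖v‖ ∧ (∀ a, height (t + a) v = ‖v‖ * sin (β - a)) ∧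
      cos t * v 0 + sin t * v 1 = ‖v‖ * cos β := by
  obtain ⟨β, h1, h2, h3, h4⟩ := exists_polar t v
  have h0 : 0 < ‖v‖ * sin β := by
    have := h3 0
    rw [add_zero, sub_zero] at this
    rwa [← this]
  have hv : 0 < ‖v‖ := lt_of_le_of_ne (norm_nonneg v) fun he => by simp [← he] at h0
  have hs : 0 < sin β := pos_of_mul_pos_right h0 hv.le
  refine ⟨β, ?_, lt_of_le_of_ne h2 ?_, hv, h3, h4⟩
  · by_contra hb
    exact hs.not_ge (sin_nonpos_of_nonpos_of_neg_pi_le (not_lt.1 hb) h1.le)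
  · rintro rfl
    simp at hs

lemma lt_of_sin_sub_pos {a β : ℝ} (hβ : 0 < β) (ha : a < π) (h : 0 < sin (β - a)) : a < β := by
  by_contra hb
  exact h.not_ge (sin_nonpos_of_nonpos_of_neg_pi_le (by linarith) (by linarith))

lemma height_pos_of_pos_of_pos {t a b : ℝ} {v : EuclideanSpace ℝ (Fin 2)} (ha : 0 ≤ a)
    (hab : a ≤ b) (hb : b < π) (h0 : 0 < height t v) (h1 : 0 < height (t + b) v) :
    0 < height (t + a) v := by
  obtain ⟨β, h2, h3, hv, h4, -⟩ := exists_polar_of_pos h0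
  rw [h4] at h1 ⊢
  have := lt_of_sin_sub_pos h2 hb (pos_of_mul_pos_right h1 hv.le)
  exact mul_pos hv (sin_pos_of_pos_of_lt_pi (by linarith) (by linarith))

/-- Vectors in an open cone of width `π - h` enclose an angle smaller than `π - h`. -/
lemma angle_lt_of_height_pos {t h : ℝ} (hh : 0 ≤ h) (hπ : h < π) {u v : EuclideanSpace ℝ (Fin 2)}
    (hu : 0 < height t u) (hu' : 0 < height (t + h) u) (hv : 0 < height t v)
    (hv' : 0 < height (t + h) v) : InnerProductGeometry.angle u v < π - h := by
  obtain ⟨β, h1, h2, hun, h3, h4⟩ := exists_polar_of_pos hu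
  obtain ⟨γ, g1, g2, hvn, g3, g4⟩ := exists_polar_of_pos hv
  rw [h3] at hu'
  rw [g3] at hv'
  have hβ := lt_of_sin_sub_pos h1 hπ (pos_of_mul_pos_right hu' hun.le)
  have hγ := lt_of_sin_sub_pos g1 hπ (pos_of_mul_pos_right hv' hvn.le)
  have hinner : inner ℝ u v = ‖u‖ * ‖v‖ * cos (β - γ) := by
    have h5 : height t u = ‖u‖ * sin β := by simpa using h3 0
    have g5 : height t v = ‖v‖ * sin γ := by simpa using g3 0
    have : inner ℝ u v = (cos t * u 0 + sin t * u 1) * (cos t * v 0 + sin t * v 1) +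
        height t u * height t v := by
      simp only [PiLp.inner_apply, Fin.sum_univ_two, height, RCLike.inner_apply, conj_trivial]
      linear_combination (-(u 0 * v 0 + u 1 * v 1)) * sin_sq_add_cos_sq t
    rw [this, h4, g4, h5, g5, cos_sub]
    ring
  have habs : |β - γ| < π - h := abs_lt.2 ⟨by linarith, by linarith⟩
  rw [InnerProductGeometry.angle, hinner, mul_div_cancel_left₀ _ (by positivity), ← cos_abs,
    arccos_cos (abs_nonneg _) (by linarith)]
  exact habs

/-- Two vectors that lie, up to sign, in a cone of width `π / 2 - w` are far from orthogonal. -/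
lemma le_abs_angle_sub_of_height {t h w : ℝ} (hw : 0 < w) (hh : π / 2 + w ≤ h) (hπ : h < π)
    {u v : EuclideanSpace ℝ (Fin 2)}
    (hu : (0 < height t u ∧ 0 < height (t + h) u) ∨ (0 < height t (-u) ∧ 0 < height (t + h) (-u)))
    (hv : (0 < height t v ∧ 0 < height (t + h) v) ∨
      (0 < height t (-v) ∧ 0 < height (t + h) (-v))) :
    w ≤ |InnerProductGeometry.angle u v - π / 2| := by
  have h0 : 0 ≤ h := by linarith [pi_pos]
  rcases hu with ⟨hu, hu'⟩ | ⟨hu, hu'⟩ <;> rcases hv with ⟨hv, hv'⟩ | ⟨hv, hv'⟩ <;>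
    have := angle_lt_of_height_pos h0 hπ hu hu' hv hv'
  · rw [abs_of_neg] <;> linarith
  · rw [InnerProductGeometry.angle_neg_right] at this
    rw [abs_of_pos] <;> linarith
  · rw [InnerProductGeometry.angle_neg_left] at this
    rw [abs_of_pos] <;> linarith
  · rw [InnerProductGeometry.angle_neg_neg] at this
    rw [abs_of_neg] <;> linarith

lemma exists_int_of_sin_mul_sin_neg {a w : ℝ} (hw : 0 < w)
    (h : sin a * sin (a - w) < 0) : ∃ n : ℤ, 0 < a + n * π ∧ a + n * π < w := by
  obtain ⟨n, ⟨h1, h2⟩, -⟩ := existsUnique_add_zsmul_mem_Ico pi_pos a 0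
  rw [zsmul_eq_mul] at h1 h2
  have key : sin (a + n * π) * sin (a + n * π - w) = sin a * sin (a - w) := by
    rw [show a + n * π - w = a - w + n * π by ring, sin_add_int_mul_pi, sin_add_int_mul_pi]
    have : ((-1 : ℝ) ^ n) * (-1) ^ n = 1 := by
      rw [← mul_zpow]; simp
    linear_combination (sin a * sin (a - w)) * this
  rw [← key] at h
  refine ⟨n, lt_of_le_of_ne h1 fun he => ?_, ?_⟩
  · rw [← he] at h
    simp at h
  · by_contra hc
    exact h.not_ge (mul_nonneg (sin_nonneg_of_nonneg_of_le_pi h1 (by linarith))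
      (sin_nonneg_of_nonneg_of_le_pi (by linarith) (by linarith)))

/-! ### Choice of the initial direction -/

lemma exists_sparse_arc {ι : Type*} (E : Finset ι) (α : ι → ℝ) {w : ℝ} (hw : 0 < w)
    (hE : E.card * w < π) {N : Set ℝ} (hN : N.Countable) :
    ∃ t ∉ N, ∀ e ∈ E, ∀ e' ∈ E, ∀ n m : ℤ, 0 < α e - t + n * (π / 2) → α e - t + n * (π / 2) < w →
      0 < α e' - t + m * (π / 2) → α e' - t + m * (π / 2) < w → e = e' := by
  classical
  have : Fact (0 < π / 2) := ⟨by positivity⟩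
  let B : ι → Set (AddCircle (π / 2)) := fun e =>
    Metric.closedBall ((α e - w / 2 : ℝ) : AddCircle (π / 2)) (w / 2)
  have hBm : ∀ e, MeasurableSet (B e) := fun e => Metric.isClosed_closedBall.measurableSet
  have hB : ∀ e, MeasureTheory.volume (B e) ≤ ENNReal.ofReal w := fun e => by
    rw [AddCircle.volume_closedBall]
    exact ENNReal.ofReal_le_ofReal (by rw [mul_div_cancel₀ _ two_ne_zero]; exact min_le_right _ _)
  have : MeasureTheory.NullSingletonClass
      (MeasureTheory.volume : MeasureTheory.Measure (AddCircle (π / 2))) :=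
    ⟨fun x => by
      rw [← Metric.closedBall_zero, AddCircle.volume_closedBall, mul_zero, ENNReal.ofReal_eq_zero]
      exact min_le_right _ _⟩
  have hnull : MeasureTheory.volume ((fun t : ℝ => (t : AddCircle (π / 2))) '' N) = 0 :=
    (hN.image _).measure_zero _
  have hex : ∃ x : AddCircle (π / 2), x ∉ (fun t : ℝ => (t : AddCircle (π / 2))) '' N ∧
      ∑ e ∈ E, (B e).indicator (1 : AddCircle (π / 2) → ENNReal) x < 2 := by
    by_contra! hc
    have hle : ∫⁻ _ : AddCircle (π / 2), 2 ≤
        ∫⁻ x, ∑ e ∈ E, (B e).indicator (1 : AddCircle (π / 2) → ENNReal) x := by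
      refine MeasureTheory.lintegral_mono_ae ?_
      filter_upwards [MeasureTheory.measure_eq_zero_iff_ae_notMem.1 hnull] with x hx
      exact hc x hx
    rw [MeasureTheory.lintegral_const, AddCircle.measure_univ,
      MeasureTheory.lintegral_finsetSum _ fun e _ => measurable_one.indicator (hBm e)] at hle
    simp only [MeasureTheory.lintegral_indicator_one (hBm _)] at hle
    have h2 := hle.trans ((Finset.sum_le_sum fun e _ => hB e).trans_eq (by
      rw [Finset.sum_const, nsmul_eq_mul]))
    rw [← ENNReal.ofReal_natCast, ← ENNReal.ofReal_mul (by positivity), ← ENNReal.ofReal_ofNat,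
      ← ENNReal.ofReal_mul (by positivity), ENNReal.ofReal_le_ofReal_iff (by positivity)] at h2
    linarith
  obtain ⟨x, hxN, hx⟩ := hex
  obtain ⟨t, rfl⟩ := QuotientAddGroup.mk_surjective x
  refine ⟨t, fun ht => hxN ⟨t, ht, rfl⟩, fun e he e' he' n m h1 h2 h3 h4 => ?_⟩
  have hmem : ∀ e, ∀ n : ℤ, 0 < α e - t + n * (π / 2) → α e - t + n * (π / 2) < w →
      (t : AddCircle (π / 2)) ∈ B e := by
    intro e n h1 h2
    have : (t : AddCircle (π / 2)) = ((t - n * (π / 2) : ℝ) : AddCircle (π / 2)) := by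
      rw [AddCircle.coe_sub, ← zsmul_eq_mul, AddCircle.coe_zsmul, AddCircle.coe_period, smul_zero,
        sub_zero]
    rw [Metric.mem_closedBall, dist_eq_norm, this, ← AddCircle.coe_sub]
    refine (QuotientAddGroup.norm_mk_le_norm).trans ?_
    rw [Real.norm_eq_abs, abs_le]
    constructor <;> linarith
  by_contra hne
  refine hx.not_ge ?_
  calc (2 : ENNReal) = ∑ a ∈ {e, e'}, (B a).indicator (1 : AddCircle (π / 2) → ENNReal) t := by
        rw [Finset.sum_pair hne, Set.indicator_of_mem (hmem e n h1 h2),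
          Set.indicator_of_mem (hmem e' m h3 h4), Pi.one_apply, one_add_one_eq_two]
    _ ≤ _ := Finset.sum_le_sum_of_subset (by
        intro a ha
        rcases Finset.mem_insert.1 ha with rfl | ha
        · exact he
        · rwa [Finset.mem_singleton.1 ha])

/-! ### The sequence of directions -/

/-- Angles of the directions: each quarter turn is cut into a cell of width `w` and thirteen
further cells of equal width. -/
noncomputable def offset (w : ℝ) (s : ℕ) : ℝ :=
  (π / 2 - w) / 13 * s + (w - (π / 2 - w) / 13) * ((s + 13) / 14 : ℕ)

lemma offset_add_twentyeight (w : ℝ) (s : ℕ) : offset w (s + 28) = offset w s + π := by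
  simp only [offset, show (s + 28 + 13) / 14 = (s + 13) / 14 + 2 by omega]
  push_cast
  ring

lemma offset_add_fourteen (w : ℝ) (s : ℕ) : offset w (s + 14) = offset w s + π / 2 := by
  simp only [offset, show (s + 14 + 13) / 14 = (s + 13) / 14 + 1 by omega]
  push_cast
  ring

lemma offset_fourteen_mul (w : ℝ) (k : ℕ) : offset w (14 * k) = k * (π / 2) := by
  simp only [offset, show (14 * k + 13) / 14 = k by omega]
  push_cast
  ring

lemma offset_fourteen_mul_add_one (w : ℝ) (k : ℕ) :
    offset w (14 * k + 1) = k * (π / 2) + w := by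
  simp only [offset, show (14 * k + 1 + 13) / 14 = k + 1 by omega]
  push_cast
  ring

lemma offset_add_le_succ {w : ℝ} (hw : 14 * w ≤ π / 2) (s : ℕ) :
    offset w s + w ≤ offset w (s + 1) := by
  have h : (s + 1 + 13) / 14 = (s + 13) / 14 ∨ (s + 1 + 13) / 14 = (s + 13) / 14 + 1 := by omega
  rcases h with h | h <;> simp only [offset, h] <;> push_cast <;> linarith

lemma offset_strictMono {w : ℝ} (hw0 : 0 < w) (hw : 14 * w ≤ π / 2) : StrictMono (offset w) :=
  strictMono_nat_of_lt_succ fun s => by linarith [offset_add_le_succ hw s]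

/-! ### Sweeping ten points -/

lemma exists_sweep (Q : Fin 10 → EuclideanSpace ℝ (Fin 2)) (hQ : Function.Injective Q) {w : ℝ}
    (hw0 : 0 < w) (hw : 45 * w < π)
    (hangle : ∀ T : Finset (Fin 10), T.card = 4 → ∃ a ∈ T, ∃ b ∈ T, ∃ c ∈ T, a ≠ b ∧ b ≠ c ∧
      |∠ (Q a) (Q b) (Q c) - π / 2| < w) :
    ∃ f, Sweep f := by
  have hw14 : 14 * w ≤ π / 2 := by linarith
  have hmono := offset_strictMono hw0 hw14
  choose α _ _ hα _ using fun e : Fin 10 × Fin 10 => exists_polar 0 (Q e.2 - Q e.1)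
  simp only [zero_add] at hα
  obtain ⟨t, htN, ht⟩ := exists_sparse_arc (Finset.univ.filter fun e : Fin 10 × Fin 10 => e.1 < e.2)
    α hw0 (by rw [show (Finset.univ.filter fun e : Fin 10 × Fin 10 => e.1 < e.2).card = 45 by
      decide]; exact_mod_cast hw)
    (Set.countable_range fun p : (Fin 10 × Fin 10) × ℕ × ℤ =>
      α p.1 - offset w p.2.1 - p.2.2 * π)
  have hpos : ∀ s x y, height s (Q x) < height s (Q y) → 0 < height s (Q y - Q x) :=
    fun s x y h => by rw [height_sub]; linarith
  have hswap : ∀ k x y,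
      height (t + offset w (14 * k)) (Q x) < height (t + offset w (14 * k)) (Q y) →
      height (t + offset w (14 * k + 1)) (Q y) < height (t + offset w (14 * k + 1)) (Q x) →
      ∃ e ∈ Finset.univ.filter fun e : Fin 10 × Fin 10 => e.1 < e.2, s(e.1, e.2) = s(x, y) ∧
        ∃ n : ℤ, 0 < α e - t + ((2 * n - k : ℤ) : ℝ) * (π / 2) ∧
          α e - t + ((2 * n - k : ℤ) : ℝ) * (π / 2) < w := by
    intro k x y h0 h1
    have hne : x ≠ y := by rintro rfl; exact h0.false
    have hneg : height (t + offset w (14 * k)) (Q y - Q x) *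
        height (t + offset w (14 * k + 1)) (Q y - Q x) < 0 := by
      rw [height_sub, height_sub]
      exact mul_neg_of_pos_of_neg (by linarith) (by linarith)
    obtain ⟨e, he, hexy, hen⟩ : ∃ e ∈ Finset.univ.filter fun e : Fin 10 × Fin 10 => e.1 < e.2,
        s(e.1, e.2) = s(x, y) ∧ height (t + offset w (14 * k)) (Q e.2 - Q e.1) *
        height (t + offset w (14 * k + 1)) (Q e.2 - Q e.1) < 0 := by
      rcases lt_or_gt_of_ne hne with hxy | hxy
      · exact ⟨(x, y), by simpa using hxy, rfl, hneg⟩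
      · refine ⟨(y, x), by simpa using hxy, Sym2.eq_swap, ?_⟩
        rw [height_sub, height_sub] at hneg ⊢
        linarith
    rw [hα, hα, offset_fourteen_mul, offset_fourteen_mul_add_one] at hen
    have hsin : sin (α e - (t + k * (π / 2))) * sin (α e - (t + k * (π / 2)) - w) < 0 := by
      rw [show α e - (t + k * (π / 2)) - w = α e - (t + (k * (π / 2) + w)) by ring]
      by_contra hc
      refine hen.not_ge ?_
      rw [mul_mul_mul_comm]
      exact mul_nonneg (mul_self_nonneg _) (not_lt.1 hc)
    obtain ⟨n, h2, h3⟩ := exists_int_of_sin_mul_sin_neg hw0 hsin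
    refine ⟨e, he, hexy, n, ?_, ?_⟩ <;> push_cast <;> linarith
  refine ⟨fun s x => height (t + offset w s) (Q x), ⟨?_, ?_, ?_, ?_, ?_⟩⟩
  · intro s x y hxy
    by_contra hne
    have h0 : height (t + offset w s) (Q y - Q x) = 0 := by
      rw [height_sub, sub_eq_zero]; exact hxy.symm
    have := hα (x, y) (t + offset w s)
    rw [h0] at this
    have hn : ‖Q y - Q x‖ ≠ 0 := norm_ne_zero_iff.2 (sub_ne_zero.2 fun h => hne (hQ h).symm)
    obtain ⟨n, hn'⟩ := sin_eq_zero_iff.1 ((mul_eq_zero.1 this.symm).resolve_left hn)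
    exact htN ⟨((x, y), s, n), by simp only; linarith⟩
  · intro s x
    simp only [offset_add_twentyeight, ← add_assoc, height_add_pi]
  · intro s j x y hj h0 h1
    have key := height_pos_of_pos_of_pos (t := t + offset w s) (a := offset w (s + j) - offset w s)
      (b := offset w (s + j + 1) - offset w s) (v := Q y - Q x)
      (by linarith [hmono.monotone (Nat.le_add_right s j)])
      (by linarith [hmono (Nat.lt_succ_self (s + j))])
      (by linarith [hmono (show s + j + 1 < s + 28 by omega), offset_add_twentyeight w s])
      (hpos _ _ _ h0) (by
        rw [show t + offset w s + (offset w (s + j + 1) - offset w s) =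
          t + offset w (s + j + 1) by ring]
        exact hpos _ _ _ h1)
    rw [show t + offset w s + (offset w (s + j) - offset w s) = t + offset w (s + j) by ring,
      height_sub] at key
    linarith
  · intro k l x y z u h1 h2 h3 h4
    obtain ⟨e, he, hexy, n, hn1, hn2⟩ := hswap k x y h1 h2
    obtain ⟨e', he', hezu, m, hm1, hm2⟩ := hswap l z u h3 h4
    obtain rfl := ht e he e' he' _ _ hn1 hn2 hm1 hm2
    refine ⟨hexy.symm.trans hezu, ?_⟩
    have hlt : (2 * n - k : ℤ) - (2 * m - l) < 1 := by
      by_contra hc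
      have : (1 : ℝ) ≤ ((2 * n - k : ℤ) : ℝ) - ((2 * m - l : ℤ) : ℝ) := by
        exact_mod_cast not_lt.1 hc
      nlinarith [pi_pos]
    have hgt : (2 * m - l : ℤ) - (2 * n - k) < 1 := by
      by_contra hc
      have : (1 : ℝ) ≤ ((2 * m - l : ℤ) : ℝ) - ((2 * n - k : ℤ) : ℝ) := by
        exact_mod_cast not_lt.1 hc
      nlinarith [pi_pos]
    omega
  · intro s a b c d hab hab' hbc hbc' hcd hcd'
    set L : Fin 10 → Fin 10 → Prop := fun x y =>
      height (t + offset w s) (Q x) < height (t + offset w s) (Q y) ∧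
      height (t + offset w (s + 15)) (Q x) < height (t + offset w (s + 15)) (Q y)
    have htrans : ∀ x y z, L x y → L y z → L x z := fun x y z h h' =>
      ⟨h.1.trans h'.1, h.2.trans h'.2⟩
    have hLne : ∀ x y, L x y → x ≠ y := by
      rintro x y h rfl
      exact h.1.false
    have l1 : L a b := ⟨hab, hab'⟩
    have l2 : L b c := ⟨hbc, hbc'⟩
    have l3 : L c d := ⟨hcd, hcd'⟩
    have l4 := htrans _ _ _ l1 l2
    have l5 := htrans _ _ _ l2 l3
    have l6 := htrans _ _ _ l4 l3
    have hcard : ({a, b, c, d} : Finset (Fin 10)).card = 4 := by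
      rw [Finset.card_insert_of_notMem (by simp [hLne _ _ l1, hLne _ _ l4, hLne _ _ l6]),
        Finset.card_insert_of_notMem (by simp [hLne _ _ l2, hLne _ _ l5]),
        Finset.card_pair (hLne _ _ l3)]
    have htotal : ∀ x ∈ ({a, b, c, d} : Finset (Fin 10)), ∀ y ∈ ({a, b, c, d} : Finset (Fin 10)),
        x ≠ y → L x y ∨ L y x := by
      intro x hx y hy hne
      simp only [Finset.mem_insert, Finset.mem_singleton] at hx hy
      rcases hx with rfl | rfl | rfl | rfl <;> rcases hy with rfl | rfl | rfl | rfl <;>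
        first
          | exact absurd rfl hne
          | exact .inl (by assumption)
          | exact .inr (by assumption)
    obtain ⟨p, hp, q, hq, r, hr, hpq, hqr, hlt⟩ := hangle _ hcard
    have h14 := offset_add_fourteen w s
    have h15 := offset_add_le_succ hw14 (s + 14)
    have hcone : ∀ x y, L x y ∨ L y x →
        (0 < height (t + offset w s) (Q x - Q y) ∧
          0 < height (t + offset w s + (offset w (s + 15) - offset w s)) (Q x - Q y)) ∨
        (0 < height (t + offset w s) (-(Q x - Q y)) ∧
          0 < height (t + offset w s + (offset w (s + 15) - offset w s)) (-(Q x - Q y))) := by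
      intro x y h
      rw [show t + offset w s + (offset w (s + 15) - offset w s) = t + offset w (s + 15) by ring,
        neg_sub]
      rcases h with h | h
      · exact .inr ⟨hpos _ _ _ h.1, hpos _ _ _ h.2⟩
      · exact .inl ⟨hpos _ _ _ h.1, hpos _ _ _ h.2⟩
    refine hlt.not_ge (le_abs_angle_sub_of_height hw0 ?_ ?_ (hcone p q (htotal p hp q hq hpq))
      (hcone r q (htotal r hr q hq hqr.symm)))
    · linarith
    · linarith [hmono (show s + 15 < s + 28 by omega), offset_add_twentyeight w s]

/-- **Proposition 2.1 (Γ₄(10) ≥ 4°).** Every set of 10 distinct points in the plane has a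
4-element subset all of whose angles deviate from a right angle by at least 4°. -/
theorem gamma_four_ten_ge_four_degrees
    (S : Finset (EuclideanSpace ℝ (Fin 2))) (hS : S.card = 10) :
    ∃ T ⊆ S, T.card = 4 ∧
      ∀ A ∈ T, ∀ B ∈ T, ∀ C ∈ T, A ≠ B → B ≠ C → A ≠ C →
        |∠ A B C - π / 2| ≥ 4 * (π / 180) := by
  by_contra! hc
  let Q : Fin 10 → EuclideanSpace ℝ (Fin 2) := fun n => (S.equivFinOfCardEq hS).symm n
  have hQ : Function.Injective Q :=
    Subtype.val_injective.comp (S.equivFinOfCardEq hS).symm.injective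
  have hev : ∀ᶠ w in nhdsWithin (4 * (π / 180)) (Set.Iio (4 * (π / 180))),
      ∀ p : Fin 10 × Fin 10 × Fin 10, |∠ (Q p.1) (Q p.2.1) (Q p.2.2) - π / 2| < 4 * (π / 180) →
        |∠ (Q p.1) (Q p.2.1) (Q p.2.2) - π / 2| < w := by
    refine Filter.eventually_all.2 fun p => ?_
    by_cases h : |∠ (Q p.1) (Q p.2.1) (Q p.2.2) - π / 2| < 4 * (π / 180)
    · filter_upwards [nhdsWithin_le_nhds (lt_mem_nhds h)] with w hw _ using hw
    · exact .of_forall fun w h' => absurd h' h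
  obtain ⟨w, hw, hw0, hwπ⟩ := (hev.and
    (Ioo_mem_nhdsLT (show (0 : ℝ) < 4 * (π / 180) by positivity))).exists
  obtain ⟨f, hf⟩ := exists_sweep Q hQ hw0 (by linarith) (by
    intro T hT
    obtain ⟨A, hA, B, hB, C, hC, hAB, hBC, -, hlt⟩ := hc (T.map ⟨Q, hQ⟩)
      (fun x hx => by
        obtain ⟨n, -, rfl⟩ := Finset.mem_map.1 hx
        exact ((S.equivFinOfCardEq hS).symm n).2) (by rw [Finset.card_map, hT])
    obtain ⟨a, ha, rfl⟩ := Finset.mem_map.1 hA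
    obtain ⟨b, hb, rfl⟩ := Finset.mem_map.1 hB
    obtain ⟨c, hc, rfl⟩ := Finset.mem_map.1 hC
    exact ⟨a, ha, b, hb, c, hc, fun h => hAB (congrArg _ h), fun h => hBC (congrArg _ h),
      hw (a, b, c) hlt⟩)
  exact hf.false
end

section
/- For every real ε > 0 there exists a set S of 9 distinct points in ℝ² such that every subset T ⊆ S with |T| = 4 contains pairwise distinct points A, B, C with |∠ABC − 90°| < ε. Consequently Γ₄(9) = 0 (and hence Γ₄(n) = 0 for all n ≤ 9). -/
open EuclideanGeometry Real

/-- Two vectors whose inner product is small compared with the product of their norms are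
nearly orthogonal. -/
lemma exists_abs_angle_sub_pi_div_two_lt (ε : ℝ) (hε : 0 < ε) :
    ∃ η > 0, ∀ u v : EuclideanSpace ℝ (Fin 2),
      |inner ℝ u v / (‖u‖ * ‖v‖)| < η → |InnerProductGeometry.angle u v - π / 2| < ε := by
  obtain ⟨η, hη, h⟩ := Metric.continuousAt_iff.1 (Real.continuous_arccos.continuousAt (x := 0)) ε hε
  refine ⟨η, hη, fun u v huv => ?_⟩
  have hdist : dist (inner ℝ u v / (‖u‖ * ‖v‖)) 0 < η := by rwa [Real.dist_0_eq_abs]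
  simpa only [Real.dist_eq, Real.arccos_zero, InnerProductGeometry.angle] using h hdist

/-- A vertical vector and a vector with horizontal extent at least `1` and vertical extent at
most `d` have an angle whose cosine is at most `d`. -/
lemma abs_inner_div_norm_mul_norm_le {u v : EuclideanSpace ℝ (Fin 2)} {d : ℝ}
    (hu : u 0 = 0) (hv : 1 ≤ |v 0|) (hd : |v 1| ≤ d) :
    |inner ℝ u v / (‖u‖ * ‖v‖)| ≤ d := by
  have hd0 : 0 ≤ d := (abs_nonneg _).trans hd
  have hu1 : |u 1| ≤ ‖u‖ := PiLp.norm_apply_le u 1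
  have hv0 : 1 ≤ ‖v‖ := hv.trans (PiLp.norm_apply_le v 0)
  have hinner : inner ℝ u v = u 1 * v 1 := by
    simp [PiLp.inner_apply, Fin.sum_univ_two, hu, mul_comm]
  rw [abs_div, abs_of_nonneg (by positivity : 0 ≤ ‖u‖ * ‖v‖)]
  refine div_le_of_le_mul₀ (by positivity) hd0 ?_
  rw [hinner, abs_mul]
  calc |u 1| * |v 1| ≤ ‖u‖ * d := by gcongr
    _ ≤ d * (‖u‖ * ‖v‖) := by nlinarith [mul_nonneg hd0 (norm_nonneg u)]

/-- Four cells of a `3 × 3` grid contain two in a common column and a third one in a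
different column. -/
lemma exists_fst_eq_and_fst_ne {T : Finset (Fin 3 × Fin 3)} (hT : T.card = 4) :
    ∃ a ∈ T, ∃ b ∈ T, ∃ c ∈ T, a ≠ b ∧ a.1 = b.1 ∧ c.1 ≠ b.1 := by
  obtain ⟨a, ha, b, hb, hab, h⟩ := Finset.exists_ne_map_eq_of_card_lt_of_maps_to
    (s := T) (t := Finset.univ) (f := Prod.fst) (by simp [hT]) (by simp)
  by_contra! hcon
  have hcol : ∀ c ∈ T, c.1 = b.1 := fun c hc => hcon a ha b hb c hc hab h
  have hcard : T.card ≤ (Finset.univ : Finset (Fin 3)).card :=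
    Finset.card_le_card_of_injOn Prod.snd (by simp) fun x hx y hy hxy =>
      Prod.ext ((hcol x hx).trans (hcol y hy).symm) hxy
  simp [hT] at hcard

/-- The point of the `3 × 3` grid with column spacing `1` and row spacing `δ` at a given cell. -/
noncomputable def gridPoint (δ : ℝ) (a : Fin 3 × Fin 3) : EuclideanSpace ℝ (Fin 2) :=
  !₂[((a.1 : ℕ) : ℝ), δ * ((a.2 : ℕ) : ℝ)]

lemma gridPoint_injective {δ : ℝ} (hδ : 0 < δ) : Function.Injective (gridPoint δ) := by
  intro a b h
  have h0 := congrArg (fun p : EuclideanSpace ℝ (Fin 2) => p 0) h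
  have h1 := congrArg (fun p : EuclideanSpace ℝ (Fin 2) => p 1) h
  simp only [gridPoint, PiLp.toLp_apply, Matrix.cons_val_zero, Matrix.cons_val_one,
    Nat.cast_inj, mul_eq_mul_left_iff, hδ.ne', or_false] at h0 h1
  exact Prod.ext (Fin.ext h0) (Fin.ext h1)

lemma one_le_abs_sub_of_fin_ne {i j : Fin 3} (h : i ≠ j) :
    (1 : ℝ) ≤ |((i : ℕ) : ℝ) - ((j : ℕ) : ℝ)| := by
  fin_cases i <;> fin_cases j <;> first | exact absurd rfl h | norm_num

lemma abs_sub_fin_three_le (i j : Fin 3) : |((i : ℕ) : ℝ) - ((j : ℕ) : ℝ)| ≤ 2 := by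
  fin_cases i <;> fin_cases j <;> norm_num

/-- **Γ₄(9) = 0.** For every ε > 0 there is a set of 9 distinct points in the plane such
that every 4-element subset contains three pairwise distinct points forming an angle
within ε of a right angle. -/
theorem gamma_four_nine_eq_zero (ε : ℝ) (hε : 0 < ε) :
    ∃ S : Finset (EuclideanSpace ℝ (Fin 2)), S.card = 9 ∧
      ∀ T ⊆ S, T.card = 4 →
        ∃ A ∈ T, ∃ B ∈ T, ∃ C ∈ T, A ≠ B ∧ B ≠ C ∧ A ≠ C ∧
          |∠ A B C - π / 2| < ε := by
  classical
  obtain ⟨η, hη, hangle⟩ := exists_abs_angle_sub_pi_div_two_lt ε hε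
  obtain ⟨δ, hδ, hδη⟩ : ∃ δ : ℝ, 0 < δ ∧ δ * 2 < η := ⟨η / 3, by positivity, by linarith⟩
  have hinj := gridPoint_injective hδ
  refine ⟨Finset.univ.image (gridPoint δ), by simp [Finset.card_image_of_injective _ hinj], ?_⟩
  intro T hTS hT
  obtain ⟨U, -, rfl⟩ := Finset.subset_image_iff.1 hTS
  rw [Finset.card_image_of_injective _ hinj] at hT
  obtain ⟨a, ha, b, hb, c, hc, hab, hcol, hne⟩ := exists_fst_eq_and_fst_ne hT
  refine ⟨_, Finset.mem_image_of_mem _ ha, _, Finset.mem_image_of_mem _ hb,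
    _, Finset.mem_image_of_mem _ hc, hinj.ne hab, hinj.ne ?_, hinj.ne ?_, ?_⟩
  · rintro rfl
    exact hne rfl
  · rintro rfl
    exact hne hcol
  · refine hangle _ _ ((abs_inner_div_norm_mul_norm_le ?_ ?_ ?_).trans_lt hδη)
    · simp [gridPoint, hcol]
    · simpa [gridPoint] using one_le_abs_sub_of_fin_ne hne
    · simpa [gridPoint, ← mul_sub, abs_mul, abs_of_pos hδ] using
        mul_le_mul_of_nonneg_left (abs_sub_fin_three_le c.2 b.2) hδ.le
end

section
/- For every integer k ≥ 3, every set S of (k−1)² + 1 distinct points in ℝ² contains a subset T ⊆ S with |T| = k such that no three pairwise distinct points A, B, C ∈ T satisfy ∠ABC = 90°. Consequently r(k) ≤ (k−1)² + 1. -/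
open EuclideanGeometry Real

/-- **Erdős–Szekeres**, for a finite set carrying two injective labellings. -/
lemma Finset.exists_subset_monotone_or_antitone {α β γ : Type*} [LinearOrder β] [LinearOrder γ]
    (f : α → β) (g : α → γ) (n m : ℕ) (S : Finset α)
    (hf : Set.InjOn f S) (hg : Set.InjOn g S) (hS : n * m < S.card) :
    (∃ T ⊆ S, T.card = n + 1 ∧ ∀ p ∈ T, ∀ q ∈ T, f p < f q → g p < g q) ∨
      ∃ T ⊆ S, T.card = m + 1 ∧ ∀ p ∈ T, ∀ q ∈ T, f p < f q → g q < g p := by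
  classical
  induction n generalizing S with
  | zero =>
    obtain ⟨p, hp⟩ := Finset.card_pos.1 (by simpa using hS)
    refine Or.inl ⟨{p}, by simpa using hp, by simp, ?_⟩
    simp
  | succ n ih =>
    -- the minimal elements of the product order
    set M := S.filter fun p => ∀ q ∈ S, f q < f p → g p < g q with hM
    have hMS : M ⊆ S := Finset.filter_subset _ _
    rcases Nat.lt_or_ge m M.card with hm | hm
    · obtain ⟨T, hTM, hT⟩ := Finset.exists_subset_card_eq (Nat.succ_le_of_lt hm)
      exact Or.inr ⟨T, hTM.trans hMS, hT, fun p hp q hq h =>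
        (Finset.mem_filter.1 (hTM hq)).2 p (hMS (hTM hp)) h⟩
    · have hsub : S \ M ⊆ S := Finset.sdiff_subset
      have hcard : n * m < (S \ M).card := by
        rw [Finset.card_sdiff_of_subset hMS]
        rw [Nat.succ_mul] at hS
        omega
      rcases ih (S \ M) (hf.mono (by exact_mod_cast hsub)) (hg.mono (by exact_mod_cast hsub)) hcard
        with ⟨T, hTS, hT, hmono⟩ | ⟨T, hTS, hT, hanti⟩
      · obtain ⟨p, hpT, hpmin⟩ := T.exists_min_image f (Finset.card_pos.1 (by omega))
        obtain ⟨hpS, hpM⟩ := Finset.mem_sdiff.1 (hTS hpT)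
        obtain ⟨q, hqS, hqf, hqg⟩ : ∃ q ∈ S, f q < f p ∧ g q ≤ g p := by
          simpa [hM, hpS] using hpM
        have hqg : g q < g p := hqg.lt_of_ne fun h => hqf.ne (congrArg f (hg hqS hpS h))
        have hbelow : ∀ t ∈ T, g q < g t := fun t ht => by
          rcases (hpmin t ht).eq_or_lt with h | h
          · rwa [← hf hpS (hsub (hTS ht)) h]
          · exact hqg.trans (hmono p hpT t ht h)
        have hqT : q ∉ T := fun h => (hpmin q h).not_gt hqf
        refine Or.inl ⟨insert q T, Finset.insert_subset hqS (hTS.trans hsub),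
          by rw [Finset.card_insert_of_notMem hqT, hT], fun a ha b hb hab => ?_⟩
        rcases Finset.mem_insert.1 ha with rfl | haT <;>
          rcases Finset.mem_insert.1 hb with rfl | hbT
        · exact absurd hab (lt_irrefl _)
        · exact hbelow b hbT
        · exact absurd (hqf.trans_le (hpmin a haT)) hab.not_gt
        · exact hmono a haT b hbT hab
      · exact Or.inr ⟨T, hTS.trans hsub, hT, hanti⟩

/-- Some rotation of the axes, with directions `(1, t)` and `(-t, 1)`, gives the points of a finite
set pairwise distinct first and pairwise distinct second coordinates. -/
lemma exists_injOn_rotated_coordinates (S : Finset (EuclideanSpace ℝ (Fin 2))) :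
    ∃ t : ℝ, Set.InjOn (fun p : EuclideanSpace ℝ (Fin 2) => p 0 + t * p 1) S ∧
      Set.InjOn (fun p : EuclideanSpace ℝ (Fin 2) => p 1 - t * p 0) S := by
  classical
  obtain ⟨t, ht⟩ := Infinite.exists_notMem_finset
    (((S ×ˢ S).image fun x => -(x.1 0 - x.2 0) / (x.1 1 - x.2 1)) ∪
      (S ×ˢ S).image fun x => (x.1 1 - x.2 1) / (x.1 0 - x.2 0))
  rw [Finset.mem_union, not_or] at ht
  refine ⟨t, fun p hp q hq h => ?_, fun p hp q hq h => ?_⟩ <;> dsimp only at h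
  · have h1 : p 1 - q 1 = 0 := by
      by_contra h1
      refine ht.1 (Finset.mem_image.2 ⟨(p, q), Finset.mk_mem_product hp hq, ?_⟩)
      rw [div_eq_iff h1]
      linarith
    ext i
    fin_cases i
    · change p 0 = q 0
      linear_combination h - t * h1
    · exact sub_eq_zero.1 h1
  · have h0 : p 0 - q 0 = 0 := by
      by_contra h0
      refine ht.2 (Finset.mem_image.2 ⟨(p, q), Finset.mk_mem_product hp hq, ?_⟩)
      rw [div_eq_iff h0]
      linarith
    ext i
    fin_cases i
    · exact sub_eq_zero.1 h0
    · change p 1 = q 1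
      linear_combination h + t * h0

/-- If, in rotated axes, `A - B` and `C - B` both lie in the open quadrants I and III, or both in
II and IV, then the angle at `B` is not right. -/
lemma angle_ne_pi_div_two_of_rotated_coordinates {t : ℝ} {A B C : EuclideanSpace ℝ (Fin 2)}
    (h : 0 < (((A 0 + t * A 1) - (B 0 + t * B 1)) * ((A 1 - t * A 0) - (B 1 - t * B 0))) *
      (((C 0 + t * C 1) - (B 0 + t * B 1)) * ((C 1 - t * C 0) - (B 1 - t * B 0)))) :
    ∠ A B C ≠ π / 2 := by
  intro hangle
  rw [EuclideanGeometry.angle,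
    ← InnerProductGeometry.inner_eq_zero_iff_angle_eq_pi_div_two] at hangle
  simp only [vsub_eq_sub, PiLp.inner_apply, Fin.sum_univ_two, PiLp.sub_apply, RCLike.inner_apply,
    conj_trivial] at hangle
  set x := ((A 0 + t * A 1) - (B 0 + t * B 1)) * ((C 0 + t * C 1) - (B 0 + t * B 1)) with hx
  set y := ((A 1 - t * A 0) - (B 1 - t * B 0)) * ((C 1 - t * C 0) - (B 1 - t * B 0)) with hy
  have hxy : x + y = 0 := by
    rw [hx, hy]
    linear_combination (1 + t ^ 2) * hangle
  have hpos : 0 < x * y := by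
    rw [hx, hy]
    linarith
  rw [eq_neg_of_add_eq_zero_right hxy] at hpos
  linarith [mul_self_nonneg x]

/-- **r(k) ≤ (k−1)² + 1.** Every set of (k−1)² + 1 distinct points in the plane (k ≥ 3)
contains a k-element subset with no right angles. -/
theorem rk_le_sq (k : ℕ) (hk : 3 ≤ k)
    (S : Finset (EuclideanSpace ℝ (Fin 2))) (hS : S.card = (k - 1) ^ 2 + 1) :
    ∃ T ⊆ S, T.card = k ∧
      ∀ A ∈ T, ∀ B ∈ T, ∀ C ∈ T, A ≠ B → B ≠ C → A ≠ C →
        ∠ A B C ≠ π / 2 := by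
  obtain ⟨t, hf, hg⟩ := exists_injOn_rotated_coordinates S
  have hcard : (k - 1) * (k - 1) < S.card := by rw [hS, sq]; exact Nat.lt_succ_self _
  have hk' : k - 1 + 1 = k := by omega
  rcases Finset.exists_subset_monotone_or_antitone _ _ (k - 1) (k - 1) S hf hg hcard
    with ⟨T, hTS, hT, h⟩ | ⟨T, hTS, hT, h⟩ <;>
  refine ⟨T, hTS, hT.trans hk', fun A hA B hB C hC hAB hBC _ =>
    angle_ne_pi_div_two_of_rotated_coordinates (t := t) ?_⟩
  · have key : ∀ P ∈ T, P ≠ B →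
        0 < ((P 0 + t * P 1) - (B 0 + t * B 1)) * ((P 1 - t * P 0) - (B 1 - t * B 0)) := by
      intro P hP hPB
      rcases lt_or_gt_of_ne (hf.ne (hTS hP) (hTS hB) hPB) with hlt | hlt
      · exact mul_pos_of_neg_of_neg (sub_neg.2 hlt) (sub_neg.2 (h P hP B hB hlt))
      · exact mul_pos (sub_pos.2 hlt) (sub_pos.2 (h B hB P hP hlt))
    exact mul_pos (key A hA hAB) (key C hC hBC.symm)
  · have key : ∀ P ∈ T, P ≠ B →
        ((P 0 + t * P 1) - (B 0 + t * B 1)) * ((P 1 - t * P 0) - (B 1 - t * B 0)) < 0 := by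
      intro P hP hPB
      rcases lt_or_gt_of_ne (hf.ne (hTS hP) (hTS hB) hPB) with hlt | hlt
      · exact mul_neg_of_neg_of_pos (sub_neg.2 hlt) (sub_pos.2 (h P hP B hB hlt))
      · exact mul_neg_of_pos_of_neg (sub_pos.2 hlt) (sub_neg.2 (h B hB P hP hlt))
    exact mul_pos_of_neg_of_neg (key A hA hAB) (key C hC hBC.symm)
end

section
/- For all integers m ≥ 2 and k ≥ 3, every set S of at least (k−1)^m + 1 distinct points in ℝ² contains a subset T ⊆ S with |T| = k such that for all pairwise distinct A, B, C ∈ T, either ∠ABC ≤ 180°/m or ∠ABC ≥ 180° − 180°/m. -/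
open EuclideanGeometry Real

/-- The Erdős–Szekeres pigeonhole argument for a family of transitive relations that together
compare any two distinct points. -/
theorem exists_chain_of_pow_lt_card {α ι : Type*} [Fintype ι] (r : ι → α → α → Prop)
    (hirr : ∀ i x, ¬ r i x x) (htrans : ∀ i x y z, r i x y → r i y z → r i x z)
    (n : ℕ) (S : Finset α) (hcomp : ∀ x ∈ S, ∀ y ∈ S, x ≠ y → ∃ i, r i x y ∨ r i y x)
    (hS : n ^ Fintype.card ι < S.card) :
    ∃ i, ∃ T ⊆ S, T.card = n + 1 ∧ ∀ x ∈ T, ∀ y ∈ T, x ≠ y → r i x y ∨ r i y x := by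
  classical
  by_contra! hno
  let chains (i : ι) (p : α) : Finset (Finset α) := S.powerset.filter fun T =>
    p ∈ T ∧ (∀ x ∈ T, x ≠ p → r i x p) ∧ ∀ x ∈ T, ∀ y ∈ T, x ≠ y → r i x y ∨ r i y x
  let height (p : α) (i : ι) : ℕ := (chains i p).sup Finset.card
  have hle (p : α) (i : ι) : height p i ≤ n := by
    refine Finset.sup_le fun T hT => ?_
    simp only [chains, Finset.mem_filter, Finset.mem_powerset] at hT
    obtain ⟨hTS, -, -, hT⟩ := hT
    by_contra! hlt
    obtain ⟨U, hUT, hU⟩ := Finset.exists_subset_card_eq (Nat.succ_le_of_lt hlt)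
    obtain ⟨x, hx, y, hy, hxy, h1, h2⟩ := hno i U (hUT.trans hTS) hU
    exact (hT x (hUT hx) y (hUT hy) hxy).elim h1 h2
  have hsingle (p : α) (hp : p ∈ S) (i : ι) : {p} ∈ chains i p := by
    simp [chains, hp]
  have hpos (p : α) (hp : p ∈ S) (i : ι) : 1 ≤ height p i :=
    Finset.le_sup (f := Finset.card) (hsingle p hp i)
  have hlt (p : α) (hp : p ∈ S) (q : α) (hq : q ∈ S) (i : ι) (hpq : r i p q) :
      height p i < height q i := by
    obtain ⟨T, hT, hTc⟩ := Finset.exists_mem_eq_sup (chains i p) ⟨_, hsingle p hp i⟩ Finset.card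
    simp only [chains, Finset.mem_filter, Finset.mem_powerset] at hT
    obtain ⟨hTS, hpT, htop, hT⟩ := hT
    have hbelow (x : α) (hx : x ∈ T) : r i x q := by
      by_cases hxp : x = p
      · exact hxp ▸ hpq
      · exact htrans i _ _ _ (htop x hx hxp) hpq
    have hqT : q ∉ T := fun h => hirr i q (hbelow q h)
    have hmem : insert q T ∈ chains i q := by
      simp only [chains, Finset.mem_filter, Finset.mem_powerset]
      refine ⟨Finset.insert_subset hq hTS, Finset.mem_insert_self _ _, ?_, ?_⟩
      · intro x hx hxq
        exact hbelow x ((Finset.mem_insert.1 hx).resolve_left hxq)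
      · intro x hx y hy hxy
        rcases Finset.mem_insert.1 hx with rfl | hxT <;>
          rcases Finset.mem_insert.1 hy with rfl | hyT
        · exact absurd rfl hxy
        · exact Or.inr (hbelow y hyT)
        · exact Or.inl (hbelow x hxT)
        · exact hT x hxT y hyT hxy
    have := Finset.le_sup (f := Finset.card) hmem
    rw [Finset.card_insert_of_notMem hqT] at this
    change (chains i p).sup Finset.card < (chains i q).sup Finset.card
    omega
  have hcard : (Fintype.piFinset fun _ : ι => Finset.Icc 1 n).card < S.card := by
    simpa using hS
  obtain ⟨x, hx, y, hy, hxy, heq⟩ :=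
    Finset.exists_ne_map_eq_of_card_lt_of_maps_to hcard (f := height) fun p hp => by
      exact Fintype.mem_piFinset.2 fun i => Finset.mem_Icc.2 ⟨hpos p hp i, hle p i⟩
  obtain ⟨i, h | h⟩ := hcomp x hx y hy hxy
  · exact (hlt x hx y hy i h).ne (congrFun heq i)
  · exact (hlt y hy x hx i h).ne (congrFun heq i).symm

/-- The half-open angular sector of nonzero complex numbers with argument in `[a, b)`. -/
def angularSector (a b : ℝ) : Set ℂ := {z | z ≠ 0 ∧ a ≤ z.arg ∧ z.arg < b}

theorem Complex.le_arg_iff_of_arg_mem_Ico {z : ℂ} (hz : z ≠ 0) (h0 : 0 ≤ z.arg) (hpi : z.arg < π)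
    {c : ℝ} (hc0 : 0 ≤ c) (hcpi : c < π) :
    c ≤ z.arg ↔ 0 ≤ z.im * Real.cos c - z.re * Real.sin c := by
  have hform : z.im * Real.cos c - z.re * Real.sin c = ‖z‖ * Real.sin (z.arg - c) := by
    rw [Real.sin_sub]
    linear_combination (-Real.cos c) * Complex.norm_mul_sin_arg z +
      Real.sin c * Complex.norm_mul_cos_arg z
  have hn : 0 < ‖z‖ := norm_pos_iff.2 hz
  rw [hform, mul_nonneg_iff_of_pos_left hn]
  constructor
  · intro h
    exact Real.sin_nonneg_of_nonneg_of_le_pi (by linarith) (by linarith)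
  · intro h
    by_contra! hlt
    exact (Real.sin_neg_of_neg_of_neg_pi_lt (by linarith) (by linarith)).not_ge h

theorem add_mem_angularSector {a b : ℝ} (ha : 0 ≤ a) (hb : b ≤ π) {z w : ℂ}
    (hz : z ∈ angularSector a b) (hw : w ∈ angularSector a b) : z + w ∈ angularSector a b := by
  obtain ⟨hz0, hza, hzb⟩ := hz
  obtain ⟨hw0, hwa, hwb⟩ := hw
  have hzpi := hzb.trans_le hb
  have hwpi := hwb.trans_le hb
  have hzn := ha.trans hza
  have hwn := ha.trans hwa
  have hzi := Complex.arg_nonneg_iff.1 hzn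
  have hwi := Complex.arg_nonneg_iff.1 hwn
  have hpos {u : ℂ} (hu0 : u ≠ 0) (hu : 0 ≤ u.im) (hupi : u.arg < π) :
      0 < u.im ∨ u.im = 0 ∧ 0 < u.re := by
    rcases hu.lt_or_eq with h | h
    · exact Or.inl h
    · refine Or.inr ⟨h.symm, ?_⟩
      have hre := (Complex.arg_lt_pi_iff.1 hupi).resolve_right (not_not.2 h.symm)
      exact hre.lt_of_ne fun h' => hu0 (Complex.ext h'.symm h.symm)
  have hsum : 0 < (z + w).im ∨ (z + w).im = 0 ∧ 0 < (z + w).re := by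
    simp only [Complex.add_im, Complex.add_re]
    rcases hpos hz0 hzi hzpi with h | ⟨h, h'⟩ <;> rcases hpos hw0 hwi hwpi with k | ⟨k, k'⟩
    · left; linarith
    · left; linarith
    · left; linarith
    · right; constructor <;> linarith
  have hne : z + w ≠ 0 := by
    intro h
    simp [h] at hsum
  have hn : 0 ≤ (z + w).arg :=
    Complex.arg_nonneg_iff.2 (hsum.elim le_of_lt fun h => h.1.ge)
  have hpi : (z + w).arg < π :=
    Complex.arg_lt_pi_iff.2 (hsum.elim (fun h => Or.inr h.ne') fun h => Or.inl h.2.le)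
  refine ⟨hne, ?_, ?_⟩
  · have hapi := hza.trans_lt hzpi
    rw [Complex.le_arg_iff_of_arg_mem_Ico hz0 hzn hzpi ha hapi] at hza
    rw [Complex.le_arg_iff_of_arg_mem_Ico hw0 hwn hwpi ha hapi] at hwa
    rw [Complex.le_arg_iff_of_arg_mem_Ico hne hn hpi ha hapi, Complex.add_im, Complex.add_re]
    linarith
  · rcases hb.lt_or_eq with hbpi | rfl
    · have hb0 : 0 ≤ b := hzn.trans hzb.le
      rw [← not_le, Complex.le_arg_iff_of_arg_mem_Ico hz0 hzn hzpi hb0 hbpi, not_le] at hzb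
      rw [← not_le, Complex.le_arg_iff_of_arg_mem_Ico hw0 hwn hwpi hb0 hbpi, not_le] at hwb
      rw [← not_le, Complex.le_arg_iff_of_arg_mem_Ico hne hn hpi hb0 hbpi, not_le,
        Complex.add_im, Complex.add_re]
      linarith
    · exact hpi

theorem angle_le_of_mem_angularSector {a b : ℝ} (ha : 0 ≤ a) (hb : b ≤ π) {z w : ℂ}
    (hz : z ∈ angularSector a b) (hw : w ∈ angularSector a b) :
    InnerProductGeometry.angle z w ≤ b - a := by
  obtain ⟨hz0, hza, hzb⟩ := hz
  obtain ⟨hw0, hwa, hwb⟩ := hw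
  have harg : (z / w).arg = z.arg - w.arg := by
    rw [← Complex.arg_coe_angle_toReal_eq_arg (z / w), Complex.arg_div_coe_angle hz0 hw0,
      ← Real.Angle.coe_sub, Real.Angle.toReal_coe_eq_self_iff]
    constructor <;> linarith
  rw [Complex.angle_eq_abs_arg hz0 hw0, harg, abs_le]
  constructor <;> linarith

theorem angle_le_or_ge_of_mem_angularSector {a b : ℝ} (ha : 0 ≤ a) (hb : b ≤ π) {z w : ℂ}
    (hz : z ∈ angularSector a b ∨ -z ∈ angularSector a b)
    (hw : w ∈ angularSector a b ∨ -w ∈ angularSector a b) :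
    InnerProductGeometry.angle z w ≤ b - a ∨ InnerProductGeometry.angle z w ≥ π - (b - a) := by
  rcases hz with hz | hz <;> rcases hw with hw | hw <;>
    have h := angle_le_of_mem_angularSector ha hb hz hw
  · exact Or.inl h
  · rw [InnerProductGeometry.angle_neg_right] at h
    right; linarith
  · rw [InnerProductGeometry.angle_neg_left] at h
    right; linarith
  · rw [InnerProductGeometry.angle_neg_neg] at h
    exact Or.inl h

/-- Every nonzero vector lies, up to sign, in one of the `m` sectors of width `π / m`. -/
theorem exists_mem_angularSector_or_neg {m : ℕ} (hm : 0 < m) {z : ℂ} (hz : z ≠ 0) :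
    ∃ i : Fin m, z ∈ angularSector (i * (π / m)) ((i + 1) * (π / m)) ∨
      -z ∈ angularSector (i * (π / m)) ((i + 1) * (π / m)) := by
  have hm' : (0 : ℝ) < m := Nat.cast_pos.2 hm
  have hw : 0 < π / m := div_pos Real.pi_pos hm'
  have hupper {u : ℂ} (hu0 : u ≠ 0) (hn : 0 ≤ u.arg) (hpi : u.arg < π) :
      ∃ i : Fin m, u ∈ angularSector (i * (π / m)) ((i + 1) * (π / m)) := by
    have hlt : ⌊u.arg / (π / m)⌋₊ < m := by
      rw [Nat.floor_lt (div_nonneg hn hw.le), div_lt_iff₀ hw, mul_div_cancel₀ _ hm'.ne']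
      exact hpi
    refine ⟨⟨_, hlt⟩, hu0, ?_, ?_⟩
    · exact (le_div_iff₀ hw).1 (Nat.floor_le (div_nonneg hn hw.le))
    · exact (div_lt_iff₀ hw).1 (Nat.lt_floor_add_one _)
  by_cases h : 0 ≤ z.arg ∧ z.arg < π
  · obtain ⟨i, hi⟩ := hupper hz h.1 h.2
    exact ⟨i, Or.inl hi⟩
  · have hneg : 0 ≤ (-z).arg ∧ (-z).arg < π := by
      rw [Complex.arg_nonneg_iff, Complex.arg_lt_pi_iff] at h ⊢
      simp only [Complex.neg_im, Complex.neg_re]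
      grind
    obtain ⟨i, hi⟩ := hupper (neg_ne_zero.2 hz) hneg.1 hneg.2
    exact ⟨i, Or.inr hi⟩

/-- Quantitative core of Proposition 3.1: any (k−1)^m + 1 points in the plane contain a
k-subset all of whose angles are within 180°/m of 0° or 180°. -/
theorem nearly_degenerate_subset (m k : ℕ) (hm : 2 ≤ m) (hk : 3 ≤ k)
    (S : Finset (EuclideanSpace ℝ (Fin 2))) (hS : (k - 1) ^ m + 1 ≤ S.card) :
    ∃ T ⊆ S, T.card = k ∧
      ∀ A ∈ T, ∀ B ∈ T, ∀ C ∈ T, A ≠ B → B ≠ C → A ≠ C →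
        ∠ A B C ≤ π / m ∨ ∠ A B C ≥ π - π / m := by
  have hm' : (0 : ℝ) < m := Nat.cast_pos.2 (by omega)
  have hw : 0 < π / m := div_pos Real.pi_pos hm'
  let f := Complex.orthonormalBasisOneI.repr.symm
  have ha (i : Fin m) : 0 ≤ (i : ℝ) * (π / m) := by positivity
  have hb (i : Fin m) : ((i : ℝ) + 1) * (π / m) ≤ π := by
    have hi : (i : ℝ) + 1 ≤ m := by exact_mod_cast i.isLt
    calc ((i : ℝ) + 1) * (π / m) ≤ m * (π / m) := by gcongr
      _ = π := mul_div_cancel₀ _ hm'.ne'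
  let r (i : Fin m) (P Q : EuclideanSpace ℝ (Fin 2)) : Prop :=
    f (Q - P) ∈ angularSector (i * (π / m)) ((i + 1) * (π / m))
  obtain ⟨i, T, hTS, hTc, hT⟩ := exists_chain_of_pow_lt_card r
    (fun i P h => h.1 (by simp))
    (fun i P Q R hPQ hQR => by
      have h := add_mem_angularSector (ha i) (hb i) hQR hPQ
      rwa [← map_add, sub_add_sub_cancel] at h)
    (k - 1) S
    (fun P _ Q _ hPQ => by
      have hne : f (Q - P) ≠ 0 := by
        simpa [sub_eq_zero] using hPQ.symm
      obtain ⟨i, h⟩ := exists_mem_angularSector_or_neg (m := m) (by omega) hne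
      rw [← map_neg, neg_sub] at h
      exact ⟨i, h⟩)
    (by simpa using hS)
  refine ⟨T, hTS, by omega, fun A hA B hB C hC hAB hBC _ => ?_⟩
  have hsector (P : EuclideanSpace ℝ (Fin 2)) (hP : P ∈ T) (hPB : B ≠ P) :
      f (P - B) ∈ angularSector (i * (π / m)) ((i + 1) * (π / m)) ∨
        -f (P - B) ∈ angularSector (i * (π / m)) ((i + 1) * (π / m)) := by
    rw [← map_neg, neg_sub]
    exact hT B hB P hP hPB
  have h := angle_le_or_ge_of_mem_angularSector (ha i) (hb i)
    (hsector A hA hAB.symm) (hsector C hC hBC)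
  have hangle : InnerProductGeometry.angle (f (A - B)) (f (C - B)) = ∠ A B C :=
    f.toLinearIsometry.angle_map _ _
  rw [hangle, add_one_mul, add_sub_cancel_left] at h
  exact h
end
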